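/- arXiv:2404.04529 — 2 statements merged into one kernel-verified Lean document; each statement's English description precedes it below -/
import Mathlib

section
/- For m ≥ 3, the K_m-free random graph R(K_m) (the Henson graph) satisfies Out(Aut(R(K_m))) ≅ {e}; that is, every abstract group automorphism of Aut(R(K_m)) is inner. -/
/-!
A *flip* at `v` is an involutive automorphism fixing only `v` and moving no vertex to a neighbour.
Any two flips at `v` are conjugate, and two commuting flips have the same centre. Conversely, a
back-and-forth argument joins any two flips at `v` by a path of flips in which consecutive ones
commute. So the stabilizer of `v` is the set of all `u` such that `u * h * u⁻¹` is reached from a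
flip `h` through commuting conjugates of `h`. This description survives an abstract automorphism
`α`, and it defines an analytic set for the Polish topology of the automorphism group; therefore
the preimage of a vertex stabilizer under `α` is analytic. Being of countable index, it has the
Baire property, is not meagre, and is thus open, i.e. it contains the pointwise stabilizer of a
finite set.

Since supports are closed under intersection, a subgroup with a finite support has a least one,
which its normalizer preserves; this forces `α` to permute the vertex stabilizers, and so to be
induced by a permutation `σ` of the vertices which maps orbits of pairs to orbits of pairs. The
permutation `σ` preserves adjacency: otherwise it would turn a large independent set into a large
clique.
-/

open Filter MeasureTheory Topology Pointwise

/-! ### Analytic subgroups and the topology of automorphism groups -/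

section AnalyticSubgroup

variable {Γ : Type*} [Group Γ] {H : Subgroup Γ}

theorem preimage_quotientMk_eq_iUnion (s : Set (Γ ⧸ H)) :
    (QuotientGroup.mk ⁻¹' s : Set Γ) = ⋃ q : s, (q.1.out⁻¹ * ·) ⁻¹' (H : Set Γ) := by
  ext g
  simp [← QuotientGroup.eq]

variable [TopologicalSpace Γ] [IsTopologicalGroup Γ]

theorem isOpen_of_residualEq [BaireSpace Γ] {U : Set Γ} (hU : IsOpen U) (hne : U.Nonempty)
    (hHU : (H : Set Γ) =ᶠ[residual Γ] U) : IsOpen (H : Set Γ) := by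
  obtain ⟨u, hu⟩ := hne
  have hnhds : (fun g : Γ => g⁻¹ * u) ⁻¹' U ∈ 𝓝 1 :=
    (hU.preimage (by fun_prop)).mem_nhds (by simpa using hu)
  refine H.isOpen_of_mem_nhds (mem_of_superset hnhds fun g hg => ?_)
  have hHU' : (g * ·) ⁻¹' (H : Set Γ) =ᶠ[residual Γ] (g * ·) ⁻¹' U :=
    (tendsto_residual_of_isOpenMap (continuous_const_mul g) (isOpenMap_mul_left g)).eventually hHU
  obtain ⟨x, ⟨hxU, hgxU⟩, hx, hgx⟩ := (dense_of_mem_residual (hHU.and hHU')).inter_open_nonempty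
    (U ∩ (g * ·) ⁻¹' U) (hU.inter (hU.preimage (continuous_const_mul g)))
    ⟨g⁻¹ * u, hg, by simpa using hu⟩
  exact (H.mul_mem_cancel_right (hx.mpr hxU)).1 (hgx.mpr hgxU)

theorem not_isMeagre_of_countable_quotient [BaireSpace Γ] [Countable (Γ ⧸ H)] :
    ¬ IsMeagre (H : Set Γ) := by
  intro hH
  refine not_isMeagre_of_isOpen (isOpen_univ (X := Γ)) Set.univ_nonempty ?_
  rw [← Set.preimage_univ (f := (QuotientGroup.mk : Γ → Γ ⧸ H)), preimage_quotientMk_eq_iUnion]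
  exact isMeagre_iUnion fun q =>
    hH.preimage_of_isOpenMap (continuous_const_mul _) (isOpenMap_mul_left _)

theorem isOpen_of_analyticSet [PolishSpace Γ] [Countable (Γ ⧸ H)]
    (hH : AnalyticSet (H : Set Γ)) : IsOpen (H : Set Γ) := by
  have hcompl : AnalyticSet (H : Set Γ)ᶜ := by
    have hpre : (H : Set Γ)ᶜ = QuotientGroup.mk ⁻¹' {((1 : Γ) : Γ ⧸ H)}ᶜ := by
      rw [Set.preimage_compl, QuotientGroup.preimage_mk_one]
    rw [hpre, preimage_quotientMk_eq_iUnion]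
    exact .iUnion fun q => hH.preimage (continuous_const_mul _)
  borelize Γ
  obtain ⟨U, hU, hHU⟩ := (hH.measurableSet_of_compl hcompl).residualEq_isOpen
  refine isOpen_of_residualEq hU ?_ hHU
  rw [Set.nonempty_iff_ne_empty]
  rintro rfl
  refine not_isMeagre_of_countable_quotient (H := H) ?_
  rw [IsMeagre]
  filter_upwards [hHU] with x hx hxH
  exact (hx.mp hxH : False)

end AnalyticSubgroup

theorem analyticSet_setOf_reflTransGen {X : Type*} [TopologicalSpace X] [PolishSpace X]
    {r : X → X → Prop} (hr : IsClosed {p : X × X | r p.1 p.2}) (x : X) :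
    AnalyticSet {y | Relation.ReflTransGen r x y} := by
  let S : ℕ → Set X := Nat.rec {x} fun _ s => Prod.snd '' ({p : X × X | r p.1 p.2} ∩ Prod.fst ⁻¹' s)
  have hS : ∀ i, AnalyticSet (S i) := by
    intro i
    induction i with
    | zero => exact isClosed_singleton.analyticSet
    | succ i ih =>
      refine AnalyticSet.image_of_continuous ?_ continuous_snd
      rw [Set.inter_eq_iInter]
      exact .iInter (Bool.rec (ih.preimage continuous_fst) hr.analyticSet)
  have hunion : {y | Relation.ReflTransGen r x y} = ⋃ i, S i := by
    ext y
    simp only [Set.mem_ofPred_eq, Set.mem_iUnion]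
    constructor
    · intro hy
      induction hy with
      | refl => exact ⟨0, rfl⟩
      | tail _ hyz ih =>
        obtain ⟨i, hi⟩ := ih
        exact ⟨i + 1, ⟨_, _⟩, ⟨hyz, hi⟩, rfl⟩
    · rintro ⟨i, hi⟩
      induction i generalizing y with
      | zero => rw [show y = x from hi]
      | succ i ih =>
        obtain ⟨⟨z, y⟩, ⟨hzy, hz⟩, rfl⟩ := hi
        exact (ih z hz).tail hzy
  exact hunion ▸ .iUnion hS

section Topology

variable {V : Type*} {r : V → V → Prop}

theorem range_relIso_coe_symm :
    Set.range (fun g : r ≃r r => ((g : V → V), (g.symm : V → V))) =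
      {p | (∀ a, p.1 (p.2 a) = a) ∧ (∀ a, p.2 (p.1 a) = a) ∧ ∀ a b, r (p.1 a) (p.1 b) ↔ r a b} := by
  ext p
  constructor
  · rintro ⟨g, rfl⟩
    exact ⟨g.apply_symm_apply, g.symm_apply_apply, fun _ _ => g.map_rel_iff⟩
  · rintro ⟨h₁, h₂, h₃⟩
    exact ⟨⟨⟨p.1, p.2, h₂, h₁⟩, @h₃⟩, rfl⟩

theorem continuous_apply_of_discrete {X Y Z : Type*} [TopologicalSpace X] [TopologicalSpace Y]
    [DiscreteTopology Y] [TopologicalSpace Z] {f : X → Y → Z} {b : X → Y}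
    (hf : ∀ y, Continuous fun x => f x y) (hb : Continuous b) : Continuous fun x => f x (b x) := by
  refine continuous_iff_continuousAt.2 fun x => ((hf (b x)).continuousAt (x := x)).congr ?_
  filter_upwards [((isOpen_discrete {b x}).preimage hb).mem_nhds rfl] with y hy
  rw [show b y = b x from hy]

variable [TopologicalSpace V]

/-- The topology of pointwise convergence of an automorphism and of its inverse; for discrete `V`
this is the permutation group topology, with the stabilizers of finite sets as a basis at `1`. -/
instance relIsoTopologicalSpace : TopologicalSpace (r ≃r r) :=
  .induced (fun g => ((g : V → V), (g.symm : V → V))) inferInstance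

theorem continuous_relIso_iff {X : Type*} [TopologicalSpace X] {f : X → (r ≃r r)} :
    Continuous f ↔ (∀ a, Continuous fun x => f x a) ∧ ∀ a, Continuous fun x => (f x).symm a := by
  rw [continuous_induced_rng, ← continuous_pi_iff, ← continuous_pi_iff, ← continuous_prodMk]
  rfl

theorem continuous_relIso_apply (a : V) : Continuous fun g : r ≃r r => g a :=
  (continuous_relIso_iff.1 continuous_id).1 a

theorem continuous_relIso_symm_apply (a : V) : Continuous fun g : r ≃r r => g.symm a :=
  (continuous_relIso_iff.1 continuous_id).2 a

theorem exists_fixingSubgroup_le_of_isOpen {H : Subgroup (r ≃r r)}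
    (hH : IsOpen (H : Set (r ≃r r))) :
    ∃ F : Finset V, fixingSubgroup (r ≃r r) (F : Set V) ≤ H := by
  classical
  obtain ⟨U, hU, hUH⟩ := isOpen_induced_iff.1 hH
  have h1 : (((1 : r ≃r r) : V → V), ((1 : r ≃r r).symm : V → V)) ∈ U :=
    hUH.ge H.one_mem
  obtain ⟨A, B, hA, hB, hA1, hB1, hAB⟩ := isOpen_prod_iff.1 hU _ _ h1
  obtain ⟨I, u, hu, hIA⟩ := isOpen_pi_iff.1 hA _ hA1
  obtain ⟨J, w, hw, hJB⟩ := isOpen_pi_iff.1 hB _ hB1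
  refine ⟨I ∪ J, fun g hg => ?_⟩
  have hga : ∀ a ∈ I ∪ J, g a = a := fun a => (mem_fixingSubgroup_iff _).1 hg a
  refine hUH.le (hAB ⟨hIA fun a ha => ?_, hJB fun a ha => ?_⟩)
  · change g a ∈ u a
    rw [hga a (Finset.mem_union_left J ha)]
    exact (hu a ha).2
  · change g.symm a ∈ w a
    rw [(RelIso.symm_apply_eq g).2 (hga a (Finset.mem_union_right I ha)).symm]
    exact (hw a ha).2

variable [DiscreteTopology V]

instance : IsTopologicalGroup (r ≃r r) where
  continuous_mul := continuous_relIso_iff.2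
    ⟨fun a => continuous_apply_of_discrete (f := fun (p : (r ≃r r) × (r ≃r r)) b => p.1 b)
      (fun b => (continuous_relIso_apply b).comp continuous_fst)
      ((continuous_relIso_apply a).comp continuous_snd),
    fun a => continuous_apply_of_discrete (f := fun (p : (r ≃r r) × (r ≃r r)) b => p.2.symm b)
      (fun b => (continuous_relIso_symm_apply b).comp continuous_snd)
      ((continuous_relIso_symm_apply a).comp continuous_fst)⟩
  continuous_inv := continuous_relIso_iff.2
    ⟨continuous_relIso_symm_apply, continuous_relIso_apply⟩

instance [Countable V] : PolishSpace (r ≃r r) := by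
  have : PolishSpace V := {}
  refine Topology.IsClosedEmbedding.polishSpace (β := (V → V) × (V → V))
    (f := fun g : r ≃r r => ((g : V → V), (g.symm : V → V)))
    ⟨⟨⟨rfl⟩, fun g g' h => DFunLike.coe_injective (congrArg Prod.fst h)⟩, ?_⟩
  rw [range_relIso_coe_symm]
  have hfst : ∀ a, Continuous fun p : (V → V) × (V → V) => p.1 a := fun a => by fun_prop
  have hsnd : ∀ a, Continuous fun p : (V → V) × (V → V) => p.2 a := fun a => by fun_prop
  simp only [Set.ofPred_and, Set.ofPred_forall]
  refine (isClosed_iInter fun a => ?_).inter <| (isClosed_iInter fun a => ?_).inter <|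
    isClosed_iInter fun a => isClosed_iInter fun b => ?_
  · exact isClosed_eq (continuous_apply_of_discrete hfst (hsnd a)) continuous_const
  · exact isClosed_eq (continuous_apply_of_discrete hsnd (hfst a)) continuous_const
  · exact (isClosed_discrete {q : V × V | r q.1 q.2 ↔ r a b}).preimage
      ((hfst a).prodMk (hfst b))

end Topology

section FixingSubgroup

variable {M α : Type*} [Group M] [MulAction M α]

theorem fixingSubgroup_smul_le {H : Subgroup M} {k : M}
    (hk : k ∈ Subgroup.normalizer (H : Set M)) {s : Set α} (hs : fixingSubgroup M s ≤ H) :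
    fixingSubgroup M (k • s) ≤ H := by
  rw [SubMulAction.fixingSubgroup_smul_eq_fixingSubgroup_map_conj, Subgroup.map_le_iff_le_comap]
  exact fun g hg => (Subgroup.mem_normalizer_iff.1 hk g).1 (hs hg)

theorem stabilizer_le_normalizer_fixingSubgroup (s : Set α) :
    MulAction.stabilizer M s ≤ Subgroup.normalizer (fixingSubgroup M s : Set M) := by
  refine Subgroup.le_normalizer_iff.2 fun g hg k hk => ?_
  rw [MulAction.mem_stabilizer_iff] at hg
  rw [← hg, SubMulAction.fixingSubgroup_smul_eq_fixingSubgroup_map_conj]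
  exact Subgroup.mem_map_of_mem _ hk

end FixingSubgroup

/-! ### Partial isomorphisms of Henson graphs -/

section PartialIso

variable {V : Type*} {G : SimpleGraph V} {n : ℕ} {f : V → V} {S : Set V}

/-- The restriction of `f` to `S` is an isomorphism between two induced subgraphs of `G`. -/
structure IsPartialIso (G : SimpleGraph V) (f : V → V) (S : Set V) : Prop where
  injOn : Set.InjOn f S
  adj_iff : ∀ a ∈ S, ∀ b ∈ S, G.Adj (f a) (f b) ↔ G.Adj a b

namespace IsPartialIso

theorem congr {g : V → V} (hf : IsPartialIso G f S) (hfg : Set.EqOn f g S) : IsPartialIso G g S :=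
  ⟨hf.injOn.congr hfg, fun a ha b hb => by rw [← hfg ha, ← hfg hb, hf.adj_iff a ha b hb]⟩

theorem of_iso (u : G ≃g G) : IsPartialIso G u S :=
  ⟨u.injective.injOn, fun _ _ _ _ => u.map_adj_iff⟩

theorem mono {T : Set V} (hf : IsPartialIso G f S) (hTS : T ⊆ S) : IsPartialIso G f T :=
  ⟨hf.injOn.mono hTS, fun a ha b hb => hf.adj_iff a (hTS ha) b (hTS hb)⟩

theorem comp_iso (hf : IsPartialIso G f S) (u : G ≃g G) : IsPartialIso G (fun a => u (f a)) S :=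
  ⟨u.injective.comp_injOn hf.injOn, fun a ha b hb => u.map_adj_iff.trans (hf.adj_iff a ha b hb)⟩

theorem union {T : Set V} (hS : IsPartialIso G f S) (hT : IsPartialIso G f T)
    (hinj : ∀ a ∈ S, ∀ b ∈ T, f a = f b → a = b)
    (hadj : ∀ a ∈ S, ∀ b ∈ T, G.Adj (f a) (f b) ↔ G.Adj a b) : IsPartialIso G f (S ∪ T) := by
  constructor
  · rintro a (ha | ha) b (hb | hb) hab
    exacts [hS.injOn ha hb hab, hinj a ha b hb hab, (hinj b hb a ha hab.symm).symm,
      hT.injOn ha hb hab]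
  · rintro a (ha | ha) b (hb | hb)
    · exact hS.adj_iff a ha b hb
    · exact hadj a ha b hb
    · rw [G.adj_comm, hadj b hb a ha, G.adj_comm]
    · exact hT.adj_iff a ha b hb

theorem insert {p : V} (hS : IsPartialIso G f S) (hne : ∀ c ∈ S, f p = f c → p = c)
    (hadj : ∀ c ∈ S, G.Adj (f p) (f c) ↔ G.Adj p c) : IsPartialIso G f (insert p S) := by
  have hp : IsPartialIso G f {p} := ⟨Set.injOn_singleton _ _, by simp⟩
  rw [Set.insert_eq]
  exact hp.union hS (by simpa using hne) (by simpa using hadj)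

end IsPartialIso

theorem cliqueFreeOn_image {f : V → V} {S : Set V} {p : V} (hG : G.CliqueFree (n + 1))
    (hf : ∀ a ∈ S, ∀ b ∈ S, G.Adj (f a) (f b) → G.Adj a b) (hp : ∀ a ∈ S, G.Adj p a) :
    G.CliqueFreeOn (f '' S) n := by
  classical
  intro t htS ht
  obtain ⟨s, hsS, hinj, rfl⟩ := Finset.exists_subset_injOn_image_eq_of_surjOn S t htS
  refine hG _ (SimpleGraph.IsNClique.insert (s := s) ⟨fun a ha b hb hab => ?_, ?_⟩ fun a ha =>
    hp a (hsS ha))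
  · exact hf a (hsS ha) b (hsS hb) (ht.isClique (Finset.mem_image_of_mem f ha)
      (Finset.mem_image_of_mem f hb) (hinj.ne ha hb hab))
  · rw [← Finset.card_image_of_injOn hinj, ht.card_eq]

end PartialIso

section Henson

variable {V : Type*} {G : SimpleGraph V} {n : ℕ}

/-- Every one-vertex extension of a finite induced subgraph of `G` which creates no clique of size
`n + 1` is realized, outside any given finite set, by a vertex of `A`. Here `N` prescribes the
neighbours of the new vertex. -/
def IsExtensionDense (G : SimpleGraph V) (n : ℕ) (A : Set V) : Prop :=
  ∀ (E : Finset V) (N : Set V), G.CliqueFreeOn N n → ∃ q ∈ A, q ∉ E ∧ ∀ d ∈ E, G.Adj q d ↔ d ∈ N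

/-- The characterization of the `K_{n+1}`-free random graph by ultrahomogeneity and the extension
property. -/
structure IsHenson (G : SimpleGraph V) (n : ℕ) : Prop where
  cliqueFree : G.CliqueFree (n + 1)
  exists_aut : ∀ (S : Finset V) (f : V → V), IsPartialIso G f S → ∃ φ : G ≃g G, Set.EqOn φ f S
  isExtensionDense : IsExtensionDense G n Set.univ

/-- The graph `G` with one more vertex `none`, joined to the vertices in `N`. -/
def adjoinVertex (G : SimpleGraph V) (N : Set V) : SimpleGraph (Option V) where
  Adj
    | none, none => False
    | none, some b => b ∈ N
    | some a, none => a ∈ N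
    | some a, some b => G.Adj a b
  symm := ⟨by rintro (_ | a) (_ | b) h <;> first | exact h | exact G.adj_symm h⟩
  loopless := ⟨by rintro (_ | a) h <;> first | exact h | exact G.irrefl h⟩

theorem cliqueFree_adjoinVertex {N : Set V} (hG : G.CliqueFree (n + 1)) (hN : G.CliqueFreeOn N n) :
    (adjoinVertex G N).CliqueFree (n + 1) := by
  classical
  intro t ht
  have hclique : G.IsClique t.eraseNone := fun a ha b hb hab =>
    ht.isClique (Finset.mem_eraseNone.1 ha) (Finset.mem_eraseNone.1 hb) (by simpa using hab)
  by_cases hnone : none ∈ t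
  · refine hN (t := t.eraseNone) (fun a ha => ?_) ⟨hclique, ?_⟩
    · exact ht.isClique hnone (Finset.mem_eraseNone.1 ha) (by simp)
    · rw [Finset.card_eraseNone_of_mem hnone, ht.card_eq, Nat.add_sub_cancel]
  · refine hG t.eraseNone ⟨hclique, ?_⟩
    rw [Finset.card_eraseNone_of_not_mem hnone, ht.card_eq]

theorem exists_aut_comp_embedding
    (hhom : ∀ S T : Set V, S.Finite → T.Finite →
      ∀ e : G.induce S ≃g G.induce T, ∃ φ : G ≃g G, ∀ a : S, φ a = (e a : V))
    {W : Type*} [Finite W] {H : SimpleGraph W} (i j : H ↪g G) :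
    ∃ φ : G ≃g G, ∀ w, φ (i w) = j w := by
  obtain ⟨φ, hφ⟩ := hhom _ _ (Set.finite_range i) (Set.finite_range j)
    (i.isoInduceRange.symm.trans j.isoInduceRange)
  refine ⟨φ, fun w => (hφ ⟨i w, w, rfl⟩).trans ?_⟩
  have hw : i.isoInduceRange.symm ⟨i w, w, rfl⟩ = w := i.isoInduceRange.symm_apply_apply w
  exact congrArg j hw

theorem nonempty_embedding_of_finite
    (huniv : ∀ (W : Type) (_ : Fintype W) (H : SimpleGraph W), H.CliqueFree n → Nonempty (H ↪g G))
    {W : Type*} [Finite W] {H : SimpleGraph W} (hH : H.CliqueFree n) : Nonempty (H ↪g G) := by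
  have := Fintype.ofFinite W
  let e := H.overFinIso rfl
  obtain ⟨j⟩ := huniv _ inferInstance (H.overFin rfl)
    (hH.comap ⟨e.symm.toEmbedding.toCopy⟩)
  exact ⟨j.comp e.toEmbedding⟩

theorem isHenson_of_homogeneous_of_universal (hfree : G.CliqueFree (n + 1))
    (hhom : ∀ S T : Set V, S.Finite → T.Finite →
      ∀ e : G.induce S ≃g G.induce T, ∃ φ : G ≃g G, ∀ a : S, φ a = (e a : V))
    (huniv : ∀ (W : Type) (_ : Fintype W) (H : SimpleGraph W),
      H.CliqueFree (n + 1) → Nonempty (H ↪g G)) : IsHenson G n where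
  cliqueFree := hfree
  exists_aut S f hf := by
    let j : G.induce (S : Set V) ↪g G :=
      ⟨⟨fun a => f a, hf.injOn.injective⟩, @fun a b => hf.adj_iff a a.2 b b.2⟩
    obtain ⟨φ, hφ⟩ := exists_aut_comp_embedding hhom (SimpleGraph.Embedding.induce (S : Set V)) j
    exact ⟨φ, fun a ha => hφ ⟨a, ha⟩⟩
  isExtensionDense E N hN := by
    let i : Option E ↪ Option V := (Function.Embedding.subtype _).optionMap
    obtain ⟨j⟩ := nonempty_embedding_of_finite huniv (H := (adjoinVertex G N).comap i)
      ((cliqueFree_adjoinVertex hfree hN).comap ⟨(SimpleGraph.Embedding.comap i _).toCopy⟩)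
    let k : G.induce (E : Set V) ↪g G :=
      ⟨⟨fun a => j (some a), j.injective.comp (Option.some_injective _)⟩, j.map_adj_iff⟩
    obtain ⟨φ, hφ⟩ := exists_aut_comp_embedding hhom k (SimpleGraph.Embedding.induce (E : Set V))
    replace hφ : ∀ d : E, φ (j (some d)) = d := hφ
    refine ⟨φ (j none), trivial, fun hmem => ?_, fun d hd => ?_⟩
    · simpa using hφ ⟨_, hmem⟩
    · rw [show d = φ (j (some ⟨d, hd⟩)) from (hφ ⟨d, hd⟩).symm, φ.map_adj_iff, j.map_adj_iff,
        hφ ⟨d, hd⟩]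
      rfl

theorem IsHenson.ne_zero (hG : IsHenson G n) (v : V) : n ≠ 0 := by
  rintro rfl
  exact hG.cliqueFree {v} (by simp)

/-- The vertex `q` is a copy of `p` over `f`: it relates to `f c` in the way `p` relates to `c`, for
`c` in `S`, and is distinct from all other vertices of `E` and not adjacent to them. -/
structure IsFreeCopy (G : SimpleGraph V) (f : V → V) (S E : Finset V) (p q : V) : Prop where
  notMem : q ∉ E
  ne : ∀ c ∈ S, q ≠ f c
  adj_iff : ∀ c ∈ S, G.Adj q (f c) ↔ G.Adj p c
  not_adj : ∀ d ∈ E, (∀ c ∈ S, f c ≠ d) → ¬ G.Adj q d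

theorem IsExtensionDense.exists_isFreeCopy {A : Set V} (hA : IsExtensionDense G n A)
    (hG : G.CliqueFree (n + 1)) {f : V → V} {S : Finset V} (hf : IsPartialIso G f S)
    (E : Finset V) (p : V) : ∃ q ∈ A, IsFreeCopy G f S E p q := by
  classical
  have hN : G.CliqueFreeOn (f '' {c | c ∈ S ∧ G.Adj p c}) n :=
    cliqueFreeOn_image hG (fun a ha b hb => (hf.adj_iff a ha.1 b hb.1).1) fun a ha => ha.2
  obtain ⟨q, hqA, hqE, hq⟩ := hA (E ∪ S.image f) _ hN
  simp only [Finset.mem_union, Finset.mem_image, not_or, not_exists, not_and] at hqE hq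
  refine ⟨q, hqA, hqE.1, fun c hc h => hqE.2 c hc h.symm, fun c hc => ?_, fun d hd hdS h => ?_⟩
  · rw [hq _ (.inr ⟨c, hc, rfl⟩)]
    refine ⟨?_, fun h => ⟨c, ⟨hc, h⟩, rfl⟩⟩
    rintro ⟨c', ⟨hc', h⟩, hcc'⟩
    exact hf.injOn hc' hc hcc' ▸ h
  · obtain ⟨c, ⟨hc, -⟩, hcd⟩ := (hq d (.inl hd)).1 h
    exact hdS c hc hcd

end Henson

section Homogeneity

variable {V : Type*} {G : SimpleGraph V} {n : ℕ}

namespace IsHenson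

theorem exists_aut_insert (hG : IsHenson G n) (u : G ≃g G) {S : Finset V} {p q : V} (hp : p ∉ S)
    (hq : ∀ c ∈ S, q ≠ u c) (hadj : ∀ c ∈ S, G.Adj q (u c) ↔ G.Adj p c) :
    ∃ φ : G ≃g G, φ p = q ∧ ∀ c ∈ S, φ c = u c := by
  classical
  let f := Function.update u p q
  have hfp : f p = q := Function.update_self ..
  have hfS : ∀ c ∈ S, f c = u c := fun c hc =>
    Function.update_of_ne (ne_of_mem_of_not_mem hc hp) ..
  have hf : IsPartialIso G f (insert p S : Finset V) := by
    rw [Finset.coe_insert]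
    refine .insert ((IsPartialIso.of_iso u).congr fun c hc => (hfS c hc).symm) ?_ ?_
    · intro c hc h
      exact absurd (hfp.symm.trans (h.trans (hfS c hc))) (hq c hc)
    · intro c hc
      rw [hfp, hfS c hc, hadj c hc]
  obtain ⟨φ, hφ⟩ := hG.exists_aut _ f hf
  exact ⟨φ, (hφ (Finset.mem_insert_self p S)).trans hfp,
    fun c hc => (hφ (Finset.mem_insert_of_mem hc)).trans (hfS c hc)⟩

theorem exists_aut_union (hG : IsHenson G n) {A B : Finset V} (u w : G ≃g G)
    (heq : ∀ a ∈ A, ∀ b ∈ B, u a = w b ↔ a = b)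
    (hadj : ∀ a ∈ A, ∀ b ∈ B, G.Adj (u a) (w b) ↔ G.Adj a b) :
    ∃ φ : G ≃g G, (∀ a ∈ A, φ a = u a) ∧ ∀ b ∈ B, φ b = w b := by
  classical
  let f : V → V := fun c => if c ∈ A then u c else w c
  have hfA : ∀ a ∈ A, f a = u a := fun a ha => if_pos ha
  have hfB : ∀ b ∈ B, f b = w b := fun b hb => by
    by_cases hbA : b ∈ A
    · exact (hfA b hbA).trans ((heq b hbA b hb).2 rfl)
    · exact if_neg hbA
  have hf : IsPartialIso G f (A ∪ B : Finset V) := by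
    rw [Finset.coe_union]
    refine .union ((IsPartialIso.of_iso u).congr fun a ha => (hfA a ha).symm)
      ((IsPartialIso.of_iso w).congr fun b hb => (hfB b hb).symm) ?_ ?_
    · intro a ha b hb h
      rwa [hfA a ha, hfB b hb, heq a ha b hb] at h
    · intro a ha b hb
      rw [hfA a ha, hfB b hb, hadj a ha b hb]
  obtain ⟨φ, hφ⟩ := hG.exists_aut _ f hf
  exact ⟨φ, fun a ha => (hφ (Finset.mem_union_left B ha)).trans (hfA a ha),
    fun b hb => (hφ (Finset.mem_union_right A hb)).trans (hfB b hb)⟩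

theorem exists_fixing_free_move (hG : IsHenson G n) (B C D : Finset V) :
    ∃ k ∈ fixingSubgroup (G ≃g G) (B : Set V),
      ∀ a ∈ C, a ∉ B → k a ∉ D ∧ ∀ d ∈ D, d ∉ B → ¬ G.Adj (k a) d := by
  classical
  induction C using Finset.induction_on with
  | empty => exact ⟨1, one_mem _, by simp⟩
  | insert c C _ ih =>
    obtain ⟨k, hkB, hkC⟩ := ih
    by_cases hc : c ∈ B ∪ C
    · refine ⟨k, hkB, fun a ha haB => ?_⟩
      rcases Finset.mem_insert.1 ha with rfl | haC
      · exact hkC a ((Finset.mem_union.1 hc).resolve_left haB) haB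
      · exact hkC a haC haB
    obtain ⟨q, -, hq⟩ := hG.isExtensionDense.exists_isFreeCopy hG.cliqueFree
      (IsPartialIso.of_iso k (S := (B ∪ C : Finset V))) D c
    obtain ⟨φ, hφc, hφ⟩ := hG.exists_aut_insert k hc hq.ne hq.adj_iff
    have hkB' : ∀ b ∈ B, k b = b := (mem_fixingSubgroup_iff _).1 hkB
    refine ⟨φ, (mem_fixingSubgroup_iff _).2 fun b hb => ?_, fun a ha haB => ?_⟩
    · exact (hφ b (Finset.mem_union_left C hb)).trans (hkB' b hb)
    rcases Finset.mem_insert.1 ha with rfl | haC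
    · rw [hφc]
      refine ⟨hq.notMem, fun d hd hdB => hq.not_adj d hd fun b hb hbd => ?_⟩
      by_cases hbB : b ∈ B
      · exact hdB (hbd ▸ (hkB' b hbB).symm ▸ hbB)
      · exact (hkC b ((Finset.mem_union.1 hb).resolve_left hbB) hbB).1 (hbd ▸ hd)
    · rw [hφ a (Finset.mem_union_right B haC)]
      exact hkC a haC haB

/-- Once `F₁` has been moved off its own copy by an element `k` fixing `F₂`, the motion of `F₁` by
`g` does not interfere with `k F₁`. -/
theorem exists_aut_eq_of_free_move (hG : IsHenson G n) {F₁ F₂ : Finset V} {g k : G ≃g G}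
    (hg : ∀ a ∈ F₁, a ∈ F₂ → g a = a) (hgF : ∀ a ∈ F₁, g a ∈ F₂ → a ∈ F₂)
    (hkF₂ : ∀ b ∈ F₂, k b = b)
    (hk : ∀ c ∈ F₁, c ∉ F₂ → ∀ a ∈ F₁,
      (k c ≠ a ∧ k c ≠ g a) ∧ (a ∉ F₂ → ¬ G.Adj (k c) a) ∧ (g a ∉ F₂ → ¬ G.Adj (k c) (g a))) :
    ∃ φ : G ≃g G, (∀ a ∈ F₁, φ a = g a) ∧ ∀ a ∈ F₁, φ (k a) = k a := by
  classical
  obtain ⟨φ, hφg, hφk⟩ := hG.exists_aut_union (A := F₁) (B := F₁.image k) g 1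
    (fun a ha b hb => by
      obtain ⟨c, hc, rfl⟩ := Finset.mem_image.1 hb
      rw [RelIso.one_apply]
      by_cases hcF₂ : c ∈ F₂
      · rw [hkF₂ c hcF₂]
        nth_rw 1 [← hg c hc hcF₂]
        exact g.injective.eq_iff
      · exact iff_of_false (hk c hc hcF₂ a ha).1.2.symm (hk c hc hcF₂ a ha).1.1.symm)
    (fun a ha b hb => by
      obtain ⟨c, hc, rfl⟩ := Finset.mem_image.1 hb
      rw [RelIso.one_apply]
      by_cases hcF₂ : c ∈ F₂
      · rw [hkF₂ c hcF₂]
        nth_rw 1 [← hg c hc hcF₂]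
        exact g.map_adj_iff
      by_cases haF₂ : a ∈ F₂
      · rw [hg a ha haF₂]
      · have hka := (hk c hc hcF₂ a ha).2
        exact iff_of_false (fun h => hka.2 (mt (hgF a ha) haF₂) h.symm)
          fun h => hka.1 haF₂ h.symm)
  exact ⟨φ, hφg, fun a ha => hφk _ (Finset.mem_image_of_mem k ha)⟩

theorem mem_fixingSubgroup_sup (hG : IsHenson G n) {F₁ F₂ : Finset V} {g : G ≃g G}
    (hg : ∀ a ∈ F₁, a ∈ F₂ → g a = a) (hgF : ∀ a ∈ F₁, g a ∈ F₂ → a ∈ F₂) :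
    g ∈ fixingSubgroup (G ≃g G) (F₁ : Set V) ⊔ fixingSubgroup (G ≃g G) (F₂ : Set V) := by
  classical
  set H := fixingSubgroup (G ≃g G) (F₁ : Set V) ⊔ fixingSubgroup (G ≃g G) (F₂ : Set V)
  obtain ⟨k, hkF₂, hk⟩ := hG.exists_fixing_free_move F₂ F₁ (F₁ ∪ F₁.image g)
  obtain ⟨φ, hφg, hφ⟩ := hG.exists_aut_eq_of_free_move hg hgF ((mem_fixingSubgroup_iff _).1 hkF₂)
    fun c hc hcF₂ a ha => by
      have ha₁ : a ∈ F₁ ∪ F₁.image g := Finset.mem_union_left _ ha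
      have ha₂ : g a ∈ F₁ ∪ F₁.image g :=
        Finset.mem_union_right _ (Finset.mem_image_of_mem g ha)
      obtain ⟨hkc, hkc'⟩ := hk c hc hcF₂
      exact ⟨⟨fun h => hkc (h ▸ ha₁), fun h => hkc (h ▸ ha₂)⟩, hkc' a ha₁, hkc' _ ha₂⟩
  have hφH : φ ∈ H := by
    have hkH : k ∈ H := le_sup_right (a := fixingSubgroup _ _) hkF₂
    refine fixingSubgroup_smul_le (s := (F₁ : Set V)) (Subgroup.le_normalizer hkH) le_sup_left
      ((mem_fixingSubgroup_iff _).2 ?_)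
    rintro _ ⟨a, ha, rfl⟩
    exact hφ a ha
  have hφgH : φ⁻¹ * g ∈ H := le_sup_left (b := fixingSubgroup _ _) <|
    (mem_fixingSubgroup_iff _).2 fun a ha => by
      rw [mul_smul, inv_smul_eq_iff]
      exact (hφg a ha).symm
  simpa using H.mul_mem hφH hφgH

theorem fixingSubgroup_inter_le [DecidableEq V] (hG : IsHenson G n) (F₁ F₂ : Finset V) :
    fixingSubgroup (G ≃g G) ((F₁ ∩ F₂ : Finset V) : Set V) ≤
      fixingSubgroup (G ≃g G) (F₁ : Set V) ⊔ fixingSubgroup (G ≃g G) (F₂ : Set V) := by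
  intro g hg
  replace hg : ∀ a ∈ F₁, a ∈ F₂ → g a = a := fun a ha₁ ha₂ =>
    (mem_fixingSubgroup_iff _).1 hg a (Finset.mem_inter.2 ⟨ha₁, ha₂⟩)
  obtain ⟨k, hkF₁, hk⟩ := hG.exists_fixing_free_move F₁ F₂ (F₁ ∪ F₁.image g)
  have hfix : ∀ c ∈ F₁ ∪ F₁.image g, c ∈ k • F₂ → c ∈ F₁ ∧ c ∈ F₂ := by
    intro c hc hck
    obtain ⟨b, hb, rfl⟩ := Finset.mem_smul_finset.1 hck
    have hbF₁ : b ∈ F₁ := by_contra fun hbF₁ => (hk b hb hbF₁).1 hc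
    rw [(mem_fixingSubgroup_iff _).1 hkF₁ b hbF₁]
    exact ⟨hbF₁, hb⟩
  have hmem : g ∈ fixingSubgroup (G ≃g G) (F₁ : Set V) ⊔
      fixingSubgroup (G ≃g G) ((k • F₂ : Finset V) : Set V) := by
    refine hG.mem_fixingSubgroup_sup (fun a ha hka => ?_) fun a ha hka => ?_
    · exact hg a ha (hfix a (Finset.mem_union_left _ ha) hka).2
    · obtain ⟨hga₁, hga₂⟩ := hfix (g a)
        (Finset.mem_union_right _ (Finset.mem_image_of_mem g ha)) hka
      rwa [g.injective (hg _ hga₁ hga₂)] at hka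
  have hle : fixingSubgroup (G ≃g G) ((k • F₂ : Finset V) : Set V) ≤
      fixingSubgroup (G ≃g G) (F₁ : Set V) ⊔ fixingSubgroup (G ≃g G) (F₂ : Set V) := by
    rw [Finset.coe_smul_finset]
    exact fixingSubgroup_smul_le
      (Subgroup.le_normalizer (le_sup_left (b := fixingSubgroup _ _) hkF₁)) le_sup_right
  exact sup_le le_sup_left hle hmem

end IsHenson

end Homogeneity

/-! ### Flips and their conjugacy -/

section BackAndForth

theorem exists_monotone_seq_mem {C ι : Type*} [Preorder C] [Countable ι] (c : C) {D : ι → Set C}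
    (hD : ∀ i, IsCofinal (D i)) : ∃ s : ℕ → C, Monotone s ∧ ∀ i, ∃ j, s j ∈ D i := by
  have := Encodable.ofCountable ι
  exact ⟨Order.sequenceOfCofinals c fun i => ⟨D i, hD i⟩, Order.sequenceOfCofinals.monotone _ _,
    fun i => ⟨_, Order.sequenceOfCofinals.encode_mem c (fun i => ⟨D i, hD i⟩) i⟩⟩

theorem exists_iso_of_monotone_partialIso {V : Type*} {G : SimpleGraph V} {f : ℕ → V → V}
    {S : ℕ → Set V} (hS : Monotone S) (hf : ∀ i, IsPartialIso G (f i) (S i))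
    (hagree : ∀ i j, i ≤ j → Set.EqOn (f j) (f i) (S i)) (hcover : ∀ p, ∃ i, p ∈ S i)
    (hsurj : ∀ q, ∃ i, ∃ p ∈ S i, f i p = q) : ∃ φ : G ≃g G, ∀ i, Set.EqOn φ (f i) (S i) := by
  choose N hN using hcover
  let g : V → V := fun p => f (N p) p
  have hg : ∀ i, Set.EqOn g (f i) (S i) := by
    intro i p hp
    rcases le_total i (N p) with h | h
    · exact hagree _ _ h hp
    · exact (hagree _ _ h (hN p)).symm
  have hiso : ∀ p q, (g p = g q → p = q) ∧ (G.Adj (g p) (g q) ↔ G.Adj p q) := by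
    intro p q
    have hp : p ∈ S (max (N p) (N q)) := hS (le_max_left _ _) (hN p)
    have hq : q ∈ S (max (N p) (N q)) := hS (le_max_right _ _) (hN q)
    rw [hg _ hp, hg _ hq]
    exact ⟨fun h => (hf _).injOn hp hq h, (hf _).adj_iff p hp q hq⟩
  have hgsurj : Function.Surjective g := fun q => by
    obtain ⟨i, p, hp, rfl⟩ := hsurj q
    exact ⟨p, hg i hp⟩
  exact ⟨⟨Equiv.ofBijective g ⟨fun p q => (hiso p q).1, hgsurj⟩, (hiso _ _).2⟩, hg⟩

end BackAndForth

section Flip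

variable {V : Type*} {G : SimpleGraph V} {n : ℕ} {v : V}

/-- An involutive automorphism whose only fixed point is `v` and which moves no vertex to one of its
neighbours. -/
structure IsFlip (v : V) (h : G ≃g G) : Prop where
  involutive : Function.Involutive h
  apply_eq_self_iff : ∀ p, h p = p ↔ p = v
  not_adj : ∀ p, ¬ G.Adj p (h p)

namespace IsFlip

variable {h : G ≃g G}

theorem apply_center (hh : IsFlip v h) : h v = v :=
  (hh.apply_eq_self_iff v).2 rfl

theorem adj_apply_comm (hh : IsFlip v h) (p q : V) : G.Adj (h p) q ↔ G.Adj p (h q) := by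
  conv_lhs => rw [← hh.involutive q]
  exact h.map_adj_iff

end IsFlip

/-- A finite approximation of a flip at `v`: an involution supported on the finite set `dom`, to
which the conditions on a flip are restricted. -/
structure PartialFlip (G : SimpleGraph V) (v : V) where
  toPerm : Equiv.Perm V
  dom : Finset V
  involutive : Function.Involutive toPerm
  apply_of_notMem : ∀ p ∉ dom, toPerm p = p
  center_mem : v ∈ dom
  apply_eq_self_iff : ∀ p ∈ dom, toPerm p = p ↔ p = v
  isPartialIso : IsPartialIso G toPerm dom
  not_adj : ∀ p, ¬ G.Adj p (toPerm p)

namespace PartialFlip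

instance : CoeFun (PartialFlip G v) fun _ => V → V := ⟨fun k => k.toPerm⟩

instance : Preorder (PartialFlip G v) where
  le k k' := k.dom ⊆ k'.dom ∧ Set.EqOn k' k k.dom
  le_refl _ := ⟨subset_rfl, Set.eqOn_refl _ _⟩
  le_trans _ _ _ h h' := ⟨h.1.trans h'.1, fun _ ha => (h'.2 (h.1 ha)).trans (h.2 ha)⟩

instance : Inhabited (PartialFlip G v) where
  default :=
    { toPerm := 1
      dom := {v}
      involutive := fun _ => rfl
      apply_of_notMem := fun _ _ => rfl
      center_mem := Finset.mem_singleton_self v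
      apply_eq_self_iff := by simp
      isPartialIso := IsPartialIso.of_iso (RelIso.refl _)
      not_adj := fun _ => G.irrefl }

theorem apply_mem_iff (k : PartialFlip G v) {p : V} : k p ∈ k.dom ↔ p ∈ k.dom := by
  by_cases hp : p ∈ k.dom
  · refine iff_of_true (by_contra fun h => h ?_) hp
    rwa [← k.apply_of_notMem _ h, k.involutive p]
  · rw [k.apply_of_notMem p hp]

theorem exists_isFlip {k : ℕ → PartialFlip G v} (hk : Monotone k)
    (hcover : ∀ p, ∃ i, p ∈ (k i).dom) :
    ∃ h : G ≃g G, IsFlip v h ∧ ∀ i, Set.EqOn h (k i) (k i).dom := by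
  obtain ⟨h, hh⟩ := exists_iso_of_monotone_partialIso (f := fun i => k i)
    (S := fun i => (k i).dom) (fun i j hij => Finset.coe_subset.2 (hk hij).1)
    (fun i => (k i).isPartialIso)
    (fun i j hij => (hk hij).2) hcover fun q => by
      obtain ⟨i, hi⟩ := hcover q
      exact ⟨i, k i q, (k i).apply_mem_iff.2 hi, (k i).involutive q⟩
  refine ⟨h, ⟨fun p => ?_, fun p => ?_, fun p => ?_⟩, hh⟩ <;> obtain ⟨i, hi⟩ := hcover p
  · rw [hh i hi, hh i ((k i).apply_mem_iff.2 hi), (k i).involutive]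
  · rw [hh i hi, (k i).apply_eq_self_iff p hi]
  · rw [hh i hi]
    exact (k i).not_adj p

section InsertPair

variable [DecidableEq V] (k : PartialFlip G v) {p q : V}

theorem swap_mul_apply_of_mem (hp : p ∉ k.dom) (hq : q ∉ k.dom) {a : V} (ha : a ∈ k.dom) :
    (Equiv.swap p q * k.toPerm) a = k a :=
  Equiv.swap_apply_of_ne_of_ne (ne_of_mem_of_not_mem (k.apply_mem_iff.2 ha) hp)
    (ne_of_mem_of_not_mem (k.apply_mem_iff.2 ha) hq)

theorem swap_mul_apply_of_notMem {a : V} (ha : a ∉ k.dom) :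
    (Equiv.swap p q * k.toPerm) a = Equiv.swap p q a :=
  congrArg (Equiv.swap p q) (k.apply_of_notMem a ha)

theorem isPartialIso_swap_mul (hp : p ∉ k.dom) (hq : q ∉ k.dom)
    (hadj : ∀ c ∈ k.dom, G.Adj q (k c) ↔ G.Adj p c) :
    IsPartialIso G (Equiv.swap p q * k.toPerm) ↑(insert p (insert q k.dom)) := by
  have hadj' : ∀ c ∈ k.dom, G.Adj p (k c) ↔ G.Adj q c := fun c hc => by
    rw [← hadj _ (k.apply_mem_iff.2 hc), k.involutive]
  rw [Finset.coe_insert, Finset.coe_insert]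
  refine .insert (.insert (k.isPartialIso.congr fun c hc => ?_) ?_ ?_) ?_ ?_
  · exact (k.swap_mul_apply_of_mem hp hq hc).symm
  · exact fun c _ h => (Equiv.swap p q * k.toPerm).injective h
  · intro c hc
    rw [k.swap_mul_apply_of_mem hp hq hc, k.swap_mul_apply_of_notMem hq, Equiv.swap_apply_right,
      hadj' c hc]
  · exact fun c _ h => (Equiv.swap p q * k.toPerm).injective h
  · rintro c (rfl | hc)
    · rw [k.swap_mul_apply_of_notMem hp, k.swap_mul_apply_of_notMem hq, Equiv.swap_apply_left,
        Equiv.swap_apply_right, G.adj_comm]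
    · rw [k.swap_mul_apply_of_mem hp hq hc, k.swap_mul_apply_of_notMem hp, Equiv.swap_apply_left,
        hadj c hc]

/-- The extension of `k` by a transposition of two vertices outside its domain. -/
def insertPair (hp : p ∉ k.dom) (hq : q ∉ k.dom) (hpq : p ≠ q) (hnadj : ¬ G.Adj p q)
    (hadj : ∀ c ∈ k.dom, G.Adj q (k c) ↔ G.Adj p c) : PartialFlip G v where
  toPerm := Equiv.swap p q * k.toPerm
  dom := insert p (insert q k.dom)
  involutive a := by
    by_cases ha : a ∈ k.dom
    · rw [k.swap_mul_apply_of_mem hp hq ha, k.swap_mul_apply_of_mem hp hq (k.apply_mem_iff.2 ha),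
        k.involutive]
    have ha' : Equiv.swap p q a ∉ k.dom := by
      rw [Equiv.swap_apply_def]
      split_ifs <;> assumption
    rw [k.swap_mul_apply_of_notMem ha, k.swap_mul_apply_of_notMem ha', Equiv.swap_apply_self]
  apply_of_notMem a ha := by
    simp only [Finset.mem_insert, not_or] at ha
    rw [k.swap_mul_apply_of_notMem ha.2.2, Equiv.swap_apply_of_ne_of_ne ha.1 ha.2.1]
  center_mem := by simp only [Finset.mem_insert, k.center_mem, or_true]
  apply_eq_self_iff a ha := by
    rcases Finset.mem_insert.1 ha with rfl | ha
    · rw [k.swap_mul_apply_of_notMem hp, Equiv.swap_apply_left]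
      exact iff_of_false hpq.symm (ne_of_mem_of_not_mem k.center_mem hp).symm
    rcases Finset.mem_insert.1 ha with rfl | ha
    · rw [k.swap_mul_apply_of_notMem hq, Equiv.swap_apply_right]
      exact iff_of_false hpq (ne_of_mem_of_not_mem k.center_mem hq).symm
    · rw [k.swap_mul_apply_of_mem hp hq ha, k.apply_eq_self_iff a ha]
  isPartialIso := k.isPartialIso_swap_mul hp hq hadj
  not_adj a := by
    by_cases ha : a ∈ k.dom
    · rw [k.swap_mul_apply_of_mem hp hq ha]
      exact k.not_adj a
    rw [k.swap_mul_apply_of_notMem ha, Equiv.swap_apply_def]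
    split_ifs with hap haq
    · rwa [hap]
    · rwa [haq, G.adj_comm]
    · exact G.irrefl

variable (hp : p ∉ k.dom) (hq : q ∉ k.dom) (hpq : p ≠ q) (hnadj : ¬ G.Adj p q)
  (hadj : ∀ c ∈ k.dom, G.Adj q (k c) ↔ G.Adj p c)

theorem le_insertPair : k ≤ k.insertPair hp hq hpq hnadj hadj :=
  ⟨fun _ ha => Finset.mem_insert_of_mem (Finset.mem_insert_of_mem ha),
    fun _ ha => k.swap_mul_apply_of_mem hp hq ha⟩

theorem insertPair_apply_left : k.insertPair hp hq hpq hnadj hadj p = q :=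
  (k.swap_mul_apply_of_notMem hp).trans (Equiv.swap_apply_left p q)

theorem insertPair_apply_right : k.insertPair hp hq hpq hnadj hadj q = p :=
  (k.swap_mul_apply_of_notMem hq).trans (Equiv.swap_apply_right p q)

end InsertPair

theorem exists_le_mem (hG : IsHenson G n) (k : PartialFlip G v) {p : V} (hp : p ∉ k.dom)
    (D : Finset V) : ∃ k' ≥ k, p ∈ k'.dom ∧ k' p ∉ D ∧ ∀ d ∈ D, d ∉ k.dom → ¬ G.Adj (k' p) d := by
  classical
  obtain ⟨q, -, hq⟩ := hG.isExtensionDense.exists_isFreeCopy hG.cliqueFree k.isPartialIso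
    (insert p (k.dom ∪ D)) p
  have hqE := hq.notMem
  simp only [Finset.mem_insert, Finset.mem_union, not_or] at hqE
  have hnadj : ∀ d ∈ insert p (k.dom ∪ D), d ∉ k.dom → ¬ G.Adj q d := fun d hd hdk =>
    hq.not_adj d hd fun c hc hcd => hdk (hcd ▸ k.apply_mem_iff.2 hc)
  have hqp : ¬ G.Adj p q := fun h => hnadj p (Finset.mem_insert_self _ _) hp h.symm
  refine ⟨k.insertPair hp hqE.2.1 (Ne.symm hqE.1) hqp hq.adj_iff, k.le_insertPair .., ?_, ?_⟩
  · exact Finset.mem_insert_self ..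
  · rw [insertPair_apply_left]
    exact ⟨hqE.2.2, fun d hd => hnadj d (by simp [hd])⟩

theorem isCofinal_mem_dom (hG : IsHenson G n) (p : V) :
    IsCofinal {k : PartialFlip G v | p ∈ k.dom} := by
  intro k
  by_cases hp : p ∈ k.dom
  · exact ⟨k, hp, le_rfl⟩
  · obtain ⟨k', hk', hpk', -⟩ := k.exists_le_mem hG hp ∅
    exact ⟨k', hpk', hk'⟩

end PartialFlip

/-- The vertices with distinct nonadjacent images under `h` and `k` are extension dense. -/
def IsGeneric (G : SimpleGraph V) (n : ℕ) (h k : V → V) : Prop :=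
  IsExtensionDense G n {q | h q ≠ k q ∧ ¬ G.Adj (h q) (k q)}

theorem IsGeneric.symm {h k : V → V} (hhk : IsGeneric G n h k) : IsGeneric G n k h := by
  simpa only [IsGeneric, ne_comm, G.adj_comm] using hhk

theorem isExtensionDense_of_finset {A : Set V}
    (hA : ∀ E N : Finset V, G.CliqueFreeOn N n → ∃ q ∈ A, q ∉ E ∧ ∀ d ∈ E, G.Adj q d ↔ d ∈ N) :
    IsExtensionDense G n A := by
  classical
  intro E N hN
  obtain ⟨q, hqA, hqE, hq⟩ := hA E (E.filter (· ∈ N))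
    (SimpleGraph.CliqueFreeOn.subset G (fun d hd => (Finset.mem_filter.1 hd).2) hN)
  refine ⟨q, hqA, hqE, fun d hd => ?_⟩
  rw [hq d hd, Finset.mem_filter, and_iff_right hd]

theorem PartialFlip.isCofinal_generic (hG : IsHenson G n) (h : G ≃g G) (E : Finset V) {N : Set V}
    (hN : G.CliqueFreeOn N n) :
    IsCofinal {k : PartialFlip G v | ∃ q ∈ k.dom, (h q ≠ k q ∧ ¬ G.Adj (h q) (k q)) ∧
      q ∉ E ∧ ∀ d ∈ E, G.Adj q d ↔ d ∈ N} := by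
  classical
  intro k
  obtain ⟨q, -, hqE, hq⟩ := hG.isExtensionDense (E ∪ k.dom ∪ k.dom.image h.symm) N hN
  simp only [Finset.mem_union, Finset.mem_image, not_or, not_exists, not_and] at hqE
  have hhq : h q ∉ k.dom := fun hhq => hqE.2 _ hhq (h.symm_apply_apply q)
  obtain ⟨k', hkk', hqk', hkq, hkq'⟩ := k.exists_le_mem hG hqE.1.2 {h q}
  refine ⟨k', ⟨q, hqk', ⟨?_, ?_⟩, hqE.1.1, fun d hd => hq d (by simp [hd])⟩, hkk'⟩
  · exact fun hne => hkq (Finset.mem_singleton.2 hne.symm)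
  · exact fun hadj => hkq' _ (Finset.mem_singleton_self _) hhq hadj.symm

theorem IsHenson.exists_isFlip_isGeneric [Countable V] (hG : IsHenson G n) (v : V) {ι : Type*}
    [Countable ι] (h : ι → G ≃g G) :
    ∃ k : G ≃g G, IsFlip v k ∧ ∀ i, IsGeneric G n (h i) k := by
  let D : V ⊕ {c : ι × Finset V × Finset V // G.CliqueFreeOn c.2.2 n} → Set (PartialFlip G v) :=
    Sum.elim (fun p => {k | p ∈ k.dom}) fun c =>
      {k | ∃ q ∈ k.dom, (h c.1.1 q ≠ k q ∧ ¬ G.Adj (h c.1.1 q) (k q)) ∧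
        q ∉ c.1.2.1 ∧ ∀ d ∈ c.1.2.1, G.Adj q d ↔ d ∈ c.1.2.2}
  obtain ⟨s, hs, hsD⟩ := exists_monotone_seq_mem default (D := D) <| by
    rintro (p | ⟨c, hc⟩)
    exacts [PartialFlip.isCofinal_mem_dom hG p, PartialFlip.isCofinal_generic hG _ _ hc]
  obtain ⟨k, hk, hks⟩ := PartialFlip.exists_isFlip hs fun p => hsD (.inl p)
  refine ⟨k, hk, fun i => isExtensionDense_of_finset fun E N hN => ?_⟩
  obtain ⟨j, q, hqj, hq, hqE⟩ := hsD (.inr ⟨(i, E, N), hN⟩)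
  refine ⟨q, ?_, hqE⟩
  rwa [Set.mem_ofPred_eq, hks j hqj]

end Flip

section Conj

variable {V : Type*} {G : SimpleGraph V} {n : ℕ} {v : V}

/-- A finite approximation of an automorphism conjugating `h` to `k`: the conjugation equation holds
on the finite `h`-invariant set `dom`. -/
structure PartialConj (h k : G ≃g G) (v : V) where
  toIso : G ≃g G
  dom : Finset V
  center_mem : v ∈ dom
  apply_mem : ∀ p ∈ dom, h p ∈ dom
  apply_comm : ∀ p ∈ dom, toIso (h p) = k (toIso p)

namespace PartialConj

variable {h k : G ≃g G}

instance : Preorder (PartialConj h k v) where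
  le c c' := c.dom ⊆ c'.dom ∧ Set.EqOn c'.toIso c.toIso c.dom
  le_refl _ := ⟨subset_rfl, Set.eqOn_refl _ _⟩
  le_trans _ _ _ h h' := ⟨h.1.trans h'.1, fun _ ha => (h'.2 (h.1 ha)).trans (h.2 ha)⟩

theorem apply_center (hh : IsFlip v h) (hk : IsFlip v k) (c : PartialConj h k v) :
    c.toIso v = v := by
  rw [← hk.apply_eq_self_iff, ← c.apply_comm v c.center_mem, hh.apply_center]

theorem exists_aut_extending (hG : IsHenson G n) (hh : IsFlip v h) (hk : IsFlip v k)
    (c : PartialConj h k v) {p : V} (hp : p ∉ c.dom) :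
    ∃ φ : G ≃g G, φ (h p) = k (c.toIso p) ∧ φ p = c.toIso p ∧ Set.EqOn φ c.toIso c.dom := by
  classical
  have hpv : p ≠ v := fun hpv => hp (hpv ▸ c.center_mem)
  have hhp : h p ∉ insert p c.dom := by
    rw [Finset.mem_insert, hh.apply_eq_self_iff, not_or]
    exact ⟨hpv, fun hhp => hp (hh.involutive p ▸ c.apply_mem _ hhp)⟩
  obtain ⟨φ, hφp, hφ⟩ := hG.exists_aut_insert c.toIso (q := k (c.toIso p)) hhp
    (fun b hb heq => by
      rcases Finset.mem_insert.1 hb with rfl | hb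
      · rw [hk.apply_eq_self_iff] at heq
        exact hpv (c.toIso.injective (heq.trans (c.apply_center hh hk).symm))
      · rw [← hk.involutive (c.toIso b), ← c.apply_comm b hb] at heq
        exact hp (c.toIso.injective (k.injective heq) ▸ c.apply_mem b hb))
    (fun b hb => by
      rw [hh.adj_apply_comm, hk.adj_apply_comm]
      rcases Finset.mem_insert.1 hb with rfl | hb
      · exact iff_of_false (hk.not_adj _) (hh.not_adj _)
      · rw [← c.apply_comm b hb, c.toIso.map_adj_iff])
  exact ⟨φ, hφp, hφ p (Finset.mem_insert_self _ _), fun a ha => hφ a (Finset.mem_insert_of_mem ha)⟩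

theorem exists_le_mem (hG : IsHenson G n) (hh : IsFlip v h) (hk : IsFlip v k)
    (c : PartialConj h k v) (p : V) : ∃ c' ≥ c, p ∈ c'.dom ∧ c'.toIso p = c.toIso p := by
  classical
  by_cases hp : p ∈ c.dom
  · exact ⟨c, le_rfl, hp, rfl⟩
  obtain ⟨φ, hφhp, hφp, hφ⟩ := c.exists_aut_extending hG hh hk hp
  refine ⟨⟨φ, insert (h p) (insert p c.dom), ?_, fun a ha => ?_, fun a ha => ?_⟩,
    ⟨fun a ha => by simp [ha], hφ⟩, by simp, hφp⟩
  · simp [c.center_mem]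
  all_goals
    simp only [Finset.mem_insert] at ha ⊢
    rcases ha with rfl | rfl | ha
  · exact .inr (.inl (hh.involutive p))
  · exact .inl rfl
  · exact .inr (.inr (c.apply_mem a ha))
  · rw [hh.involutive, hφp, hφhp, hk.involutive]
  · rw [hφp, hφhp]
  · rw [hφ ha, hφ (c.apply_mem a ha), c.apply_comm a ha]

end PartialConj

theorem IsHenson.exists_conj_of_isFlip [Countable V] (hG : IsHenson G n) {h k : G ≃g G}
    (hh : IsFlip v h) (hk : IsFlip v k) : ∃ u : G ≃g G, u * h * u⁻¹ = k := by
  let D : V ⊕ V → Set (PartialConj h k v) :=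
    Sum.elim (fun p => {c | p ∈ c.dom}) fun q => {c | ∃ p ∈ c.dom, c.toIso p = q}
  let c₀ : PartialConj h k v := ⟨1, {v}, by simp, by simp [hh.apply_center],
    by simp [hh.apply_center, hk.apply_center]⟩
  obtain ⟨s, hs, hsD⟩ := exists_monotone_seq_mem c₀ (D := D) <| by
    rintro (p | q) c
    · obtain ⟨c', hc, hp, -⟩ := c.exists_le_mem hG hh hk p
      exact ⟨c', hp, hc⟩
    · obtain ⟨c', hc, hp, hp'⟩ := c.exists_le_mem hG hh hk (c.toIso.symm q)
      exact ⟨c', ⟨_, hp, by rw [hp', RelIso.apply_symm_apply]⟩, hc⟩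
  obtain ⟨u, hu⟩ := exists_iso_of_monotone_partialIso (f := fun i => (s i).toIso)
    (S := fun i => (s i).dom) (fun i j hij => Finset.coe_subset.2 (hs hij).1)
    (fun i => IsPartialIso.of_iso _) (fun i j hij => (hs hij).2) (fun p => hsD (.inl p))
    fun q => hsD (.inr q)
  refine ⟨u, mul_inv_eq_of_eq_mul (RelIso.ext fun p => ?_)⟩
  obtain ⟨i, hi⟩ := hsD (.inl p)
  rw [RelIso.mul_apply, RelIso.mul_apply, hu i hi, hu i ((s i).apply_mem p hi),
    (s i).apply_comm p hi]

end Conj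

/-! ### Joining generic flips by commuting flips -/

section FarExtension

variable {V : Type*} {G : SimpleGraph V} {n : ℕ} {v : V} {h h' : G ≃g G}

namespace PartialFlip

theorem apply_center (k : PartialFlip G v) : k v = v :=
  (k.apply_eq_self_iff v k.center_mem).2 rfl

theorem adj_apply_comm (k : PartialFlip G v) {p q : V} (hp : p ∈ k.dom) (hq : q ∈ k.dom) :
    G.Adj (k p) q ↔ G.Adj p (k q) := by
  rw [← k.isPartialIso.adj_iff p hp _ (k.apply_mem_iff.2 hq), k.involutive]

theorem apply_mem_iff_of_commute (k : PartialFlip G v) {f : V → V} (hf : Function.Involutive f)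
    (hfv : f v = v) (hk : Function.Commute k.toPerm f) {p : V} : f p ∈ k.dom ↔ p ∈ k.dom := by
  have hmem : ∀ p ∈ k.dom, f p ∈ k.dom := by
    intro p hp
    by_contra hfp
    have hkp : k p = p := hf.injective ((hk p).symm.trans (k.apply_of_notMem _ hfp))
    rw [(k.apply_eq_self_iff p hp).1 hkp, hfv] at hfp
    exact hfp k.center_mem
  exact ⟨fun hp => hf p ▸ hmem _ hp, hmem p⟩

theorem commute_of_forall_mem_dom (k : PartialFlip G v) {f : V → V} (hf : Function.Involutive f)
    (hmem : ∀ p ∈ k.dom, f p ∈ k.dom) (hcomm : ∀ p ∈ k.dom, k (f p) = f (k p)) :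
    Function.Commute k.toPerm f := by
  intro p
  by_cases hp : p ∈ k.dom
  · exact hcomm p hp
  · rw [k.apply_of_notMem p hp, k.apply_of_notMem _ fun hfp => hp (hf p ▸ hmem _ hfp)]

theorem isFreeCopy_map (k : PartialFlip G v) (hh : IsFlip v h) (hk : Function.Commute k.toPerm h)
    {E : Finset V} (hE : ∀ a ∈ E, h a ∈ E) {p q : V} (hq : IsFreeCopy G k k.dom E p q) :
    IsFreeCopy G k k.dom E (h p) (h q) := by
  have hdom : ∀ c ∈ k.dom, h c ∈ k.dom := fun c =>
    (k.apply_mem_iff_of_commute hh.involutive hh.apply_center hk).2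
  refine ⟨fun hhq => hq.notMem (hh.involutive q ▸ hE _ hhq), fun c hc heq => ?_, fun c hc => ?_,
    fun d hd hdk hadj => ?_⟩
  · rw [hh.involutive.eq_iff, ← hk c] at heq
    exact hq.ne _ (hdom c hc) heq
  · rw [hh.adj_apply_comm, hh.adj_apply_comm, ← hk c, hq.adj_iff _ (hdom c hc)]
  · rw [hh.adj_apply_comm] at hadj
    refine hq.not_adj _ (hE d hd) (fun c hc hcd => hdk _ (hdom c hc) ?_) hadj
    rw [hk c, hcd, hh.involutive]

theorem commute_swap_mul_swap_mul [DecidableEq V] (k : PartialFlip G v) (hh : IsFlip v h)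
    (hk : Function.Commute k.toPerm h) {p q : V} (hdisj : [p, q, h p, h q].Nodup) :
    Function.Commute ⇑(Equiv.swap (h p) (h q) * (Equiv.swap p q * k.toPerm)) h := by
  have hcomm : Commute (Equiv.swap (h p) (h q)) (Equiv.swap p q) :=
    (Equiv.Perm.disjoint_swap_swap hdisj).commute.symm
  have hswap : ∀ a b c, Equiv.swap (h a) (h b) (h c) = h (Equiv.swap a b c) := fun a b c =>
    (h.injective.map_swap a b c).symm
  intro a
  rw [← mul_assoc]
  nth_rw 1 [hcomm.eq]
  simp only [Equiv.Perm.mul_apply]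
  rw [hk a, hswap]
  nth_rw 1 [← hh.involutive p, ← hh.involutive q]
  rw [hswap]

theorem exists_le_insert_orbit [DecidableEq V] (k : PartialFlip G v) (hh : IsFlip v h)
    (hk : Function.Commute k.toPerm h) {E : Finset V} {p q : V} (hp : p ∉ k.dom) (hpE : p ∈ E)
    (hkE : k.dom ⊆ E) (hE : ∀ a ∈ E, h a ∈ E) (hq : IsFreeCopy G k k.dom E p q) :
    ∃ k' ≥ k, Function.Commute k'.toPerm h ∧ k' p = q ∧
      k'.dom = insert (h p) (insert (h q) (insert p (insert q k.dom))) := by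
  have hdom : ∀ a ∉ k.dom, h a ∉ k.dom := fun a =>
    mt (k.apply_mem_iff_of_commute hh.involutive hh.apply_center hk).1
  have hne : ∀ a ∉ k.dom, h a ≠ a := fun a ha hha =>
    ha ((hh.apply_eq_self_iff a).1 hha ▸ k.center_mem)
  have hqE : ∀ d ∈ E, d ≠ q := fun d hd hdq => hq.notMem (hdq ▸ hd)
  have hqk : q ∉ k.dom := fun hqk => hq.notMem (hkE hqk)
  have hpq := hqE p hpE
  have hhpq := hqE (h p) (hE p hpE)
  have hhqp : h q ≠ p := fun hqp => hhpq (hqp ▸ hh.involutive q)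
  have hpq' : ¬ G.Adj p q := fun hadj =>
    hq.not_adj p hpE (fun c hc hcp => hp (hcp ▸ k.apply_mem_iff.2 hc)) hadj.symm
  let k₁ := k.insertPair hp hqk hpq hpq' hq.adj_iff
  have hk₁ : ∀ c ∈ k₁.dom, G.Adj (h q) (k₁ c) ↔ G.Adj (h p) c := by
    intro c hc
    rcases Finset.mem_insert.1 hc with rfl | hc
    · rw [k.insertPair_apply_left, G.adj_comm, G.adj_comm (h c)]
      exact iff_of_false (hh.not_adj q) (hh.not_adj c)
    rcases Finset.mem_insert.1 hc with rfl | hc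
    · rw [k.insertPair_apply_right, hh.adj_apply_comm, G.adj_comm]
    · rw [(k.le_insertPair ..).2 hc, (k.isFreeCopy_map hh hk hE hq).adj_iff c hc]
  have hhp : h p ∉ k₁.dom := by simpa [k₁, insertPair] using ⟨hne p hp, hhpq, hdom p hp⟩
  have hhq : h q ∉ k₁.dom := by simpa [k₁, insertPair] using ⟨hhqp, hne q hqk, hdom q hqk⟩
  refine ⟨k₁.insertPair hhp hhq (h.injective.ne hpq) (by rwa [h.map_adj_iff]) hk₁,
    (k.le_insertPair ..).trans (k₁.le_insertPair ..), ?_, ?_, rfl⟩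
  · refine k.commute_swap_mul_swap_mul hh hk ?_
    simp [hpq, hhpq.symm, hhqp.symm, (hne p hp).symm, (hne q hqk).symm]
  · rw [(k₁.le_insertPair ..).2 (Finset.mem_insert_self ..), k.insertPair_apply_left]

end PartialFlip

theorem exists_finset_superset_invariant {α : Type*} {f : α → α} (hf : Function.Involutive f)
    (S : Finset α) : ∃ T ⊇ S, ∀ a ∈ T, f a ∈ T := by
  classical
  refine ⟨S ∪ S.image f, Finset.subset_union_left, fun a ha => ?_⟩
  rcases Finset.mem_union.1 ha with ha | ha
  · exact Finset.mem_union_right _ (Finset.mem_image_of_mem f ha)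
  · obtain ⟨b, hb, rfl⟩ := Finset.mem_image.1 ha
    exact Finset.mem_union_left _ ((hf b).symm ▸ hb)

/-- The vertices `h a` and `b` are distinct and nonadjacent. -/
def IsApart (h : G ≃g G) (a b : V) : Prop :=
  h a ≠ b ∧ ¬ G.Adj (h a) b

theorem IsFlip.isApart_comm (hh : IsFlip v h) {a b : V} : IsApart h a b ↔ IsApart h b a := by
  rw [IsApart, IsApart, hh.adj_apply_comm, G.adj_comm, Ne, Ne, hh.involutive.eq_iff, eq_comm]

theorem IsFlip.isApart_self (hh : IsFlip v h) {a : V} (ha : a ≠ v) : IsApart h a a :=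
  ⟨mt (hh.apply_eq_self_iff a).1 ha, fun hadj => hh.not_adj a hadj.symm⟩

/-- The partial flip `x'` extends `x` by exchanging the vertices of `P` with new vertices, which
are free over the vertices of `D` outside the domain of `x`, and over the images of each other under
`h'`. -/
structure IsFarExtension (h h' : G ≃g G) (D : Finset V) (x : PartialFlip G v) (P : Finset V)
    (x' : PartialFlip G v) : Prop where
  le : x ≤ x'
  commute : Function.Commute x'.toPerm h
  mem_dom : ∀ a, a ∈ x'.dom ↔ a ∈ x.dom ∨ a ∈ P ∨ x' a ∈ P
  notMem : ∀ a ∈ P, x' a ∉ D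
  not_adj : ∀ a ∈ P, ∀ d ∈ D, d ∉ x.dom → ¬ G.Adj (x' a) d
  isApart : ∀ a ∈ P, ∀ b ∈ P, IsApart h' (x' a) (x' b)

namespace IsFarExtension

variable {D P E : Finset V} {x x' : PartialFlip G v} {p q : V}

theorem subset_dom (hx : IsFarExtension h h' D x P x') : P ⊆ x'.dom :=
  fun a ha => (hx.mem_dom a).2 (.inr (.inl ha))

theorem apply_notMem (hx : IsFarExtension h h' D x P x') {d : V} (hd : d ∈ D) : x' d ∉ P :=
  fun hdP => hx.notMem _ hdP ((x'.involutive d).symm ▸ hd)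

theorem not_adj_of_isFreeCopy (hx : IsFarExtension h h' D x P x') (hp : p ∈ D) (hpx : p ∉ x.dom)
    (hq : IsFreeCopy G x' x'.dom E p q) {d : V} (hd : d ∈ E) (hdx : d ∉ x.dom) (hdP : x' d ∉ P) :
    ¬ G.Adj q d := by
  by_cases hd' : d ∈ x'.dom
  · have hdP' : d ∈ P := ((hx.mem_dom d).1 hd').resolve_left hdx |>.resolve_right hdP
    have hadj := hq.adj_iff _ (x'.apply_mem_iff.2 hd')
    rw [x'.involutive, G.adj_comm p] at hadj
    exact mt hadj.1 (hx.not_adj d hdP' p hp hpx)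
  · exact hq.not_adj d hd fun c hc hcd => hd' (hcd ▸ x'.apply_mem_iff.2 hc)

theorem isApart_of_isFreeCopy (hh' : IsFlip v h') (hx : IsFarExtension h h' D x P x')
    (hD : ∀ d ∈ D, h' d ∈ D) (hxD : x.dom ⊆ D) (hE : ∀ a ∈ x'.dom, h' a ∈ E) (hp : p ∈ D)
    (hpx : p ∉ x.dom) (hq : IsFreeCopy G x' x'.dom E p q) {b : V} (hb : b ∈ P) :
    IsApart h' q (x' b) := by
  have hbE : h' (x' b) ∈ E := hE _ (x'.apply_mem_iff.2 (hx.subset_dom hb))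
  refine ⟨fun heq => hq.notMem (hh'.involutive.eq_iff.1 heq ▸ hbE), ?_⟩
  rw [hh'.adj_apply_comm]
  refine hx.not_adj_of_isFreeCopy hp hpx hq hbE (fun hbx => ?_) fun hbP => ?_
  · exact hx.notMem b hb (hh'.involutive (x' b) ▸ hD _ (hxD hbx))
  · exact (hx.isApart b hb _ hbP).1 (x'.involutive _).symm

theorem exists_insert [DecidableEq V] (hG : IsHenson G n) (hh : IsFlip v h) (hh' : IsFlip v h')
    (hgen : IsGeneric G n h h') (hx : IsFarExtension h h' D x P x') (hD : ∀ d ∈ D, h' d ∈ D)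
    (hxD : x.dom ⊆ D) (hp : p ∈ D) (hpx : p ∉ x.dom) (hpP : p ∉ P) (hhp : h p ∈ D)
    (hhpx : h p ∉ x.dom) : ∃ x'', IsFarExtension h h' D x (insert p (insert (h p) P)) x'' := by
  obtain ⟨E, hE₀, hE⟩ := exists_finset_superset_invariant hh.involutive
    (x'.dom ∪ D ∪ x'.dom.image h')
  simp only [Finset.union_subset_iff, Finset.image_subset_iff] at hE₀
  obtain ⟨⟨hxE, hDE⟩, hhxE⟩ := hE₀
  obtain ⟨q, hqA, hq⟩ := hgen.exists_isFreeCopy hG.cliqueFree x'.isPartialIso E p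
  have hhq := x'.isFreeCopy_map hh hx.commute hE hq
  obtain ⟨x'', hle, hcomm, hxq, hdom⟩ := x'.exists_le_insert_orbit hh hx.commute
    (by simpa [hx.mem_dom, hpx, hpP] using hx.apply_notMem hp) (hDE hp) hxE hE hq
  have hxhq : x'' (h p) = h q := (hcomm p).trans (congrArg h hxq)
  have hPx : ∀ a ∈ P, x'' a = x' a := fun a ha => hle.2 (hx.subset_dom ha)
  have hqv : q ≠ v := fun hqv => hq.notMem (hqv ▸ hDE (hxD x.center_mem))
  have hhqv : h q ≠ v := fun hqv => hhq.notMem (hqv ▸ hDE (hxD x.center_mem))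
  have hqhq : IsApart h' q (h q) := ⟨hqA.1.symm, fun hadj => hqA.2 hadj.symm⟩
  have hqP : ∀ b ∈ P, IsApart h' q (x' b) := fun b =>
    hx.isApart_of_isFreeCopy hh' hD hxD hhxE hp hpx hq
  have hhqP : ∀ b ∈ P, IsApart h' (h q) (x' b) := fun b =>
    hx.isApart_of_isFreeCopy hh' hD hxD hhxE hhp hhpx hhq
  refine ⟨x'', hx.le.trans hle, hcomm, fun a => ?_, ?_, ?_, ?_⟩
  · have hPa : x'' a ∈ P ↔ x' a ∈ P := by
      refine ⟨fun ha => ?_, fun ha => ?_⟩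
      · rwa [← x''.involutive a, hPx _ ha, x'.involutive]
      · rwa [← x'.involutive a, ← hPx _ ha, x''.involutive]
    simp only [hdom, Finset.mem_insert, hPa, x''.involutive.eq_iff, hxq, hxhq, hx.mem_dom]
    tauto
  all_goals simp only [Finset.forall_mem_insert, hxq, hxhq]
  · exact ⟨fun h => hq.notMem (hDE h), fun h => hhq.notMem (hDE h),
      fun a ha => hPx a ha ▸ hx.notMem a ha⟩
  · refine ⟨fun d hd hdx => ?_, fun d hd hdx => ?_, fun a ha => hPx a ha ▸ hx.not_adj a ha⟩
    · exact hx.not_adj_of_isFreeCopy hp hpx hq (hDE hd) hdx (hx.apply_notMem hd)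
    · exact hx.not_adj_of_isFreeCopy hhp hhpx hhq (hDE hd) hdx (hx.apply_notMem hd)
  · refine ⟨⟨hh'.isApart_self hqv, hqhq, fun b hb => hPx b hb ▸ hqP b hb⟩,
      ⟨hh'.isApart_comm.1 hqhq, hh'.isApart_self hhqv, fun b hb => hPx b hb ▸ hhqP b hb⟩,
      fun a ha => ?_⟩
    rw [hPx a ha]
    exact ⟨hh'.isApart_comm.1 (hqP a ha), hh'.isApart_comm.1 (hhqP a ha),
      fun b hb => hPx b hb ▸ hx.isApart a ha b hb⟩

theorem exists_of_invariant (hG : IsHenson G n) (hh : IsFlip v h) (hh' : IsFlip v h')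
    (hgen : IsGeneric G n h h') (hx : Function.Commute x.toPerm h) (hD : ∀ d ∈ D, h' d ∈ D)
    (hxD : x.dom ⊆ D) (hPD : P ⊆ D) (hPx : ∀ a ∈ P, a ∉ x.dom) (hhP : ∀ a ∈ P, h a ∈ P) :
    ∃ x', IsFarExtension h h' D x P x' := by
  classical
  induction P using Finset.strongInduction with | H P ih => ?_
  obtain rfl | ⟨p, hp⟩ := P.eq_empty_or_nonempty
  · exact ⟨x, le_rfl, hx, by simp, by simp, by simp, by simp⟩
  let P₀ := (P.erase (h p)).erase p
  have hP₀ : P₀ ⊂ P := (Finset.erase_subset_erase _ (Finset.erase_subset _ _)).trans_ssubset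
    (Finset.erase_ssubset hp)
  have hP : insert p (insert (h p) P₀) = P := by grind
  obtain ⟨x', hx'⟩ := ih P₀ hP₀ (hP₀.1.trans hPD) (fun a ha => hPx a (hP₀.1 ha)) fun a ha => by
    simp only [P₀, Finset.mem_erase] at ha ⊢
    exact ⟨fun hap => ha.2.1 (hh.involutive.eq_iff.1 hap), h.injective.ne ha.1, hhP a ha.2.2⟩
  rw [← hP]
  exact hx'.exists_insert hG hh hh' hgen hD hxD (hPD hp) (hPx p hp) (Finset.notMem_erase _ _)
    (hPD (hhP p hp)) (hPx _ (hhP p hp))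

end IsFarExtension

namespace PartialFlip

section Transport

variable [DecidableEq V] {z z₁ : PartialFlip G v} {w : Equiv.Perm V} {P : Finset V} {a b : V}

/-- The map which agrees with the conjugate of `z` by `w` on the image of `P` under `w`, and with
`z₁` elsewhere. -/
def transport (z z₁ : PartialFlip G v) (w : Equiv.Perm V) (P : Finset V) (b : V) : V :=
  if w.symm b ∈ P then w (z (w.symm b)) else z₁ b

theorem transport_apply (ha : a ∈ P) : transport z z₁ w P (w a) = w (z a) := by
  simp [transport, ha]

theorem transport_of_forall_ne (hb : ∀ a ∈ P, w a ≠ b) : transport z z₁ w P b = z₁ b :=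
  if_neg fun hbP => hb _ hbP (w.apply_symm_apply b)

theorem transport_of_mem_dom (hwz : ∀ a ∈ P, w a ∉ z₁.dom) (hb : b ∈ z₁.dom) :
    transport z z₁ w P b = z₁ b :=
  transport_of_forall_ne fun a ha hab => hwz a ha (hab ▸ hb)

theorem involutive_transport (hP : ∀ a ∈ P, z a ∈ P) (hwz : ∀ a ∈ P, w a ∉ z₁.dom) :
    Function.Involutive (transport z z₁ w P) := by
  intro b
  by_cases hb : ∃ a ∈ P, w a = b
  · obtain ⟨a, ha, rfl⟩ := hb
    rw [transport_apply ha, transport_apply (hP a ha), z.involutive]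
  push Not at hb
  rw [transport_of_forall_ne hb]
  by_cases hbz : b ∈ z₁.dom
  · rw [transport_of_mem_dom hwz (z₁.apply_mem_iff.2 hbz), z₁.involutive]
  · rw [z₁.apply_of_notMem b hbz, transport_of_forall_ne hb, z₁.apply_of_notMem b hbz]

theorem isPartialIso_transport (hP : ∀ a ∈ P, z a ∈ P) (hwz : ∀ a ∈ P, w a ∉ z₁.dom)
    (hw : IsPartialIso G w P)
    (hcross : ∀ a ∈ P, a ∈ z.dom → ∀ d ∈ z₁.dom, G.Adj (w (z a)) (z₁ d) ↔ G.Adj (w a) d) :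
    IsPartialIso G (transport z z₁ w P) ↑(z₁.dom ∪ (P ∩ z.dom).image w) := by
  have hinv := involutive_transport (z := z) (z₁ := z₁) hP hwz
  rw [Finset.coe_union, Finset.coe_image, Finset.coe_inter]
  refine (z₁.isPartialIso.congr fun b hb => (transport_of_mem_dom hwz hb).symm).union
    ⟨hinv.injective.injOn, ?_⟩ (fun b _ c _ hbc => hinv.injective hbc) ?_
  · rintro _ ⟨a, ⟨ha, haz⟩, rfl⟩ _ ⟨b, ⟨hb, hbz⟩, rfl⟩
    rw [transport_apply ha, transport_apply hb, hw.adj_iff _ (hP a ha) _ (hP b hb),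
      hw.adj_iff a ha b hb, z.isPartialIso.adj_iff a haz b hbz]
  · rintro d hd _ ⟨a, ⟨ha, haz⟩, rfl⟩
    rw [transport_of_mem_dom hwz hd, transport_apply ha, G.adj_comm, hcross a ha haz d hd,
      G.adj_comm]

theorem exists_transport (hP : ∀ a ∈ P, z a ∈ P) (hvP : v ∉ P) (hwz : ∀ a ∈ P, w a ∉ z₁.dom)
    (hw : IsPartialIso G w P)
    (hcross : ∀ a ∈ P, a ∈ z.dom → ∀ d ∈ z₁.dom, G.Adj (w (z a)) (z₁ d) ↔ G.Adj (w a) d) :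
    ∃ z₂ ≥ z₁, z₂.dom = z₁.dom ∪ (P ∩ z.dom).image w ∧ (∀ a ∈ P, z₂ (w a) = w (z a)) ∧
      ∀ b, (∀ a ∈ P, w a ≠ b) → z₂ b = z₁ b := by
  have hinv := involutive_transport (z := z) (z₁ := z₁) hP hwz
  refine ⟨⟨hinv.toPerm, z₁.dom ∪ (P ∩ z.dom).image w, hinv, fun b hb => ?_,
    Finset.mem_union_left _ z₁.center_mem, fun b hb => ?_,
    isPartialIso_transport hP hwz hw hcross, fun b => ?_⟩,
    ⟨Finset.subset_union_left, fun _ => transport_of_mem_dom hwz⟩, rfl,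
    fun _ => transport_apply, fun _ => transport_of_forall_ne⟩ <;>
    rw [Function.Involutive.coe_toPerm]
  · rw [Finset.mem_union, not_or] at hb
    by_cases hbP : ∃ a ∈ P, w a = b
    · obtain ⟨a, ha, rfl⟩ := hbP
      have haz : a ∉ z.dom := fun haz =>
        hb.2 (Finset.mem_image_of_mem w (Finset.mem_inter.2 ⟨ha, haz⟩))
      rw [transport_apply ha, z.apply_of_notMem a haz]
    · push Not at hbP
      rw [transport_of_forall_ne hbP, z₁.apply_of_notMem b hb.1]
  · rcases Finset.mem_union.1 hb with hb | hb
    · rw [transport_of_mem_dom hwz hb, z₁.apply_eq_self_iff b hb]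
    · obtain ⟨a, ha, rfl⟩ := Finset.mem_image.1 hb
      rw [Finset.mem_inter] at ha
      rw [transport_apply ha.1, w.injective.eq_iff, z.apply_eq_self_iff a ha.2]
      exact iff_of_false (fun hav => hvP (hav ▸ ha.1))
        fun hav => hwz a ha.1 (hav ▸ z₁.center_mem)
  · by_cases hbP : ∃ a ∈ P, w a = b
    · obtain ⟨a, ha, rfl⟩ := hbP
      rw [transport_apply ha, hw.adj_iff a ha _ (hP a ha)]
      exact z.not_adj a
    · push Not at hbP
      rw [transport_of_forall_ne hbP]
      exact z₁.not_adj b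

end Transport

end PartialFlip

namespace IsFarExtension

variable {D P : Finset V} {x x' z : PartialFlip G v}

theorem adj_apply_apply_iff (hx : IsFarExtension h h' D x P x')
    (hxz : Function.Commute x.toPerm z.toPerm) (hzD : z.dom ⊆ D) (hPz : ∀ a ∈ P, z a ∈ P) {a d : V}
    (ha : a ∈ P) (haz : a ∈ z.dom) (hd : d ∈ z.dom) :
    G.Adj (x' (z a)) (z d) ↔ G.Adj (x' a) d := by
  have hzd : z d ∈ x.dom ↔ d ∈ x.dom :=
    x.apply_mem_iff_of_commute z.involutive z.apply_center hxz
  have hxd : x d ∈ z.dom :=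
    (z.apply_mem_iff_of_commute x.involutive x.apply_center hxz.symm).2 hd
  by_cases hdx : d ∈ x.dom
  · rw [x'.adj_apply_comm (hx.subset_dom (hPz a ha)) (hx.le.1 (hzd.2 hdx)),
      hx.le.2 (hzd.2 hdx), hxz d, z.isPartialIso.adj_iff a haz _ hxd,
      x'.adj_apply_comm (hx.subset_dom ha) (hx.le.1 hdx), hx.le.2 hdx]
  · exact iff_of_false (hx.not_adj _ (hPz a ha) _ (hzD (z.apply_mem_iff.2 hd)) (mt hzd.1 hdx))
      (hx.not_adj a ha d (hzD hd) hdx)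

theorem exists_le_conj_conj (hh' : IsFlip v h') (hx : IsFarExtension h h' D x P x')
    (hD : ∀ d ∈ D, h' d ∈ D) (hxz : Function.Commute x.toPerm z.toPerm)
    (hzh : Function.Commute z.toPerm h') (hzD : z.dom ⊆ D) (hPz : ∀ a ∈ P, z a ∈ P)
    (hvP : v ∉ P) :
    ∃ z' ≥ z, (∀ a ∈ P, z' (x' a) = x' (z a)) ∧ (∀ a ∈ P, z' (h' (x' a)) = h' (x' (z a))) ∧
      ∀ b, (∀ a ∈ P, x' a ≠ b) → (∀ a ∈ P, h' (x' a) ≠ b) → z' b = z b := by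
  classical
  have hx'P : IsPartialIso G x' P := x'.isPartialIso.mono hx.subset_dom
  have hcross : ∀ a ∈ P, a ∈ z.dom → ∀ d ∈ z.dom, G.Adj (x' (z a)) (z d) ↔ G.Adj (x' a) d :=
    fun a ha haz d => hx.adj_apply_apply_iff hxz hzD hPz ha haz
  obtain ⟨z₁, hz₁, hdom, hz₁P, hz₁ne⟩ := PartialFlip.exists_transport (w := x'.toPerm) hPz hvP
    (fun a ha haz => hx.notMem a ha (hzD haz)) hx'P hcross
  have hmem : ∀ d ∈ z₁.dom, d ∈ z.dom ∨ ∃ b ∈ P, x' b = d := by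
    intro d hd
    rw [hdom, Finset.mem_union, Finset.mem_image] at hd
    exact hd.imp_right fun ⟨b, hb, hbd⟩ => ⟨b, (Finset.mem_inter.1 hb).1, hbd⟩
  have hz₁h : ∀ a ∈ P, h' (x' a) ∉ z₁.dom := by
    intro a ha haz
    obtain haz | ⟨b, hb, heq⟩ := hmem _ haz
    · exact hx.notMem a ha (hh'.involutive (x' a) ▸ hD _ (hzD haz))
    · exact (hx.isApart a ha b hb).1 heq.symm
  have hcross' : ∀ a ∈ P, a ∈ z.dom → ∀ d ∈ z₁.dom,
      G.Adj (h' (x' (z a))) (z₁ d) ↔ G.Adj (h' (x' a)) d := by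
    intro a ha haz d hd
    obtain hd | ⟨b, hb, rfl⟩ := hmem d hd
    · have hhd := (z.apply_mem_iff_of_commute hh'.involutive hh'.apply_center hzh).2 hd
      rw [hz₁.2 hd, hh'.adj_apply_comm, hh'.adj_apply_comm, ← hzh d, hcross a ha haz _ hhd]
    · rw [hz₁P b hb]
      exact iff_of_false (hx.isApart _ (hPz a ha) _ (hPz b hb)).2 (hx.isApart a ha b hb).2
  obtain ⟨z', hz', -, hz'P, hz'ne⟩ := PartialFlip.exists_transport
    (w := x'.toPerm.trans h'.toEquiv) hPz hvP hz₁h (hx'P.comp_iso h') hcross'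
  refine ⟨z', hz₁.trans hz', fun a ha => ?_, hz'P, fun b hb hb' => ?_⟩
  · rw [hz'ne _ fun b hb => (hx.isApart b hb a ha).1, hz₁P a ha]
  · rw [hz'ne b hb', hz₁ne b hb]

theorem commute_of_conj {z' : PartialFlip G v} (hx : IsFarExtension h h' D x P x')
    (hxz : Function.Commute x.toPerm z.toPerm) (hxD : x.dom ⊆ D) (hPD : P ⊆ D)
    (hPz : ∀ a ∈ P, z a ∈ P) (hz' : ∀ d ∈ D, z' d = z d)
    (hconj : ∀ a ∈ P, z' (x' a) = x' (z a)) : Function.Commute x'.toPerm z'.toPerm := by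
  have hzx : ∀ a ∈ x.dom, z a ∈ x.dom := fun a =>
    (x.apply_mem_iff_of_commute z.involutive z.apply_center hxz).2
  refine x'.commute_of_forall_mem_dom z'.involutive (fun a ha => ?_) fun a ha => ?_ <;>
    obtain ha | ha | ha := (hx.mem_dom a).1 ha
  · rw [hz' a (hxD ha)]
    exact hx.le.1 (hzx a ha)
  · rw [hz' a (hPD ha)]
    exact hx.subset_dom (hPz a ha)
  · rw [← x'.involutive a, hconj _ ha, x'.apply_mem_iff]
    exact hx.subset_dom (hPz _ ha)
  · rw [hz' a (hxD ha), hx.le.2 (hzx a ha), hx.le.2 ha, hz' _ (hxD (x.apply_mem_iff.2 ha))]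
    exact hxz a
  · rw [hz' a (hPD ha), hconj a ha]
  · rw [hz' _ (hPD ha)]
    conv_lhs => rw [← x'.involutive a, hconj _ ha, x'.involutive]

theorem exists_le_commute (hh' : IsFlip v h') (hx : IsFarExtension h h' D x P x')
    (hxz : Function.Commute x.toPerm z.toPerm) (hzh : Function.Commute z.toPerm h')
    (hD : ∀ d ∈ D, h' d ∈ D) (hxD : x.dom ⊆ D) (hzD : z.dom ⊆ D) (hPD : P ⊆ D)
    (hPz : ∀ a ∈ P, z a ∈ P) (hvP : v ∉ P) :
    ∃ z' ≥ z, Function.Commute x'.toPerm z'.toPerm ∧ Function.Commute z'.toPerm h' := by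
  obtain ⟨z', hz', hconj, hconj', hne⟩ := hx.exists_le_conj_conj hh' hD hxz hzh hzD hPz hvP
  refine ⟨z', hz', hx.commute_of_conj hxz hxD hPD hPz (fun d hd => ?_) hconj, fun b => ?_⟩
  · exact hne d (fun a ha hxa => hx.notMem a ha (hxa ▸ hd))
      fun a ha hxa => hx.notMem a ha (hh'.involutive (x' a) ▸ hD _ (hxa ▸ hd))
  by_cases hb : ∃ a ∈ P, x' a = b
  · obtain ⟨a, ha, rfl⟩ := hb
    exact (hconj' a ha).trans (congrArg h' (hconj a ha).symm)
  by_cases hb' : ∃ a ∈ P, h' (x' a) = b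
  · obtain ⟨a, ha, rfl⟩ := hb'
    rw [hh'.involutive, hconj a ha, hconj' a ha, hh'.involutive]
  push Not at hb hb'
  rw [hne b hb hb', hne (h' b) (fun a ha hab => hb' a ha (hh'.involutive.eq_iff.2 hab))
    fun a ha hab => hb a ha (h'.injective hab)]
  exact hzh b

end IsFarExtension

end FarExtension

section PartialLink

variable {V : Type*} {G : SimpleGraph V} {n : ℕ} {v : V} {h h' : G ≃g G}

/-- A finite approximation of a path `h, x, z, h'` of flips at `v` in which consecutive flips
commute: `left` approximates `x`, and `right` approximates `z`. -/
structure PartialLink (h h' : G ≃g G) (v : V) where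
  left : PartialFlip G v
  right : PartialFlip G v
  commute_left : Function.Commute left.toPerm h
  commute : Function.Commute left.toPerm right.toPerm
  commute_right : Function.Commute right.toPerm h'

namespace PartialLink

instance : Preorder (PartialLink h h' v) :=
  Preorder.lift fun l => (l.left, l.right)

instance : Inhabited (PartialLink h h' v) where
  default :=
    { left := default
      right := default
      commute_left := fun _ => rfl
      commute := fun _ => rfl
      commute_right := fun _ => rfl }

/-- The reversed path. -/
def symm (l : PartialLink h h' v) : PartialLink h' h v :=
  ⟨l.right, l.left, l.commute_right, l.commute.symm, l.commute_left⟩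

theorem apply_mem_left_dom_iff (l : PartialLink h h' v) {p : V} :
    l.right p ∈ l.left.dom ↔ p ∈ l.left.dom :=
  l.left.apply_mem_iff_of_commute l.right.involutive l.right.apply_center l.commute

theorem exists_finset_invariant (l : PartialLink h h' v) (hh : IsFlip v h) {p : V}
    (hp : p ∉ l.left.dom) :
    ∃ P : Finset V, p ∈ P ∧ (∀ a ∈ P, a ∉ l.left.dom) ∧ (∀ a ∈ P, h a ∈ P) ∧
      ∀ a ∈ P, l.right a ∈ P := by
  classical
  obtain ⟨T, hT, hhT⟩ := exists_finset_superset_invariant hh.involutive (insert p l.right.dom)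
  obtain ⟨hpT, hzT⟩ := Finset.insert_subset_iff.1 hT
  refine ⟨T \ l.left.dom, Finset.mem_sdiff.2 ⟨hpT, hp⟩, fun a ha => (Finset.mem_sdiff.1 ha).2,
    fun a ha => ?_, fun a ha => ?_⟩ <;>
    rw [Finset.mem_sdiff] at ha ⊢
  · exact ⟨hhT a ha.1, mt (l.left.apply_mem_iff_of_commute hh.involutive hh.apply_center
      l.commute_left).1 ha.2⟩
  · refine ⟨?_, mt l.apply_mem_left_dom_iff.1 ha.2⟩
    by_cases haz : a ∈ l.right.dom
    · exact hzT (l.right.apply_mem_iff.2 haz)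
    · exact (l.right.apply_of_notMem a haz).symm ▸ ha.1

theorem isCofinal_mem_left_dom (hG : IsHenson G n) (hh : IsFlip v h) (hh' : IsFlip v h')
    (hgen : IsGeneric G n h h') (p : V) :
    IsCofinal {l : PartialLink h h' v | p ∈ l.left.dom} := by
  classical
  intro l
  by_cases hp : p ∈ l.left.dom
  · exact ⟨l, hp, le_rfl⟩
  obtain ⟨P, hpP, hPx, hhP, hzP⟩ := l.exists_finset_invariant hh hp
  obtain ⟨D, hD₀, hD⟩ := exists_finset_superset_invariant hh'.involutive
    (l.left.dom ∪ l.right.dom ∪ P)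
  simp only [Finset.union_subset_iff] at hD₀
  obtain ⟨⟨hxD, hzD⟩, hPD⟩ := hD₀
  obtain ⟨x, hx⟩ := IsFarExtension.exists_of_invariant hG hh hh' hgen l.commute_left hD hxD hPD
    hPx hhP
  obtain ⟨z, hz, hxz, hzh⟩ := hx.exists_le_commute hh' l.commute l.commute_right hD hxD hzD hPD
    hzP fun hv => hPx v hv l.left.center_mem
  exact ⟨⟨x, z, hx.commute, hxz, hzh⟩, hx.subset_dom hpP, hx.le, hz⟩

theorem isCofinal_mem_right_dom (hG : IsHenson G n) (hh : IsFlip v h) (hh' : IsFlip v h')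
    (hgen : IsGeneric G n h h') (p : V) :
    IsCofinal {l : PartialLink h h' v | p ∈ l.right.dom} := by
  intro l
  obtain ⟨l', hp, hl⟩ := isCofinal_mem_left_dom hG hh' hh hgen.symm p l.symm
  exact ⟨l'.symm, hp, hl.2, hl.1⟩

end PartialLink

theorem PartialFlip.eventually_apply_eq {k : ℕ → PartialFlip G v} (hk : Monotone k)
    (hcover : ∀ p, ∃ i, p ∈ (k i).dom) {f : V → V} (hf : ∀ i, Set.EqOn f (k i) (k i).dom) (p : V) :
    ∀ᶠ i in atTop, f p = k i p := by
  obtain ⟨i, hi⟩ := hcover p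
  exact eventually_atTop.2 ⟨i, fun j hj => hf j ((hk hj).1 hi)⟩

theorem IsHenson.exists_link [Countable V] (hG : IsHenson G n) (hh : IsFlip v h)
    (hh' : IsFlip v h') (hgen : IsGeneric G n h h') :
    ∃ x z : G ≃g G, IsFlip v x ∧ IsFlip v z ∧ Commute h x ∧ Commute x z ∧ Commute z h' := by
  obtain ⟨s, hs, hsD⟩ := exists_monotone_seq_mem (default : PartialLink h h' v)
    (D := Sum.elim (fun p : V => {l | p ∈ l.left.dom}) fun p : V => {l | p ∈ l.right.dom}) <| by
      rintro (p | p)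
      exacts [PartialLink.isCofinal_mem_left_dom hG hh hh' hgen p,
        PartialLink.isCofinal_mem_right_dom hG hh hh' hgen p]
  have hsx : Monotone fun i => (s i).left := fun i j hij => (hs hij).1
  have hsz : Monotone fun i => (s i).right := fun i j hij => (hs hij).2
  obtain ⟨x, hx, hxs⟩ := PartialFlip.exists_isFlip hsx fun p => hsD (.inl p)
  obtain ⟨z, hz, hzs⟩ := PartialFlip.exists_isFlip hsz fun p => hsD (.inr p)
  have hxs' := PartialFlip.eventually_apply_eq hsx (fun p => hsD (.inl p)) hxs
  have hzs' := PartialFlip.eventually_apply_eq hsz (fun p => hsD (.inr p)) hzs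
  refine ⟨x, z, hx, hz, RelIso.ext fun p => ?_, RelIso.ext fun p => ?_, RelIso.ext fun p => ?_⟩
  · obtain ⟨i, hp, hhp⟩ := ((hxs' p).and (hxs' (h p))).exists
    exact (congrArg h hp).trans (((s i).commute_left p).symm.trans hhp.symm)
  · obtain ⟨i, ⟨hp, hxzp⟩, hzp, hzxp⟩ :=
      (((hxs' p).and (hxs' (z p))).and ((hzs' p).and (hzs' (x p)))).exists
    calc x (z p) = (s i).left ((s i).right p) := by rw [hxzp, hzp]
      _ = (s i).right ((s i).left p) := (s i).commute p
      _ = z (x p) := by rw [hzxp, hp]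
  · obtain ⟨i, hp, hhp⟩ := ((hzs' p).and (hzs' (h' p))).exists
    exact hhp.trans (((s i).commute_right p).trans (congrArg h' hp.symm))

end PartialLink

/-! ### Automorphisms of the automorphism group -/

section LinkedSet

variable {Γ : Type*} [Group Γ]

/-- The conjugates of `h` by `a` and by `b` commute. -/
def ConjCommute (h a b : Γ) : Prop :=
  Commute (a * h * a⁻¹) (b * h * b⁻¹)

/-- The elements `u` for which the conjugate of `h` by `u` is reached from `h` by finitely many
steps between commuting conjugates of `h`. -/
def linkedSet (h : Γ) : Set Γ :=
  {u | Relation.ReflTransGen (ConjCommute h) 1 u}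

theorem map_mem_linkedSet {Δ : Type*} [Group Δ] (α : Γ →* Δ) {h u : Γ} (hu : u ∈ linkedSet h) :
    α u ∈ linkedSet (α h) := by
  have hα : Relation.ReflTransGen (ConjCommute (α h)) (α 1) (α u) :=
    Relation.ReflTransGen.lift α (fun a b (hab : Commute _ _) => by
      simpa only [ConjCommute, map_mul, map_inv] using hab.map α) _ _ hu
  rwa [map_one] at hα

theorem analyticSet_linkedSet [TopologicalSpace Γ] [IsTopologicalGroup Γ] [PolishSpace Γ] (h : Γ) :
    AnalyticSet (linkedSet h) := by
  refine analyticSet_setOf_reflTransGen (r := ConjCommute h) ?_ 1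
  simp only [ConjCommute, commute_iff_eq]
  exact isClosed_eq (by fun_prop) (by fun_prop)

theorem countable_quotient_comap_stabilizer {Δ X : Type*} [Group Δ] [MulAction Δ X] [Countable X]
    (f : Γ →* Δ) (x : X) : Countable (Γ ⧸ (MulAction.stabilizer Δ x).comap f) := by
  let _ := MulAction.compHom X f
  exact (MulAction.orbitEquivQuotientStabilizer Γ x).symm.injective.countable

end LinkedSet

section Automorphisms

variable {V : Type*} {G : SimpleGraph V} {n : ℕ} {v : V} {h h' : G ≃g G}

theorem IsFlip.conj (hh : IsFlip v h) (u : G ≃g G) : IsFlip (u v) (u * h * u⁻¹) := by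
  refine ⟨fun p => ?_, fun p => ?_, fun p => ?_⟩ <;> obtain ⟨p, rfl⟩ := u.surjective p <;>
    simp only [RelIso.mul_apply, RelIso.inv_apply_self]
  · rw [hh.involutive]
  · rw [u.injective.eq_iff, u.injective.eq_iff, hh.apply_eq_self_iff]
  · rw [u.map_adj_iff]
    exact hh.not_adj p

theorem IsFlip.eq_of_commute {w : V} (hh : IsFlip v h) (hh' : IsFlip w h') (hc : Commute h h') :
    v = w := by
  have hv : h (h' v) = h' v := (DFunLike.congr_fun hc.eq v).trans (congrArg h' hh.apply_center)
  rw [← hh'.apply_eq_self_iff, ← hh.apply_eq_self_iff, hv]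

namespace IsHenson

theorem reflTransGen_conjCommute [Countable V] (hG : IsHenson G n) (hh : IsFlip v h) {a b : G ≃g G}
    (ha : a v = v) (hb : b v = v) (hgen : IsGeneric G n (a * h * a⁻¹) (b * h * b⁻¹)) :
    Relation.ReflTransGen (ConjCommute h) a b := by
  have hconj : ∀ {u : G ≃g G}, u v = v → IsFlip v (u * h * u⁻¹) := fun {u} hu => by
    simpa only [hu] using hh.conj u
  obtain ⟨x, z, hx, hz, hax, hxz, hzb⟩ := hG.exists_link (hconj ha) (hconj hb) hgen
  obtain ⟨c, rfl⟩ := hG.exists_conj_of_isFlip hh hx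
  obtain ⟨d, rfl⟩ := hG.exists_conj_of_isFlip hh hz
  exact .head hax (.head hxz (.single hzb))

theorem linkedSet_eq_stabilizer [Countable V] (hG : IsHenson G n) (hh : IsFlip v h) :
    linkedSet h = MulAction.stabilizer (G ≃g G) v := by
  ext u
  refine ⟨fun hu => ?_, fun hu => ?_⟩
  · have hv : ∀ a, Relation.ReflTransGen (ConjCommute h) 1 a → a v = v := fun a ha => by
      induction ha with
      | refl => rfl
      | tail _ hab ih => rw [← (hh.conj _).eq_of_commute (hh.conj _) hab, ih]
    exact hv u hu
  · obtain ⟨k, hk, hgen⟩ := hG.exists_isFlip_isGeneric v fun b : Bool =>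
      if b then h else u * h * u⁻¹
    obtain ⟨c, rfl⟩ := hG.exists_conj_of_isFlip hh hk
    have hc : c v = v := (((hh.conj c).apply_eq_self_iff v).1 hk.apply_center).symm
    refine (hG.reflTransGen_conjCommute hh rfl hc ?_).trans
      (hG.reflTransGen_conjCommute hh hc hu (hgen false).symm)
    simpa using hgen true

theorem exists_fixingSubgroup_le_comap_stabilizer [Countable V] (hG : IsHenson G n)
    (α : MulAut (G ≃g G)) (v : V) :
    ∃ F : Finset V, fixingSubgroup (G ≃g G) (F : Set V) ≤
      (MulAction.stabilizer (G ≃g G) v).comap α.toMonoidHom := by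
  let _ : TopologicalSpace V := ⊥
  have : DiscreteTopology V := ⟨rfl⟩
  obtain ⟨h, hh, -⟩ := hG.exists_isFlip_isGeneric v (ι := Empty) nofun
  have hlinked : linkedSet (α.symm h) =
      ((MulAction.stabilizer (G ≃g G) v).comap α.toMonoidHom : Set (G ≃g G)) := by
    rw [Subgroup.coe_comap, ← hG.linkedSet_eq_stabilizer hh]
    ext g
    refine ⟨fun hg => ?_, fun hg => ?_⟩
    · simpa using map_mem_linkedSet α.toMonoidHom hg
    · simpa using map_mem_linkedSet α.symm.toMonoidHom hg
  have := countable_quotient_comap_stabilizer α.toMonoidHom v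
  exact exists_fixingSubgroup_le_of_isOpen
    (isOpen_of_analyticSet (hlinked ▸ analyticSet_linkedSet _))

theorem exists_fixingSubgroup_le_comap_fixingSubgroup [Countable V] (hG : IsHenson G n)
    (α : MulAut (G ≃g G)) (F : Finset V) :
    ∃ E : Finset V, fixingSubgroup (G ≃g G) (E : Set V) ≤
      (fixingSubgroup (G ≃g G) (F : Set V)).comap α.toMonoidHom := by
  classical
  choose E hE using hG.exists_fixingSubgroup_le_comap_stabilizer α
  refine ⟨F.biUnion E, fun g hg => (mem_fixingSubgroup_iff _).2 fun a ha => hE a ?_⟩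
  exact fixingSubgroup_antitone _ _ (Finset.coe_subset.2 (Finset.subset_biUnion_of_mem E ha)) hg

theorem eq_of_stabilizer_le (hG : IsHenson G n) {w : V}
    (hle : MulAction.stabilizer (G ≃g G) v ≤ MulAction.stabilizer (G ≃g G) w) : w = v := by
  obtain ⟨k, hkv, hkw⟩ := hG.exists_fixing_free_move {v} {w} {w}
  by_contra hwv
  have hk : k ∈ MulAction.stabilizer (G ≃g G) v := (mem_fixingSubgroup_iff _).1 hkv v (by simp)
  exact (hkw w (by simp) (by simpa using hwv)).1 (by simpa using hle hk)

/-- A finite support of minimal size is canonical, because supports are closed under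
intersection. -/
theorem exists_fixingSubgroup_le_and_normalizer_le (hG : IsHenson G n) {H : Subgroup (G ≃g G)}
    {F₀ : Finset V} (hF₀ : fixingSubgroup (G ≃g G) (F₀ : Set V) ≤ H) :
    ∃ F : Finset V, fixingSubgroup (G ≃g G) (F : Set V) ≤ H ∧
      Subgroup.normalizer (H : Set (G ≃g G)) ≤ MulAction.stabilizer (G ≃g G) (F : Set V) := by
  classical
  obtain ⟨F, hF, hmin⟩ := exists_minimalFor_of_wellFoundedLT
    (fun F : Finset V => fixingSubgroup (G ≃g G) (F : Set V) ≤ H) Finset.card ⟨F₀, hF₀⟩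
  refine ⟨F, hF, fun t ht => ?_⟩
  have hinter : fixingSubgroup (G ≃g G) ((F ∩ t • F : Finset V) : Set V) ≤ H := by
    refine (hG.fixingSubgroup_inter_le F (t • F)).trans (sup_le hF ?_)
    rw [Finset.coe_smul_finset]
    exact fixingSubgroup_smul_le ht hF
  have hcard : F.card ≤ (F ∩ t • F).card :=
    hmin hinter (Finset.card_le_card Finset.inter_subset_left)
  rw [MulAction.stabilizer_coe_finset, MulAction.mem_stabilizer_finset_iff_subset_smul_finset]
  exact Finset.inter_eq_left.1 (Finset.eq_of_subset_of_card_le Finset.inter_subset_left hcard)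

theorem subset_singleton_of_stabilizer_le (hG : IsHenson G n) {F : Finset V}
    (hF : MulAction.stabilizer (G ≃g G) v ≤ MulAction.stabilizer (G ≃g G) (F : Set V)) :
    (F : Set V) ⊆ {v} := by
  intro a ha
  by_contra hav
  obtain ⟨t, htv, htF⟩ := hG.exists_fixing_free_move {v} F F
  have ht : t ∈ MulAction.stabilizer (G ≃g G) v := (mem_fixingSubgroup_iff _).1 htv v (by simp)
  have htF' : t • (F : Set V) = F := hF ht
  exact (htF a ha (by simpa using hav)).1 (htF'.le (Set.smul_mem_smul_set ha))

theorem stabilizer_ne_top (hG : IsHenson G n) (v : V) : MulAction.stabilizer (G ≃g G) v ≠ ⊤ := by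
  intro htop
  obtain ⟨k, -, hk⟩ := hG.exists_fixing_free_move ∅ {v} {v}
  have hkv : k ∈ MulAction.stabilizer (G ≃g G) v := htop ▸ Subgroup.mem_top k
  exact (hk v (by simp) (by simp)).1 (by simpa using hkv)

theorem exists_stabilizer_le_comap [Countable V] (hG : IsHenson G n) (α : MulAut (G ≃g G))
    (v : V) : ∃ w : V, MulAction.stabilizer (G ≃g G) v ≤
      (MulAction.stabilizer (G ≃g G) w).comap α.toMonoidHom := by
  classical
  set S := MulAction.stabilizer (G ≃g G) v
  let H := S.comap α.symm.toMonoidHom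
  obtain ⟨F₀, hF₀⟩ := hG.exists_fixingSubgroup_le_comap_stabilizer α.symm v
  obtain ⟨F, hF, hHF⟩ := hG.exists_fixingSubgroup_le_and_normalizer_le hF₀
  have hSH : S ≤ H.comap α.toMonoidHom := fun g hg => by simpa [H] using hg
  obtain ⟨w, hw⟩ : F.Nonempty := by
    rw [Finset.nonempty_iff_ne_empty]
    rintro rfl
    refine hG.stabilizer_ne_top v (eq_top_iff.2 fun g _ => ?_)
    simpa [H] using hF (x := α g) ((mem_fixingSubgroup_iff _).2 (by simp))
  let K := S ⊓ (fixingSubgroup (G ≃g G) (F : Set V)).comap α.toMonoidHom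
  have hSK : S ≤ Subgroup.normalizer (K : Set (G ≃g G)) := by
    refine (le_inf S.le_normalizer ?_).trans Subgroup.inf_normalizer_le_normalizer_inf
    refine le_trans (hSH.trans ?_) (Subgroup.le_normalizer_comap _)
    exact Subgroup.comap_mono ((H.le_normalizer.trans hHF).trans
      (stabilizer_le_normalizer_fixingSubgroup _))
  obtain ⟨E₀, hE₀⟩ := hG.exists_fixingSubgroup_le_comap_fixingSubgroup α F
  obtain ⟨E, hE, hKE⟩ := hG.exists_fixingSubgroup_le_and_normalizer_le (H := K)
    (F₀ := insert v E₀) (le_inf (fun g hg => (mem_fixingSubgroup_iff _).1 hg v (by simp))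
      ((fixingSubgroup_antitone _ _ (by simp)).trans hE₀))
  have hSE : S ≤ fixingSubgroup (G ≃g G) (E : Set V) := fun g hg =>
    (mem_fixingSubgroup_iff _).2 fun a ha =>
      (hG.subset_singleton_of_stabilizer_le (hSK.trans hKE) ha) ▸ hg
  refine ⟨w, fun g hg => ?_⟩
  exact (mem_fixingSubgroup_iff _).1 (hE (hSE hg)).2 w hw

theorem exists_comap_stabilizer_eq [Countable V] (hG : IsHenson G n) (α : MulAut (G ≃g G))
    (v : V) : ∃ w : V, (MulAction.stabilizer (G ≃g G) w).comap α.toMonoidHom =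
      MulAction.stabilizer (G ≃g G) v := by
  obtain ⟨w, hw⟩ := hG.exists_stabilizer_le_comap α v
  obtain ⟨v', hv'⟩ := hG.exists_stabilizer_le_comap α.symm w
  have hle : (MulAction.stabilizer (G ≃g G) w).comap α.toMonoidHom ≤
      MulAction.stabilizer (G ≃g G) v' := fun g hg => by simpa using hv' hg
  obtain rfl := hG.eq_of_stabilizer_le (hw.trans hle)
  exact ⟨w, le_antisymm hle hw⟩

theorem exists_perm_equivariant [Countable V] (hG : IsHenson G n) (α : MulAut (G ≃g G)) :
    ∃ σ : Equiv.Perm V, ∀ (g : G ≃g G) v, σ (g v) = α g (σ v) := by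
  choose σ hσ using hG.exists_comap_stabilizer_eq α
  have hfix : ∀ (g : G ≃g G) v, α g (σ v) = σ v ↔ g v = v := fun g v => SetLike.ext_iff.1 (hσ v) g
  have hinj : Function.Injective σ := fun v w hvw =>
    hG.eq_of_stabilizer_le fun g hg => (hfix g v).1 (hvw ▸ (hfix g w).2 hg)
  have hsurj : Function.Surjective σ := fun w => by
    obtain ⟨v, hv⟩ := hG.exists_comap_stabilizer_eq α.symm w
    refine ⟨v, hG.eq_of_stabilizer_le fun g hg => ?_⟩
    rw [← hv] at hg
    simpa using (hfix (α.symm g) v).2 hg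
  refine ⟨Equiv.ofBijective σ ⟨hinj, hsurj⟩, fun g v => hG.eq_of_stabilizer_le fun k hk => ?_⟩
  obtain ⟨k, rfl⟩ := α.surjective k
  have hgk : (g⁻¹ * k * g) v = v := (hfix _ v).1 <| by
    rw [map_mul, map_mul, map_inv]
    exact (congrArg (α g).symm hk).trans ((α g).symm_apply_apply (σ v))
  exact (hfix k (g v)).2 ((g.symm_apply_eq).1 hgk)

theorem exists_isNIndepSet (hG : IsHenson G n) (hn : n ≠ 0) (k : ℕ) :
    ∃ t, G.IsNIndepSet k t := by
  classical
  induction k with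
  | zero => exact ⟨∅, by simp [SimpleGraph.isNIndepSet_iff]⟩
  | succ k ih =>
    obtain ⟨t, ht⟩ := ih
    obtain ⟨q, -, hqt, hq⟩ := hG.isExtensionDense t ∅ (G.cliqueFreeOn_empty.2 hn)
    rw [← SimpleGraph.isNClique_compl] at ht
    exact ⟨insert q t, G.isNClique_compl.1 <| ht.insert fun b hb =>
      ⟨(ne_of_mem_of_not_mem hb hqt).symm, (hq b hb).not.2 (Set.notMem_empty b)⟩⟩

theorem exists_aut_apply_eq_of_not_adj (hG : IsHenson G n) {a b c d : V} (hab : a ≠ b)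
    (hcd : c ≠ d) (hab' : ¬ G.Adj a b) (hcd' : ¬ G.Adj c d) :
    ∃ φ : G ≃g G, φ a = c ∧ φ b = d := by
  classical
  obtain ⟨φ, hφ⟩ := hG.exists_aut {b} (fun _ => d) ⟨by simp, by simp⟩
  have hφb : φ b = d := hφ (by simp)
  obtain ⟨ψ, hψa, hψ⟩ := hG.exists_aut_insert φ (S := {b}) (p := a) (q := c) (by simpa using hab)
    (by simpa [hφb] using hcd) (by simp [hφb, hab', hcd'])
  exact ⟨ψ, hψa, (hψ b (by simp)).trans hφb⟩

/-- Otherwise `σ` would map the nonadjacent pairs to adjacent pairs, hence a large independent set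
to a large clique. -/
theorem adj_of_adj_map (hG : IsHenson G n) {α : (G ≃g G) → (G ≃g G)} {σ : Equiv.Perm V}
    (hσ : ∀ (g : G ≃g G) v, σ (g v) = α g (σ v)) {v w : V} (hadj : G.Adj (σ v) (σ w)) :
    G.Adj v w := by
  classical
  by_contra hvw
  obtain ⟨t, ht⟩ := hG.exists_isNIndepSet (hG.ne_zero v) (n + 1)
  refine hG.cliqueFree (t.image σ) ⟨?_, ?_⟩
  · rw [Finset.coe_image]
    rintro _ ⟨a, ha, rfl⟩ _ ⟨b, hb, rfl⟩ hab
    have hab' : a ≠ b := fun h => hab (congrArg σ h)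
    obtain ⟨φ, rfl, rfl⟩ := hG.exists_aut_apply_eq_of_not_adj (fun h => hadj.ne (congrArg σ h)) hab'
      hvw (ht.isIndepSet ha hb hab')
    rwa [hσ, hσ, (α φ).map_adj_iff]
  · rw [Finset.card_image_of_injective _ σ.injective, ht.card_eq]

theorem exists_eq_conj [Countable V] (hG : IsHenson G n) (α : MulAut (G ≃g G)) :
    ∃ g, α = MulAut.conj g := by
  obtain ⟨σ, hσ⟩ := hG.exists_perm_equivariant α
  have hσ' : ∀ (g : G ≃g G) v, σ.symm (g v) = α.symm g (σ.symm v) := fun g v => by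
    rw [Equiv.symm_apply_eq, hσ, MulEquiv.apply_symm_apply, Equiv.apply_symm_apply]
  let s : G ≃g G := ⟨σ, fun {a b} => ⟨hG.adj_of_adj_map hσ, fun hab =>
    hG.adj_of_adj_map hσ' (by simpa using hab)⟩⟩
  refine ⟨s, MulEquiv.ext fun g => ?_⟩
  rw [MulAut.conj_apply, eq_mul_inv_iff_mul_eq]
  exact RelIso.ext fun v => (hσ g v).symm

end IsHenson

/-- The case `m = 2` is the theorem that the symmetric group of a countably infinite set has no
outer automorphisms. -/
theorem stmt_6_general (m : ℕ) (V : Type*) [Countable V] (G : SimpleGraph V)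
    (hfree : G.CliqueFree m)
    (hhom : ∀ S T : Set V, S.Finite → T.Finite →
      ∀ e : G.induce S ≃g G.induce T, ∃ φ : G ≃g G, ∀ a : S, φ a = (e a : V))
    (huniv : ∀ (W : Type) (_ : Fintype W) (H : SimpleGraph W),
      H.CliqueFree m → Nonempty (H ↪g G)) :
    ∀ α : MulAut (G ≃g G), ∃ g : G ≃g G, α = MulAut.conj g := by
  obtain _ | n := m
  · exact absurd hfree (by simp)
  · exact (isHenson_of_homogeneous_of_universal hfree hhom huniv).exists_eq_conj

end Automorphisms

/-- For `m ≥ 3`, the `K_m`-free random graph `R(K_m)` (the Henson graph,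
i.e. the countable universal homogeneous `K_m`-free graph) satisfies
`Out(Aut(R(K_m))) ≅ {e}`: every abstract group automorphism of its automorphism group
is inner. -/
theorem stmt_6 (m : ℕ) (hm : 3 ≤ m) (V : Type*) [Countable V] [Infinite V]
    (G : SimpleGraph V) (hfree : G.CliqueFree m)
    (hhom : ∀ S T : Set V, S.Finite → T.Finite →
      ∀ e : G.induce S ≃g G.induce T, ∃ φ : G ≃g G, ∀ a : S, φ a = (e a : V))
    (huniv : ∀ (W : Type) (_ : Fintype W) (H : SimpleGraph W),
      H.CliqueFree m → Nonempty (H ↪g G)) :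
    ∀ α : MulAut (G ≃g G), ∃ g : G ≃g G, α = MulAut.conj g :=
  stmt_6_general m V G hfree hhom huniv
end

section
/- For k ≥ 2, the k-colored random graph R_k satisfies Out(Aut(R_k)) ≅ Sym(k), the symmetric group on the k colors. -/
/-- The automorphism group of an edge-colored complete graph `(V, c)`: permutations of the
vertices preserving the color of every edge. -/
def ColoredGraph.aut {V : Type*} {k : ℕ} (c : V → V → Fin k) : Subgroup (Equiv.Perm V) where
  carrier := {σ | ∀ u v : V, u ≠ v → c (σ u) (σ v) = c u v}
  one_mem' := by intro u v _; simp
  mul_mem' := by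
    intro σ τ hσ hτ u v huv
    have h1 : τ u ≠ τ v := fun h => huv (τ.injective h)
    have := hσ (τ u) (τ v) h1
    simpa [this] using hτ u v huv
  inv_mem' := by
    intro σ hσ u v huv
    have h1 : σ⁻¹ u ≠ σ⁻¹ v := fun h => huv (σ⁻¹.injective h)
    have := hσ (σ⁻¹ u) (σ⁻¹ v) h1
    simpa using this.symm

/-!
A random coloring has the extension property for finite partial isomorphisms, so by back-and-forth
it is homogeneous and isomorphic to each of its recolorings by a permutation of the colors; thus
every permutation `π` of the colors is induced by a permutation `σ` of the vertices, and conjugation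
by `σ` is an automorphism of `aut c`. It is inner exactly when `π` is trivial.

Conversely, every automorphism of `aut c` arises in this way. Finite colorings have the extension
property for partial automorphisms, and they amalgamate. So over a generic tuple of automorphisms a
comeager set of further ones is generic, and a Baire category argument gives the small index
property: a subgroup of countable index contains the pointwise stabilizer of a finite set. As a
subgroup containing the pointwise stabilizers of finite sets `A` and `B` contains that of `A ∩ B`,
there is a least such set, the support of the subgroup, and it is invariant. The stabilizer of a
point moves every other point to infinitely many, so comparing supports shows that an automorphism
of `aut c` permutes the point stabilizers. It is therefore conjugation by a permutation of the
vertices, which permutes the colors because they are the orbits on pairs of distinct vertices.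
-/

namespace ColoredGraph

open scoped Pointwise

section BackAndForth

variable {V W P κ : Type*} [Countable V] [Countable W] [Countable κ] [Preorder P]

theorem exists_equiv_of_cofinal {graph : P → Set (W × V)} (hmono : Monotone graph)
    (hgraph : ∀ p, ∀ a ∈ graph p, ∀ b ∈ graph p, a.1 = b.1 ↔ a.2 = b.2)
    (hfst : ∀ w, IsCofinal {p | ∃ v, (w, v) ∈ graph p})
    (hsnd : ∀ v, IsCofinal {p | ∃ w, (w, v) ∈ graph p})
    {D : κ → Set P} (hD : ∀ i, IsCofinal (D i)) (p₀ : P) :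
    ∃ (e : W ≃ V) (I : Order.Ideal P), p₀ ∈ I ∧
      (∀ w v, e w = v ↔ ∃ p ∈ I, (w, v) ∈ graph p) ∧ ∀ i, ∃ p ∈ I, p ∈ D i := by
  have := Encodable.ofCountable (W ⊕ V ⊕ κ)
  let 𝒟 : W ⊕ V ⊕ κ → Order.Cofinal P :=
    Sum.elim (fun w => ⟨_, hfst w⟩) (Sum.elim (fun v => ⟨_, hsnd v⟩) fun i => ⟨_, hD i⟩)
  let I := Order.idealOfCofinals p₀ 𝒟
  have hbij : ∀ p ∈ I, ∀ q ∈ I, ∀ a ∈ graph p, ∀ b ∈ graph q, a.1 = b.1 ↔ a.2 = b.2 := by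
    intro p hp q hq a ha b hb
    obtain ⟨r, -, hpr, hqr⟩ := I.directed p hp q hq
    exact hgraph r a (hmono hpr ha) b (hmono hqr hb)
  have hmeet := Order.cofinal_meets_idealOfCofinals p₀ 𝒟
  choose p hp hpI using fun w => hmeet (Sum.inl w)
  choose q hq hqI using fun v => hmeet (Sum.inr (Sum.inl v))
  choose f hf using hp
  choose g hg using hq
  let e : W ≃ V :=
    { toFun := f
      invFun := g
      left_inv := fun w => (hbij _ (hqI _) _ (hpI w) _ (hg (f w)) _ (hf w)).2 rfl
      right_inv := fun v => (hbij _ (hpI _) _ (hqI v) _ (hf (g v)) _ (hg v)).1 rfl }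
  refine ⟨e, I, Order.mem_idealOfCofinals p₀ 𝒟, fun w v => ⟨?_, ?_⟩, fun i => ?_⟩
  · rintro rfl
    exact ⟨p w, hpI w, hf w⟩
  · rintro ⟨r, hr, hwv⟩
    exact (hbij _ (hpI w) r hr _ (hf w) _ hwv).1 rfl
  · obtain ⟨r, hr, hrI⟩ := hmeet (Sum.inr (Sum.inr i))
    exact ⟨r, hrI, hr⟩

end BackAndForth

section PartialIso

variable {V W K : Type*} {c : V → V → K} {d : W → W → K} {p q : Set (W × V)}

/-- The relation `p` is (the graph of) an isomorphism between edge-colored complete graphs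
induced by `d` and by `c`. -/
def IsPartialIso (d : W → W → K) (c : V → V → K) (p : Set (W × V)) : Prop :=
  ∀ a ∈ p, ∀ b ∈ p, (a.1 = b.1 ↔ a.2 = b.2) ∧ (a.1 ≠ b.1 → d a.1 b.1 = c a.2 b.2)

theorem IsPartialIso.mono (hq : IsPartialIso d c q) (hpq : p ⊆ q) : IsPartialIso d c p :=
  fun a ha b hb => hq a (hpq ha) b (hpq hb)

theorem IsPartialIso.swap (hp : IsPartialIso d c p) : IsPartialIso c d (Prod.swap ⁻¹' p) :=
  fun _ ha _ hb => ⟨(hp _ ha _ hb).1.symm,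
    fun h => ((hp _ ha _ hb).2 ((hp _ ha _ hb).1.not.2 h)).symm⟩

theorem IsPartialIso.union (hd : ∀ x y, d x y = d y x) (hc : ∀ x y, c x y = c y x)
    (hp : IsPartialIso d c p) (hq : IsPartialIso d c q)
    (h : ∀ a ∈ p, ∀ b ∈ q, (a.1 = b.1 ↔ a.2 = b.2) ∧ (a.1 ≠ b.1 → d a.1 b.1 = c a.2 b.2)) :
    IsPartialIso d c (p ∪ q) := by
  rintro a (ha | ha) b (hb | hb)
  · exact hp a ha b hb
  · exact h a ha b hb
  · obtain ⟨h₁, h₂⟩ := h b hb a ha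
    exact ⟨by rw [eq_comm, h₁, eq_comm], fun hab => by rw [hd, hc, h₂ hab.symm]⟩
  · exact hq a ha b hb

theorem IsPartialIso.insert (hd : ∀ x y, d x y = d y x) (hc : ∀ x y, c x y = c y x)
    (hp : IsPartialIso d c p) {w : W} {v : V}
    (h : ∀ a ∈ p, w ≠ a.1 ∧ v ≠ a.2 ∧ d w a.1 = c v a.2) :
    IsPartialIso d c (insert (w, v) p) := by
  rw [Set.insert_eq]
  refine IsPartialIso.union hd hc (by simp [IsPartialIso]) hp ?_
  rintro _ rfl a ha
  obtain ⟨h₁, h₂, h₃⟩ := h a ha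
  exact ⟨iff_of_false h₁ h₂, fun _ => h₃⟩

end PartialIso

/-- An edge coloring of a complete graph is random if it is symmetric and every finite set of
vertices has an outside vertex joined to it in any prescribed way. The values on the diagonal are
irrelevant. -/
structure IsRandom {V K : Type*} (c : V → V → K) : Prop where
  symm : ∀ u v, c u v = c v u
  ext : ∀ s : Set V, s.Finite → ∀ τ : V → K, ∃ z ∉ s, ∀ x ∈ s, c z x = τ x

namespace IsRandom

variable {V W K : Type*} {c : V → V → K} {d : W → W → K} {p : Set (W × V)}

theorem exists_isPartialIso_insert (hc : IsRandom c) (hd : ∀ x y, d x y = d y x)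
    (hfin : p.Finite) (hp : IsPartialIso d c p) (w : W) :
    ∃ v, IsPartialIso d c (insert (w, v) p) := by
  by_cases hw : ∃ v, (w, v) ∈ p
  · obtain ⟨v, hv⟩ := hw
    exact ⟨v, by rwa [Set.insert_eq_of_mem hv]⟩
  have hinj : Function.Injective fun a : p => a.1.2 := fun a b hab =>
    Subtype.ext (Prod.ext ((hp a a.2 b b.2).1.2 hab) hab)
  obtain ⟨v, hv, hvτ⟩ := hc.ext (Prod.snd '' p) (hfin.image _)
    (Function.extend (fun a : p => a.1.2) (fun a => d w a.1.1) fun _ => d w w)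
  refine ⟨v, hp.insert hd hc.symm fun a ha => ⟨?_, ?_, ?_⟩⟩
  · rintro rfl
    exact hw ⟨a.2, ha⟩
  · rintro rfl
    exact hv ⟨a, ha, rfl⟩
  · rw [hvτ a.2 ⟨a, ha, rfl⟩]
    exact (hinj.extend_apply (fun a => d w a.1.1) _ ⟨a, ha⟩).symm

theorem exists_embedding [Finite W] (hc : IsRandom c) (hd : ∀ x y, d x y = d y x)
    (hp : IsPartialIso d c p) :
    ∃ f : W → V, Function.Injective f ∧ (∀ x y, x ≠ y → c (f x) (f y) = d x y) ∧
      ∀ a ∈ p, f a.1 = a.2 := by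
  have key : ∀ s : Set W, ∃ q : Set (W × V), p ⊆ q ∧ q.Finite ∧ IsPartialIso d c q ∧
      ∀ w ∈ s, ∃ v, (w, v) ∈ q := by
    intro s
    induction s, s.toFinite using Set.Finite.induction_on with
    | empty =>
      have hinj : Set.InjOn Prod.fst p := fun a ha b hb hab =>
        Prod.ext hab ((hp a ha b hb).1.1 hab)
      exact ⟨p, subset_rfl, (Set.toFinite _).of_finite_image hinj, hp, nofun⟩
    | @insert w s _ _ ih =>
      obtain ⟨q, hpq, hfin, hq, hs⟩ := ih
      obtain ⟨v, hv⟩ := hc.exists_isPartialIso_insert hd hfin hq w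
      refine ⟨insert (w, v) q, hpq.trans (Set.subset_insert _ _), hfin.insert _, hv, ?_⟩
      rintro u (rfl | hu)
      · exact ⟨v, Set.mem_insert _ _⟩
      · exact (hs u hu).imp fun _ h => Set.mem_insert_of_mem _ h
  obtain ⟨q, hpq, -, hq, hall⟩ := key Set.univ
  choose f hf using fun w => hall w (Set.mem_univ w)
  exact ⟨f, fun x y h => (hq _ (hf x) _ (hf y)).1.2 h,
    fun x y h => ((hq _ (hf x) _ (hf y)).2 h).symm, fun a ha => (hq _ (hf _) a (hpq ha)).1.1 rfl⟩

theorem exists_equiv [Countable V] [Countable W] (hd : IsRandom d) (hc : IsRandom c)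
    (hfin : p.Finite) (hp : IsPartialIso d c p) :
    ∃ e : W ≃ V, (∀ u v, u ≠ v → c (e u) (e v) = d u v) ∧ ∀ a ∈ p, e a.1 = a.2 := by
  obtain ⟨e, I, hI, he, -⟩ := exists_equiv_of_cofinal
    (P := {q : Set (W × V) // q.Finite ∧ IsPartialIso d c q}) (κ := Empty) (D := Empty.elim)
    (Subtype.mono_coe _) (fun q a ha b hb => (q.2.2 a ha b hb).1)
    (fun w q => by
      obtain ⟨v, hv⟩ := hc.exists_isPartialIso_insert hd.symm q.2.1 q.2.2 w
      exact ⟨⟨_, q.2.1.insert _, hv⟩, ⟨_, Set.mem_insert _ _⟩, Set.subset_insert _ _⟩)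
    (fun v q => by
      obtain ⟨w, hw⟩ := hd.exists_isPartialIso_insert hc.symm
        (q.2.1.preimage Prod.swap_injective.injOn) q.2.2.swap v
      have hwv : IsPartialIso d c (insert (w, v) q) := hw.swap.mono (by
        rintro a (rfl | ha)
        exacts [Or.inl rfl, Or.inr ha])
      exact ⟨⟨_, q.2.1.insert _, hwv⟩, ⟨_, Set.mem_insert _ _⟩, Set.subset_insert _ _⟩)
    (fun i => i.elim) ⟨p, hfin, hp⟩
  refine ⟨e, fun u v huv => ?_, fun a ha => (he _ _).2 ⟨_, hI, ha⟩⟩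
  obtain ⟨q, hq, hu⟩ := (he u _).1 rfl
  obtain ⟨r, hr, hv⟩ := (he v _).1 rfl
  obtain ⟨s, -, hqs, hrs⟩ := I.directed q hq r hr
  exact ((s.2.2 _ (hqs hu) _ (hrs hv)).2 huv).symm

end IsRandom

section Aut

variable {V : Type*} {k : ℕ} {c : V → V → Fin k}

theorem color_smul_smul (g : aut c) {u v : V} (huv : u ≠ v) : c (g • u) (g • v) = c u v :=
  g.2 u v huv

theorem aut_ext {g h : aut c} (hgh : ∀ v : V, g • v = h • v) : g = h :=
  Subtype.ext (Equiv.ext hgh)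

theorem isPartialIso_smul (g : aut c) (s : Set V) :
    IsPartialIso c c ((fun x => (x, g • x)) '' s) := by
  rintro _ ⟨x, -, rfl⟩ _ ⟨y, -, rfl⟩
  exact ⟨(smul_left_cancel_iff g).symm, fun h => (color_smul_smul g h).symm⟩

theorem isRandom_of_homogeneous_of_universal [NeZero k] (hsymm : ∀ u v : V, c u v = c v u)
    (hhom : ∀ S T : Set V, S.Finite → T.Finite → ∀ e : S ≃ T,
      (∀ u v : S, u ≠ v → c (e u : V) (e v : V) = c (u : V) (v : V)) →
        ∃ σ ∈ aut c, ∀ a : S, σ (a : V) = (e a : V))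
    (huniv : ∀ (W : Type) (_ : Fintype W) (d : W → W → Fin k),
      (∀ u v : W, d u v = d v u) →
        ∃ f : W ↪ V, ∀ u v : W, u ≠ v → c (f u) (f v) = d u v) : IsRandom c := by
  refine ⟨hsymm, fun s hs τ => ?_⟩
  have := hs.to_subtype
  obtain ⟨n, ⟨i⟩⟩ := Finite.exists_equiv_fin s
  let d : Option (Fin n) → Option (Fin n) → Fin k
    | none, none => 0
    | none, some b => τ (i.symm b)
    | some a, none => τ (i.symm a)
    | some a, some b => c (i.symm a) (i.symm b)
  obtain ⟨f, hf⟩ := huniv (Option (Fin n)) inferInstance d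
    (by rintro (_ | a) (_ | b) <;> simp [d, hsymm])
  have hinj : Function.Injective fun x : s => f (some (i x)) :=
    f.injective.comp ((Option.some_injective _).comp i.injective)
  obtain ⟨σ, hσ, hσf⟩ := hhom s _ hs (Set.finite_range _) (Equiv.ofInjective _ hinj)
    fun u v huv => by
      simp only [Equiv.ofInjective_apply]
      rw [hf _ _ (by simpa using huv)]
      simp [d]
  have hz (x : s) : σ⁻¹ (f none) ≠ x ∧ c (σ⁻¹ (f none)) x = τ x := by
    have hne : f none ≠ f (some (i x)) := f.injective.ne (by simp)
    have hx : σ⁻¹ (f (some (i x))) = x := by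
      rw [Equiv.Perm.inv_eq_iff_eq]
      exact (hσf x).symm
    rw [← hx, (σ⁻¹).injective.ne_iff, (aut c).inv_mem hσ _ _ hne, hf _ _ (by simp), hx]
    exact ⟨hne, by simp [d]⟩
  exact ⟨σ⁻¹ (f none), fun h => (hz ⟨_, h⟩).1 rfl, fun x hx => (hz ⟨x, hx⟩).2⟩

namespace IsRandom

theorem exists_smul_eq [Countable V] (hc : IsRandom c) {p : Set (V × V)} (hfin : p.Finite)
    (hp : IsPartialIso c c p) : ∃ σ : aut c, ∀ a ∈ p, σ • a.1 = a.2 := by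
  obtain ⟨e, he, hep⟩ := exists_equiv hc hc hfin hp
  exact ⟨⟨e, he⟩, hep⟩

variable [Countable V] {A B S T X : Set V} {u v : aut c}

theorem exists_smul_eq_union (hc : IsRandom c) (hS : S.Finite) (hT : T.Finite)
    (heq : ∀ x ∈ S ∩ T, u • x = v • x)
    (h : ∀ x ∈ S \ T, ∀ y ∈ T \ S, u • x ≠ v • y ∧ c (u • x) (v • y) = c x y) :
    ∃ σ : aut c, (∀ x ∈ S, σ • x = u • x) ∧ ∀ x ∈ T, σ • x = v • x := by
  obtain ⟨σ, hσ⟩ := hc.exists_smul_eq ((hS.image _).union (hT.image _)) <|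
    (isPartialIso_smul u S).union hc.symm hc.symm (isPartialIso_smul v T) (by
      rintro _ ⟨x, hx, rfl⟩ _ ⟨y, hy, rfl⟩
      dsimp only
      by_cases hxT : x ∈ T
      · rw [heq x ⟨hx, hxT⟩, smul_left_cancel_iff]
        exact ⟨Iff.rfl, fun hxy => (color_smul_smul v hxy).symm⟩
      by_cases hyS : y ∈ S
      · rw [← heq y ⟨hyS, hy⟩, smul_left_cancel_iff]
        exact ⟨Iff.rfl, fun hxy => (color_smul_smul u hxy).symm⟩
      · obtain ⟨h₁, h₂⟩ := h x ⟨hx, hxT⟩ y ⟨hy, hyS⟩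
        exact ⟨iff_of_false (fun hxy => hxT (hxy ▸ hy)) h₁, fun _ => h₂.symm⟩)
  exact ⟨σ, fun x hx => hσ _ (Or.inl ⟨x, hx, rfl⟩), fun x hx => hσ _ (Or.inr ⟨x, hx, rfl⟩)⟩

theorem exists_mem_fixingSubgroup_color (hc : IsRandom c) (hX : X.Finite) (hAX : A ⊆ X)
    (hB : B.Finite) (τ : V → V → Fin k) (hτ : ∀ a ∈ A, ∀ b ∈ B \ A, τ a b = c a b) :
    ∃ σ ∈ fixingSubgroup (aut c) A, ∀ b ∈ B \ A, σ • b ∉ X ∧ ∀ x ∈ X, c x (σ • b) = τ x b := by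
  classical
  induction B, hB using Set.Finite.induction_on with
  | empty => exact ⟨1, one_mem _, by simp⟩
  | @insert b B _ hB ih =>
    obtain ⟨σ, hσ, hσB⟩ := ih fun a ha b hb => hτ a ha b ⟨Or.inr hb.1, hb.2⟩
    by_cases hb : b ∈ A ∪ B
    · refine ⟨σ, hσ, ?_⟩
      rintro y ⟨rfl | hy, hyA⟩
      exacts [hσB y ⟨hb.resolve_left hyA, hyA⟩, hσB y ⟨hy, hyA⟩]
    have hAB : (A ∪ B).Finite := (hX.subset hAX).union hB
    obtain ⟨z, hz, hzτ⟩ := hc.ext (X ∪ σ • (A ∪ B)) (hX.union (hAB.smul_set))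
      fun x => if x ∈ X then τ x b else c b (σ⁻¹ • x)
    obtain ⟨ρ, hρ⟩ := hc.exists_smul_eq ((hAB.image _).insert _) <|
      (isPartialIso_smul σ (A ∪ B)).insert hc.symm hc.symm (w := b) (v := z) (by
        rintro _ ⟨y, hy, rfl⟩
        refine ⟨fun h => hb (h ▸ hy), fun h => hz (Or.inr ⟨y, hy, h.symm⟩), ?_⟩
        dsimp only
        rw [hzτ _ (Or.inr (Set.smul_mem_smul_set hy))]
        by_cases hyA : y ∈ A
        · rw [(mem_fixingSubgroup_iff _).1 hσ y hyA, if_pos (hAX hyA),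
            hτ y hyA b ⟨Or.inl rfl, fun h => hb (Or.inl h)⟩, hc.symm]
        · rw [if_neg (hσB y ⟨hy.resolve_left hyA, hyA⟩).1, inv_smul_smul])
    have hρσ : ∀ y ∈ A ∪ B, ρ • y = σ • y := fun y hy => hρ _ (Or.inr ⟨y, hy, rfl⟩)
    refine ⟨ρ, (mem_fixingSubgroup_iff _).2 fun a ha => ?_, ?_⟩
    · rw [hρσ a (Or.inl ha), (mem_fixingSubgroup_iff _).1 hσ a ha]
    · rintro y ⟨rfl | hy, hyA⟩
      · rw [hρ _ (Or.inl rfl)]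
        refine ⟨fun h => hz (Or.inl h), fun x hx => ?_⟩
        rw [hc.symm, hzτ x (Or.inl hx), if_pos hx]
      · rw [hρσ y (Or.inr hy)]
        exact hσB y ⟨hy, hyA⟩

end IsRandom

end Aut

section PartialAutomorphisms

variable {A K : Type*} [AddCommGroup K]

/-- The coloring used to extend partial automorphisms of a coloring of `A`: its vertices are pairs
of a vertex of `A` and a valuation `A → K`. -/
def valuationColor (p q : A × (A → K)) : K :=
  p.2 q.1 + q.2 p.1

/-- The action of a permutation of `A` on vertices with valuations, the valuation at `v` being
shifted by `t v`. -/
def twist (π : Equiv.Perm A) (t : A → A → K) (p : A × (A → K)) : A × (A → K) :=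
  (π p.1, fun u => p.2 (π.symm u) + t p.1 (π.symm u))

theorem twist_injective (π : Equiv.Perm A) (t : A → A → K) : Function.Injective (twist π t) := by
  rintro ⟨v, χ⟩ ⟨w, ψ⟩ h
  obtain ⟨h₁, h₂⟩ := Prod.mk.inj h
  obtain rfl := π.injective h₁
  exact Prod.ext rfl (funext fun u => by simpa using congrFun h₂ (π u))

theorem valuationColor_twist (π : Equiv.Perm A) {t : A → A → K}
    (ht : ∀ v w, t v w + t w v = 0) (p q : A × (A → K)) :
    valuationColor (twist π t p) (twist π t q) = valuationColor p q := by
  simp only [valuationColor, twist, Equiv.symm_apply_apply]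
  rw [add_add_add_comm, ht, add_zero]

theorem exists_valuation {d : A → A → K} (hd : ∀ v w, d v w = d w v) :
    ∃ val : A → A → K, (∀ v, val v v = 0) ∧ ∀ v w, v ≠ w → val v w + val w v = d v w := by
  classical
  refine ⟨fun v w => if WellOrderingRel w v then d v w else 0, fun v => ?_, fun v w hvw => ?_⟩
  · exact if_neg (irrefl v)
  · rcases trichotomous_of WellOrderingRel v w with h | h | h
    · simp [h, asymm h, hd w v]
    · exact absurd h hvw
    · simp [h, asymm h]

theorem exists_twist_extending [Finite A] {d : A → A → K} {val : A → A → K}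
    (hdiag : ∀ v, val v v = 0) (hval : ∀ v w, v ≠ w → val v w + val w v = d v w)
    {p : Set (A × A)} (hp : IsPartialIso d d p) :
    ∃ (π : Equiv.Perm A) (t : A → A → K), (∀ v w, t v w + t w v = 0) ∧
      ∀ a ∈ p, twist π t (a.1, val a.1) = (a.2, val a.2) := by
  classical
  obtain ⟨π, hπ⟩ := Equiv.Perm.exists_extending_pair (α := p) (β := A)
    (fun a => a.1.1) (fun a => a.1.2)
    (fun a b hab => Subtype.ext (Prod.ext hab ((hp a a.2 b b.2).1.1 hab)))
    (fun a b hab => Subtype.ext (Prod.ext ((hp a a.2 b b.2).1.2 hab) hab))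
  let defect (v w : A) : K := val (π v) (π w) - val v w
  have hdefect : ∀ v ∈ Prod.fst '' p, ∀ w ∈ Prod.fst '' p, defect v w + defect w v = 0 := by
    rintro _ ⟨a, ha, rfl⟩ _ ⟨b, hb, rfl⟩
    by_cases hab : a.1 = b.1
    · simp [defect, hab, hdiag]
    · have hab' := (hp a ha b hb).1.not.1 hab
      simp only [defect]
      rw [hπ ⟨a, ha⟩, hπ ⟨b, hb⟩, sub_add_sub_comm, hval _ _ hab, hval _ _ hab',
        (hp a ha b hb).2 hab, sub_self]
  refine ⟨π, fun v w => if v ∈ Prod.fst '' p then defect v w else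
    if w ∈ Prod.fst '' p then -defect w v else 0, fun v w => ?_, fun a ha => ?_⟩
  · by_cases hv : v ∈ Prod.fst '' p <;> by_cases hw : w ∈ Prod.fst '' p
    · simp only [if_pos hv, if_pos hw, hdefect v hv w hw]
    all_goals simp only [hv, hw, if_true, if_false, add_neg_cancel, neg_add_cancel, add_zero]
  · refine Prod.ext (hπ ⟨a, ha⟩) (funext fun u => ?_)
    have hmem : a.1 ∈ Prod.fst '' p := ⟨a, ha, rfl⟩
    have hπa : π a.1 = a.2 := hπ ⟨a, ha⟩
    simp [twist, defect, hmem, hπa]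

/-- Put `A` inside a copy of `valuationColor`, where a partial automorphism of `A` is the
restriction of a twist. -/
theorem IsRandom.exists_finite_extending {V : Type*} [Countable V] {k : ℕ} [NeZero k]
    {c : V → V → Fin k} (hc : IsRandom c) {A : Set V} (hA : A.Finite) :
    ∃ B : Set V, B.Finite ∧ A ⊆ B ∧ ∀ p ⊆ A ×ˢ A, IsPartialIso c c p →
      ∃ σ : aut c, σ • B = B ∧ ∀ a ∈ p, σ • a.1 = a.2 := by
  have := hA.to_subtype
  let d : A → A → Fin k := fun v w => c v w
  obtain ⟨val, hdiag, hval⟩ := exists_valuation (d := d) fun v w => hc.symm v w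
  obtain ⟨f, hf, hfc, hfA⟩ := hc.exists_embedding (d := valuationColor (A := A) (K := Fin k))
    (fun p q => add_comm _ _) (p := Set.range fun v : A => ((v, val v), (v : V))) (by
      rintro _ ⟨v, rfl⟩ _ ⟨w, rfl⟩
      refine ⟨⟨fun h => congrArg (fun p => (p.1 : V)) h, fun h => ?_⟩, fun h => ?_⟩
      · rw [show v = w from Subtype.ext h]
      · exact hval v w fun hvw => h (by rw [hvw]))
  have hfval (v : A) : f (v, val v) = v := hfA _ ⟨v, rfl⟩
  refine ⟨Set.range f, Set.finite_range f, fun v hv => ⟨_, hfval ⟨v, hv⟩⟩, fun p hpA hp => ?_⟩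
  obtain ⟨π, t, ht, hπ⟩ := exists_twist_extending hdiag hval
    (p := {a : A × A | ((a.1 : V), (a.2 : V)) ∈ p}) fun a ha b hb =>
      ⟨by simpa only [Subtype.ext_iff] using (hp _ ha _ hb).1,
        fun h => (hp _ ha _ hb).2 (Subtype.coe_injective.ne h)⟩
  obtain ⟨σ, hσ⟩ := hc.exists_smul_eq (Set.finite_range fun q => (f q, f (twist π t q))) (by
    rintro _ ⟨q, rfl⟩ _ ⟨r, rfl⟩
    dsimp only
    rw [hf.eq_iff, hf.eq_iff, (twist_injective π t).eq_iff, hf.ne_iff]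
    refine ⟨Iff.rfl, fun hqr => ?_⟩
    rw [hfc _ _ hqr, hfc _ _ ((twist_injective π t).ne hqr), valuationColor_twist π ht])
  have hσf (q) : σ • f q = f (twist π t q) := hσ _ ⟨q, rfl⟩
  refine ⟨σ, ?_, ?_⟩
  · have htwist : Function.Surjective (twist π t) :=
      Finite.surjective_of_injective (twist_injective π t)
    rw [← Set.image_smul, ← Set.range_comp, ← htwist.range_comp f]
    exact congrArg Set.range (funext hσf)
  · rintro ⟨x, y⟩ hxy
    obtain ⟨hx, hy⟩ := hpA hxy
    lift x to A using hx
    lift y to A using hy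
    rw [← hfval x, hσf, hπ (x, y) hxy, hfval]

end PartialAutomorphisms

section Topology

open TopologicalSpace

variable {V : Type*} {k : ℕ} {c : V → V → Fin k}

/-- The pointwise actions of an automorphism and of its inverse. Recording the inverse makes the
range closed in the space of all pairs of functions. -/
def evalPair (c : V → V → Fin k) (g : aut c) : (V → V) × (V → V) :=
  (fun x => g • x, fun x => g⁻¹ • x)

/-- The topology of pointwise convergence on the automorphism group, for the discrete topology on
the vertices. -/
instance autTopology : TopologicalSpace (aut c) :=
  letI : TopologicalSpace V := ⊥
  .induced (evalPair c) inferInstance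

theorem isOpen_setOf_smul_mem (x : V) (s : Set V) : IsOpen {g : aut c | g • x ∈ s} := by
  let : TopologicalSpace V := ⊥
  have : DiscreteTopology V := ⟨rfl⟩
  refine ⟨{f | f.1 x ∈ s}, ?_, rfl⟩
  exact (isOpen_discrete s).preimage ((continuous_apply x).comp continuous_fst)

theorem isOpen_iff_exists_finite {U : Set (aut c)} : IsOpen U ↔
    ∀ g ∈ U, ∃ F : Set V, F.Finite ∧ ∀ h : aut c, (∀ x ∈ F, h • x = g • x) → h ∈ U := by
  refine ⟨?_, fun hU => isOpen_iff_forall_mem_open.2 fun g hg => ?_⟩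
  · let : TopologicalSpace V := ⊥
    have : DiscreteTopology V := ⟨rfl⟩
    rintro ⟨W, hW, rfl⟩ g hg
    obtain ⟨W₁, W₂, hW₁, hW₂, hg₁, hg₂, hprod⟩ := isOpen_prod_iff.1 hW _ _ hg
    obtain ⟨I, u, hu, hI⟩ := isOpen_pi_iff.1 hW₁ _ hg₁
    obtain ⟨J, v, hv, hJ⟩ := isOpen_pi_iff.1 hW₂ _ hg₂
    refine ⟨I ∪ g⁻¹ • J, I.finite_toSet.union J.finite_toSet.smul_set, fun h hh => ?_⟩
    refine hprod ⟨hI fun x hx => ?_, hJ fun x hx => ?_⟩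
    · change h • x ∈ u x
      rw [hh x (Or.inl hx)]
      exact (hu x hx).2
    · have hinv : h⁻¹ • x = g⁻¹ • x := by
        rw [inv_smul_eq_iff, hh _ (Or.inr (Set.smul_mem_smul_set hx)), smul_inv_smul]
      change h⁻¹ • x ∈ v x
      rw [hinv]
      exact (hv x hx).2
  · obtain ⟨F, hF, hFU⟩ := hU g hg
    refine ⟨⋂ x ∈ F, {h | h • x ∈ ({g • x} : Set V)}, fun h hh => hFU h ?_,
      hF.isOpen_biInter fun x _ => isOpen_setOf_smul_mem x _, ?_⟩
    · simpa using hh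
    · simp

theorem dense_iff_exists_eqOn {U : Set (aut c)} : Dense U ↔
    ∀ (g : aut c) (F : Set V), F.Finite → ∃ h ∈ U, ∀ x ∈ F, h • x = g • x := by
  rw [dense_iff_inter_open]
  constructor
  · intro hU g F hF
    obtain ⟨h, hh, hhU⟩ := hU (⋂ x ∈ F, {h | h • x ∈ ({g • x} : Set V)})
      (hF.isOpen_biInter fun x _ => isOpen_setOf_smul_mem x _) ⟨g, by simp⟩
    exact ⟨h, hhU, by simpa using hh⟩
  · rintro hU W hW ⟨g, hg⟩
    obtain ⟨F, hF, hFW⟩ := isOpen_iff_exists_finite.1 hW g hg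
    obtain ⟨h, hh, hhg⟩ := hU g F hF
    exact ⟨h, hFW h hhg, hh⟩

instance : SeparatelyContinuousMul (aut c) where
  continuous_const_mul {a} := ⟨fun U hU => isOpen_iff_exists_finite.2 fun g hg => by
    obtain ⟨F, hF, hFU⟩ := isOpen_iff_exists_finite.1 hU _ hg
    exact ⟨F, hF, fun h hh => hFU _ fun x hx => by rw [mul_smul, mul_smul, hh x hx]⟩⟩
  continuous_mul_const {a} := ⟨fun U hU => isOpen_iff_exists_finite.2 fun g hg => by
    obtain ⟨F, hF, hFU⟩ := isOpen_iff_exists_finite.1 hU _ hg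
    refine ⟨a • F, hF.smul_set, fun h hh => hFU _ fun x hx => ?_⟩
    rw [mul_smul, mul_smul, hh _ (Set.smul_mem_smul_set hx)]⟩

theorem range_evalPair (c : V → V → Fin k) : Set.range (evalPair c) =
    {f | ∀ x y, (f.1 x = y ↔ f.2 y = x) ∧ (x ≠ y → c (f.1 x) (f.1 y) = c x y)} := by
  refine Set.Subset.antisymm ?_ fun f hf => ?_
  · rintro _ ⟨g, rfl⟩ x y
    exact ⟨by simp only [evalPair, eq_comm (a := g • x), inv_smul_eq_iff], color_smul_smul g⟩
  · let e : Equiv.Perm V := ⟨f.1, f.2, fun x => (hf x _).1.1 rfl, fun x => (hf _ x).1.2 rfl⟩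
    exact ⟨⟨e, fun x y => (hf x y).2⟩, rfl⟩

instance [Countable V] : PolishSpace (aut c) := by
  let : TopologicalSpace V := ⊥
  have : DiscreteTopology V := ⟨rfl⟩
  have : PolishSpace (V → V) := {}
  have hclosed : IsClosed (Set.range (evalPair c)) := by
    rw [range_evalPair]
    simp only [Set.ofPred_forall]
    refine isClosed_iInter fun x => isClosed_iInter fun y => ?_
    have hcont : Continuous fun f : (V → V) × (V → V) => (f.1 x, f.1 y, f.2 y) := by fun_prop
    exact (isClosed_discrete {a : V × V × V | (a.1 = y ↔ a.2.2 = x) ∧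
      (x ≠ y → c a.1 a.2.1 = c x y)}).preimage hcont
  have hinj : Function.Injective (evalPair c) := fun g h hgh =>
    aut_ext (congrFun (congrArg Prod.fst hgh))
  exact Topology.IsClosedEmbedding.polishSpace
    (f := evalPair c) ⟨⟨⟨rfl⟩, hinj⟩, hclosed⟩

theorem eventually_residual_mul_left (a : aut c) {p : aut c → Prop}
    (hp : ∀ᶠ g in residual (aut c), p g) : ∀ᶠ g in residual (aut c), p (a * g) := by
  rw [← (Homeomorph.mulLeft a).residual_map_eq] at hp
  exact hp

theorem eventually_residual_mul_right (a : aut c) {p : aut c → Prop}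
    (hp : ∀ᶠ g in residual (aut c), p g) : ∀ᶠ g in residual (aut c), p (g * a) := by
  rw [← (Homeomorph.mulRight a).residual_map_eq] at hp
  exact hp

end Topology

section Generic

variable {V ι κ : Type*} {k : ℕ} {c : V → V → Fin k} {A A' B F : Set V}

theorem eventually_residual_of_exists_finite {p : aut c → Prop}
    (hopen : ∀ g, p g → ∃ F : Set V, F.Finite ∧ ∀ h : aut c, (∀ x ∈ F, h • x = g • x) → p h)
    (hdense : ∀ (g : aut c) (F : Set V), F.Finite → ∃ h, p h ∧ ∀ x ∈ F, h • x = g • x) :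
    ∀ᶠ g in residual (aut c), p g :=
  residual_of_dense_open (isOpen_iff_exists_finite.2 hopen) (dense_iff_exists_eqOn.2 hdense)

/-- A family of automorphisms is generic if finite sets have finite closures under it and every
finite extension of its action on a finite invariant set is realized, by a conjugation fixing that
set pointwise. -/
structure IsGeneric (g : ι → aut c) : Prop where
  exists_invariant : ∀ F : Set V, F.Finite → ∃ A : Set V, A.Finite ∧ F ⊆ A ∧ ∀ j, g j • A = A
  extension : ∀ A B : Set V, B.Finite → A ⊆ B → ∀ f : ι → aut c, (∀ j, g j • A = A) →
    (∀ j, f j • B = B) → (∀ j, ∀ a ∈ A, f j • a = g j • a) →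
      ∃ σ ∈ fixingSubgroup (aut c) A, ∀ j, ∀ b ∈ B, σ • f j • b = g j • σ • b

namespace IsGeneric

theorem of_isEmpty [IsEmpty ι] (g : ι → aut c) : IsGeneric g :=
  ⟨fun F hF => ⟨F, hF, subset_rfl, isEmptyElim⟩,
    fun _ _ _ _ _ _ _ _ => ⟨1, one_mem _, isEmptyElim⟩⟩

theorem of_comp_surjective {g : ι → aut c} {e : κ → ι} (he : Function.Surjective e)
    (hg : IsGeneric (g ∘ e)) : IsGeneric g where
  exists_invariant F hF := by
    obtain ⟨A, hA, hFA, hgA⟩ := hg.exists_invariant F hF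
    exact ⟨A, hA, hFA, he.forall.2 hgA⟩
  extension A B hB hAB f hgA hfB hfg := by
    obtain ⟨σ, hσ, hσB⟩ := hg.extension A B hB hAB (f ∘ e) (fun j => hgA _) (fun j => hfB _)
      fun j => hfg _
    exact ⟨σ, hσ, he.forall.2 hσB⟩

theorem of_dense {g : ι → aut c} {D : Set (aut c)} (hD : Dense D)
    (hinv : ∀ F : Set V, F.Finite → ∃ A : Set V, A.Finite ∧ F ⊆ A ∧ ∀ j, g j • A = A)
    (hext : ∀ A B : Set V, B.Finite → A ⊆ B → ∀ f : ι → aut c, (∀ j, f j ∈ D) →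
      (∀ j, g j • A = A) → (∀ j, f j • B = B) → (∀ j, ∀ a ∈ A, f j • a = g j • a) →
        ∃ σ ∈ fixingSubgroup (aut c) A, ∀ j, ∀ b ∈ B, σ • f j • b = g j • σ • b) :
    IsGeneric g := by
  refine ⟨hinv, fun A B hB hAB f hgA hfB hfg => ?_⟩
  choose f' hf'D hf' using fun j => dense_iff_exists_eqOn.1 hD (f j) B hB
  obtain ⟨σ, hσ, hσB⟩ := hext A B hB hAB f' hf'D hgA
    (fun j => (Set.image_congr (hf' j)).trans (hfB j))
    fun j a ha => (hf' j a (hAB ha)).trans (hfg j a ha)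
  exact ⟨σ, hσ, fun j b hb => hf' j b hb ▸ hσB j b hb⟩

end IsGeneric

/-- Actions of two families on finite sets, agreeing on a common invariant subset, amalgamate: move
one set so that all edges between the two sets outside the common part have color `0`. -/
theorem IsRandom.exists_amalgam [Countable V] [NeZero k] (hc : IsRandom c) (hA' : A'.Finite)
    (hB : B.Finite) (hAA' : A ⊆ A') (hAB : A ⊆ B) {g f : ι → aut c} (hgA : ∀ j, g j • A = A)
    (hgA' : ∀ j, g j • A' = A') (hfB : ∀ j, f j • B = B) (hfg : ∀ j, ∀ a ∈ A, f j • a = g j • a) :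
    ∃ σ ∈ fixingSubgroup (aut c) A, ∃ h : ι → aut c, ∀ j, (∀ a ∈ A', h j • a = g j • a) ∧
      ∀ b ∈ B, h j • σ • b = σ • f j • b := by
  classical
  obtain ⟨σ, hσ, hfree⟩ := hc.exists_mem_fixingSubgroup_color hA' hAA' hB
    (fun x b => if x ∈ A then c x b else 0) fun a ha b _ => if_pos ha
  have hσA : ∀ a ∈ A, σ • a = a := (mem_fixingSubgroup_iff _).1 hσ
  have hgmem (j) {S : Set V} (hS : g j • S = S) {x : V} : g j • x ∈ S ↔ x ∈ S := by
    conv_lhs => rw [← hS, Set.smul_mem_smul_set_iff]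
  have hfmem (j) {b : V} (hb : b ∈ B \ A) : f j • b ∈ B \ A := by
    have hfA : f j • A = A := (Set.image_congr (hfg j)).trans (hgA j)
    rw [← hfB j, ← hfA, ← Set.smul_set_sdiff]
    exact Set.smul_mem_smul_set hb
  have key (j) : ∃ h : aut c, (∀ a ∈ A', h • a = g j • a) ∧
      ∀ y ∈ σ • B, h • y = (σ * f j * σ⁻¹) • y := by
    refine hc.exists_smul_eq_union hA' hB.smul_set ?_ ?_
    · rintro _ ⟨hx, b, hb, rfl⟩
      have hbA : b ∈ A := by_contra fun h => (hfree b ⟨hb, h⟩).1 hx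
      simp only [mul_smul, inv_smul_smul]
      rw [hfg j b hbA, hσA b hbA, hσA _ ((hgmem j (hgA j)).2 hbA)]
    · rintro x ⟨hx, hxB⟩ _ ⟨⟨b, hb, rfl⟩, hbA'⟩
      have hxA : x ∉ A := fun h => hxB ⟨x, hAB h, hσA x h⟩
      have hbA : b ∉ A := fun h => hbA' (by simpa only [hσA b h] using hAA' h)
      obtain ⟨hout, hcol⟩ := hfree _ (hfmem j ⟨hb, hbA⟩)
      have hgx : g j • x ∈ A' := (hgmem j (hgA' j)).2 hx
      simp only [mul_smul, inv_smul_smul]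
      refine ⟨fun h => hout (h ▸ hgx), ?_⟩
      rw [hcol _ hgx, (hfree b ⟨hb, hbA⟩).2 x hx, if_neg hxA, if_neg ((hgmem j (hgA j)).not.2 hxA)]
  choose h hh using key
  refine ⟨σ, hσ, h, fun j => ⟨(hh j).1, fun b hb => ?_⟩⟩
  rw [(hh j).2 _ (Set.smul_mem_smul_set hb), mul_smul, mul_smul, inv_smul_smul]

namespace IsGeneric

variable [Countable V] [NeZero k] {g : ι → aut c}

theorem exists_invariant_agree (hc : IsRandom c) (hg : IsGeneric g) (x : aut c)
    (hF : F.Finite) : ∃ y : aut c, (∀ v ∈ F, y • v = x • v) ∧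
      ∃ A : Set V, A.Finite ∧ F ⊆ A ∧ ∀ o : Option ι, o.elim y g • A = A := by
  obtain ⟨A, hA, hFA, hgA⟩ := hg.exists_invariant (F ∪ x • F) (hF.union hF.smul_set)
  obtain ⟨hFA, hxA⟩ := Set.union_subset_iff.1 hFA
  obtain ⟨B, hB, hAB, hext⟩ := hc.exists_finite_extending hA
  choose f hfB hfg using fun j => hext _ (by
    rintro _ ⟨a, ha, rfl⟩
    exact ⟨ha, hgA j ▸ Set.smul_mem_smul_set ha⟩) (isPartialIso_smul (g j) A)
  obtain ⟨w, hwB, hwx⟩ := hext _ (by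
    rintro _ ⟨a, ha, rfl⟩
    exact ⟨hFA ha, hxA (Set.smul_mem_smul_set ha)⟩) (isPartialIso_smul x F)
  obtain ⟨σ, hσ, hσB⟩ := hg.extension A B hB hAB f hgA hfB
    fun j a ha => hfg j _ ⟨a, ha, rfl⟩
  have hσA : ∀ a ∈ A, σ • a = a := (mem_fixingSubgroup_iff _).1 hσ
  refine ⟨σ * w * σ⁻¹, fun v hv => ?_, σ • B, hB.smul_set,
    fun v hv => ⟨v, hAB (hFA hv), hσA v (hFA hv)⟩, Option.forall.2 ⟨?_, fun j => ?_⟩⟩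
  · rw [mul_smul, mul_smul, inv_smul_eq_iff.2 (hσA v (hFA hv)).symm, hwx _ ⟨v, hv, rfl⟩,
      hσA _ (hxA (Set.smul_mem_smul_set hv))]
  · rw [Option.elim_none, mul_smul, mul_smul, inv_smul_smul, hwB]
  · calc g j • σ • B = (g j * σ) • B := (mul_smul _ _ _).symm
      _ = (σ * f j) • B := Set.image_congr fun b hb => (hσB j b hb).symm
      _ = σ • B := by rw [mul_smul, hfB]

theorem exists_extension_agree (hc : IsRandom c) (hg : IsGeneric g) {x : aut c}
    (hA' : A'.Finite) (hxA' : ∀ o : Option ι, o.elim x g • A' = A') (hB : B.Finite) (hAA' : A ⊆ A')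
    (hAB : A ⊆ B) {f : Option ι → aut c} (hxA : ∀ o : Option ι, o.elim x g • A = A)
    (hfB : ∀ o, f o • B = B) (hfx : ∀ o, ∀ a ∈ A, f o • a = o.elim x g • a) :
    ∃ y : aut c, (∀ a ∈ A', y • a = x • a) ∧ ∃ σ ∈ fixingSubgroup (aut c) A,
      ∀ o : Option ι, ∀ b ∈ B, σ • f o • b = o.elim y g • σ • b := by
  obtain ⟨σ, hσ, h, hh⟩ := hc.exists_amalgam hA' hB hAA' hAB hxA hxA' hfB hfx
  have hinv (j : ι) : h (some j) • (A' ∪ σ • B) = A' ∪ σ • B := by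
    rw [Set.smul_set_union]
    congr 1
    · exact (Set.image_congr (hh (some j)).1).trans (hxA' (some j))
    · calc h (some j) • σ • B = (h (some j) * σ) • B := (mul_smul _ _ _).symm
        _ = (σ * f (some j)) • B := Set.image_congr (hh (some j)).2
        _ = σ • B := by rw [mul_smul, hfB]
  obtain ⟨τ, hτ, hτg⟩ := hg.extension A' (A' ∪ σ • B) (hA'.union hB.smul_set)
    Set.subset_union_left (fun j => h (some j)) (fun j => hxA' (some j)) hinv
    fun j => (hh (some j)).1
  have hτA' : ∀ a ∈ A', τ • a = a := (mem_fixingSubgroup_iff _).1 hτ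
  refine ⟨τ * h none * τ⁻¹, fun a ha => ?_, τ * σ, mul_mem (fixingSubgroup_antitone _ _ hAA' hτ) hσ,
    Option.forall.2 ⟨fun b hb => ?_, fun j b hb => ?_⟩⟩
  · rw [mul_smul, mul_smul, inv_smul_eq_iff.2 (hτA' a ha).symm, (hh none).1 a ha]
    exact hτA' _ (hxA' none ▸ Set.smul_mem_smul_set ha)
  · rw [Option.elim_none, mul_smul, mul_smul, mul_smul, mul_smul, inv_smul_smul,
      (hh none).2 b hb]
  · rw [mul_smul, mul_smul, ← (hh (some j)).2 b hb]
    exact hτg j _ (Or.inr (Set.smul_mem_smul_set hb))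

theorem eventually_exists_invariant (hc : IsRandom c) (hg : IsGeneric g) (hF : F.Finite) :
    ∀ᶠ x in residual (aut c), ∃ A : Set V, A.Finite ∧ F ⊆ A ∧
      ∀ o : Option ι, o.elim x g • A = A := by
  refine eventually_residual_of_exists_finite ?_ fun x S hS => ?_
  · rintro x ⟨A, hA, hFA, hxA⟩
    exact ⟨A, hA, fun y hy => ⟨A, hA, hFA, Option.forall.2
      ⟨(Set.image_congr hy).trans (hxA none), fun j => hxA (some j)⟩⟩⟩
  · obtain ⟨y, hy, A, hA, hSA, hyA⟩ := hg.exists_invariant_agree hc x (hS.union hF)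
    exact ⟨y, ⟨A, hA, Set.subset_union_right.trans hSA, hyA⟩, fun v hv => hy v (Or.inl hv)⟩

theorem eventually_extension (hc : IsRandom c) (hg : IsGeneric g) (hB : B.Finite) (hAB : A ⊆ B)
    {f : Option ι → aut c} (hfB : ∀ o, f o • B = B) :
    ∀ᶠ x in residual (aut c), (∀ o : Option ι, o.elim x g • A = A) →
      (∀ o, ∀ a ∈ A, f o • a = o.elim x g • a) → ∃ σ ∈ fixingSubgroup (aut c) A,
        ∀ o : Option ι, ∀ b ∈ B, σ • f o • b = o.elim x g • σ • b := by
  have hA := hB.subset hAB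
  have hcongr {x y : aut c} {S : Set V} (hxy : ∀ v ∈ S, y • v = x • v) (o : Option ι) :
      ∀ v ∈ S, (o.elim y g : aut c) • v = (o.elim x g : aut c) • v := by
    cases o
    exacts [hxy, fun _ _ => rfl]
  refine eventually_residual_of_exists_finite (fun x hx => ?_) fun x S hS => ?_
  · by_cases h : (∀ o : Option ι, o.elim x g • A = A) ∧ ∀ o, ∀ a ∈ A, f o • a = o.elim x g • a
    · obtain ⟨σ, hσ, hσB⟩ := hx h.1 h.2
      refine ⟨σ • B, hB.smul_set, fun y hy _ _ => ⟨σ, hσ, fun o b hb => ?_⟩⟩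
      rw [hσB o b hb, hcongr hy o _ (Set.smul_mem_smul_set hb)]
    · refine ⟨A, hA, fun y hy hyA hfy => (h ⟨fun o => ?_, fun o a ha => ?_⟩).elim⟩
      · exact (Set.image_congr (hcongr hy o)).symm.trans (hyA o)
      · rw [hfy o a ha, hcongr hy o a ha]
  · obtain ⟨y, hyx, A', hA', hSA', hyA'⟩ := hg.exists_invariant_agree hc x (hS.union hA)
    obtain ⟨hSA', hAA'⟩ := Set.union_subset_iff.1 hSA'
    by_cases h : (∀ o : Option ι, o.elim y g • A = A) ∧ ∀ o, ∀ a ∈ A, f o • a = o.elim y g • a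
    · obtain ⟨z, hzy, hz⟩ := hg.exists_extension_agree hc hA' hyA' hB hAA' hAB h.1 hfB h.2
      exact ⟨z, fun _ _ => hz, fun v hv => (hzy v (hSA' hv)).trans (hyx v (Or.inl hv))⟩
    · exact ⟨y, fun h₁ h₂ => (h ⟨h₁, h₂⟩).elim, fun v hv => hyx v (Or.inl hv)⟩

theorem eventually_residual [Finite ι] (hc : IsRandom c) (hg : IsGeneric g) :
    ∀ᶠ x in residual (aut c), IsGeneric fun o : Option ι => o.elim x g := by
  obtain ⟨D, hD, hDdense⟩ := TopologicalSpace.exists_countable_dense (aut c)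
  have := hD.to_subtype
  have hinv : ∀ᶠ x in residual (aut c), ∀ F : Finset V, ∃ A : Set V, A.Finite ∧ ↑F ⊆ A ∧
      ∀ o : Option ι, o.elim x g • A = A :=
    eventually_countable_forall.2 fun F => hg.eventually_exists_invariant hc F.finite_toSet
  have hext : ∀ᶠ x in residual (aut c), ∀ (A B : Finset V) (f : Option ι → D),
      (A : Set V) ⊆ B → (∀ o, (f o : aut c) • (B : Set V) = B) →
      (∀ o : Option ι, o.elim x g • (A : Set V) = A) →
      (∀ o, ∀ a ∈ (A : Set V), (f o : aut c) • a = o.elim x g • a) →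
      ∃ σ ∈ fixingSubgroup (aut c) (A : Set V), ∀ o : Option ι, ∀ b ∈ (B : Set V),
        σ • (f o : aut c) • b = o.elim x g • σ • b := by
    simp only [eventually_countable_forall]
    exact fun A B f hAB hfB => hg.eventually_extension hc B.finite_toSet hAB hfB
  filter_upwards [hinv, hext] with x hinv hext
  refine of_dense hDdense (fun F hF => ?_) fun A B hB hAB f hfD hxA hfB hfx => ?_
  · lift F to Finset V using hF
    exact hinv F
  · lift A to Finset V using hB.subset hAB
    lift B to Finset V using hB
    exact hext A B (fun o => ⟨f o, hfD o⟩) hAB hfB hxA hfx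

end IsGeneric

end Generic

section SmallIndex

variable {V κ : Type*} {k : ℕ} {c : V → V → Fin k}

/-- A finite approximation to an automorphism conjugating the first components of a generic family
of pairs to the second ones. -/
structure ConjApprox (c : V → V → Fin k) where
  /-- The pairs of automorphisms to be conjugated. -/
  pairs : Set (aut c × aut c)
  /-- The set on which the approximation is fixed. -/
  dom : Set V
  /-- An automorphism realizing the approximation. -/
  map : aut c
  finite_pairs : pairs.Finite
  finite_dom : dom.Finite
  generic_fst : IsGeneric fun j : pairs => j.1.1
  generic_snd : IsGeneric fun j : pairs => j.1.2
  invariant : ∀ j ∈ pairs, j.1 • dom = dom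
  conj : ∀ j ∈ pairs, ∀ a ∈ dom, map • j.1 • a = j.2 • map • a

namespace ConjApprox

/-- An approximation is refined by adding pairs to be conjugated and extending the partial map. -/
instance : Preorder (ConjApprox c) where
  le p q := p.pairs ⊆ q.pairs ∧ p.dom ⊆ q.dom ∧ ∀ x ∈ p.dom, q.map • x = p.map • x
  le_refl _ := ⟨subset_rfl, subset_rfl, fun _ _ => rfl⟩
  le_trans _ _ _ h h' := ⟨h.1.trans h'.1, h.2.1.trans h'.2.1,
    fun x hx => (h'.2.2 x (h.2.1 hx)).trans (h.2.2 x hx)⟩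

/-- The approximation with the roles of the first and second components exchanged. -/
def symm (p : ConjApprox c) : ConjApprox c where
  pairs := Prod.swap ⁻¹' p.pairs
  dom := p.map • p.dom
  map := p.map⁻¹
  finite_pairs := p.finite_pairs.preimage Prod.swap_injective.injOn
  finite_dom := p.finite_dom.smul_set
  generic_fst := .of_comp_surjective (e := fun j : p.pairs => ⟨j.1.swap, j.2⟩)
    (fun j => ⟨⟨j.1.swap, j.2⟩, rfl⟩) p.generic_snd
  generic_snd := .of_comp_surjective (e := fun j : p.pairs => ⟨j.1.swap, j.2⟩)
    (fun j => ⟨⟨j.1.swap, j.2⟩, rfl⟩) p.generic_fst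
  invariant j hj := by
    calc j.1 • p.map • p.dom = (j.1 * p.map) • p.dom := (mul_smul _ _ _).symm
      _ = (p.map * j.2) • p.dom := Set.image_congr fun a ha => (p.conj _ hj a ha).symm
      _ = p.map • p.dom := by rw [mul_smul, show j.2 • p.dom = p.dom from p.invariant _ hj]
  conj j hj := by
    rintro _ ⟨a, ha, rfl⟩
    simp only [inv_smul_smul]
    rw [inv_smul_eq_iff]
    exact (p.conj _ hj a ha).symm

theorem le_symm_of_symm_le {p q : ConjApprox c} (h : p.symm ≤ q) : p ≤ q.symm := by
  have hmap : ∀ a ∈ p.dom, p.map • a ∈ q.dom ∧ q.map • p.map • a = a := fun a ha =>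
    ⟨h.2.1 (Set.smul_mem_smul_set ha),
      (h.2.2 _ (Set.smul_mem_smul_set ha)).trans (inv_smul_smul _ _)⟩
  refine ⟨fun j hj => h.1 hj, fun a ha => ⟨_, (hmap a ha).1, (hmap a ha).2⟩, fun a ha => ?_⟩
  exact inv_smul_eq_iff.2 (hmap a ha).2.symm

theorem exists_ge_dom_eq (p : ConjApprox c) {A : Set V} (hA : A.Finite) (hpA : p.dom ⊆ A)
    (hinv : ∀ j ∈ p.pairs, j.1 • A = A) : ∃ q ≥ p, q.pairs = p.pairs ∧ q.dom = A := by
  obtain ⟨τ, hτ, hτA⟩ := p.generic_snd.extension (p.map • p.dom) (p.map • A) hA.smul_set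
    (Set.smul_set_mono hpA) (fun j => p.map * j.1.1 * p.map⁻¹)
    (fun j => p.symm.invariant j.1.swap j.2)
    (fun j => by rw [mul_smul, mul_smul, inv_smul_smul, hinv _ j.2]) (by
      rintro j _ ⟨a, ha, rfl⟩
      simp only [mul_smul, inv_smul_smul]
      exact p.conj _ j.2 a ha)
  refine ⟨⟨p.pairs, A, τ * p.map, p.finite_pairs, hA, p.generic_fst, p.generic_snd, hinv,
    fun j hj a ha => ?_⟩, ⟨subset_rfl, hpA, fun x hx => ?_⟩, rfl, rfl⟩
  · simpa only [mul_smul, inv_smul_smul] using hτA ⟨j, hj⟩ _ (Set.smul_mem_smul_set ha)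
  · rw [mul_smul]
    exact (mem_fixingSubgroup_iff _).1 hτ _ (Set.smul_mem_smul_set hx)

theorem exists_ge_mem_dom (p : ConjApprox c) (x : V) : ∃ q ≥ p, x ∈ q.dom := by
  obtain ⟨A, hA, hpA, hinv⟩ := p.generic_fst.exists_invariant _ (p.finite_dom.insert x)
  obtain ⟨hx, hpA⟩ := Set.insert_subset_iff.1 hpA
  obtain ⟨q, hpq, -, rfl⟩ := p.exists_ge_dom_eq hA hpA fun j hj => hinv ⟨j, hj⟩
  exact ⟨q, hpq, hx⟩

theorem exists_ge_mem_smul_dom (p : ConjApprox c) (y : V) :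
    ∃ q ≥ p, ∃ x ∈ q.dom, q.map • x = y := by
  obtain ⟨q, hpq, hy⟩ := p.symm.exists_ge_mem_dom y
  exact ⟨q.symm, le_symm_of_symm_le hpq, _, Set.smul_mem_smul_set hy, inv_smul_smul _ _⟩

theorem exists_ge_mem_pairs [Countable V] [NeZero k] (hc : IsRandom c) (p : ConjApprox c)
    {X Y : Set (aut c)} (hX : ∀ D ∈ residual (aut c), (X ∩ D).Nonempty)
    (hY : ∀ D ∈ residual (aut c), Dense (Y ∩ D)) : ∃ q ≥ p, ∃ j ∈ q.pairs, j.1 ∈ X ∧ j.2 ∈ Y := by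
  have := p.finite_pairs.to_subtype
  obtain ⟨x, hxX, hx : IsGeneric _⟩ := hX _ (p.generic_fst.eventually_residual hc)
  obtain ⟨A, hA, hpA, hxA⟩ := hx.exists_invariant p.dom p.finite_dom
  obtain ⟨q, hpq, hpairs, rfl⟩ := p.exists_ge_dom_eq hA hpA fun j hj => hxA (some ⟨j, hj⟩)
  obtain ⟨y, ⟨hyY, hy : IsGeneric _⟩, hyA⟩ := dense_iff_exists_eqOn.1
    (hY _ (p.generic_snd.eventually_residual hc)) (q.map * x * q.map⁻¹) (q.map • q.dom)
    q.finite_dom.smul_set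
  let e : Option p.pairs → ↥(insert (x, y) p.pairs) := fun o =>
    o.elim ⟨(x, y), Or.inl rfl⟩ fun j => ⟨j, Or.inr j.2⟩
  have he : Function.Surjective e := by
    rintro ⟨j, rfl | hj⟩
    exacts [⟨none, rfl⟩, ⟨some ⟨j, hj⟩, rfl⟩]
  refine ⟨⟨insert (x, y) p.pairs, q.dom, q.map, p.finite_pairs.insert _, q.finite_dom,
    .of_comp_surjective he ?_, .of_comp_surjective he ?_, ?_, ?_⟩,
    ⟨Set.subset_insert _ _, hpq.2⟩, (x, y), Or.inl rfl, hxX, hyY⟩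
  · convert hx using 1
    exact funext (Option.forall.2 ⟨rfl, fun _ => rfl⟩)
  · convert hy using 1
    exact funext (Option.forall.2 ⟨rfl, fun _ => rfl⟩)
  · rintro j (rfl | hj)
    exacts [hxA none, hxA (some ⟨j, hj⟩)]
  · rintro j (rfl | hj) a ha
    · rw [hyA _ (Set.smul_mem_smul_set ha), mul_smul, mul_smul, inv_smul_smul]
    · exact q.conj j (hpairs ▸ hj) a ha

theorem apply_smul_of_ideal {I : Order.Ideal (ConjApprox c)} {σ : Equiv.Perm V}
    (hdom : ∀ v, ∃ p ∈ I, v ∈ p.dom) (hmap : ∀ p ∈ I, ∀ v ∈ p.dom, σ v = p.map • v) :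
    σ ∈ aut c ∧ ∀ p ∈ I, ∀ j ∈ p.pairs, ∀ v, σ (j.1 • v) = j.2 • σ v := by
  have hle (p) (hp : p ∈ I) (v : V) : ∃ q ∈ I, p ≤ q ∧ v ∈ q.dom := by
    obtain ⟨q, hq, hv⟩ := hdom v
    obtain ⟨r, hr, hpr, hqr⟩ := I.directed p hp q hq
    exact ⟨r, hr, hpr, hqr.2.1 hv⟩
  refine ⟨fun u v huv => ?_, fun p hp j hj v => ?_⟩
  · obtain ⟨p, hp, hu⟩ := hdom u
    obtain ⟨q, hq, hpq, hv⟩ := hle p hp v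
    rw [hmap q hq u (hpq.2.1 hu), hmap q hq v hv, color_smul_smul q.map huv]
  · obtain ⟨q, hq, hpq, hv⟩ := hle p hp v
    have hjv : j.1 • v ∈ q.dom := by
      rw [← q.invariant j (hpq.1 hj)]
      exact Set.smul_mem_smul_set hv
    rw [hmap q hq _ hjv, hmap q hq v hv, q.conj j (hpq.1 hj) v hv]

end ConjApprox

variable [Countable V]

theorem IsRandom.exists_conj_mem [NeZero k] [Countable κ] (hc : IsRandom c) {X Y : κ → Set (aut c)}
    (hX : ∀ i, ∀ D ∈ residual (aut c), (X i ∩ D).Nonempty)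
    (hY : ∀ i, ∀ D ∈ residual (aut c), Dense (Y i ∩ D)) :
    ∃ g : aut c, ∀ i, ∃ x ∈ X i, g * x * g⁻¹ ∈ Y i := by
  obtain ⟨σ, I, -, hσ, hI⟩ := exists_equiv_of_cofinal
    (graph := fun p : ConjApprox c => (fun x => (x, p.map • x)) '' p.dom)
    (by
      rintro p q ⟨-, hdom, hmap⟩ _ ⟨x, hx, rfl⟩
      exact ⟨x, hdom hx, congrArg (x, ·) (hmap x hx)⟩)
    (fun p a ha b hb => (isPartialIso_smul p.map p.dom a ha b hb).1)
    (fun x p => by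
      obtain ⟨q, hpq, hx⟩ := p.exists_ge_mem_dom x
      exact ⟨q, ⟨_, x, hx, rfl⟩, hpq⟩)
    (fun y p => by
      obtain ⟨q, hpq, x, hx, rfl⟩ := p.exists_ge_mem_smul_dom y
      exact ⟨q, ⟨_, x, hx, rfl⟩, hpq⟩)
    (D := fun i => {p | ∃ j ∈ p.pairs, j.1 ∈ X i ∧ j.2 ∈ Y i})
    (fun i p => by
      obtain ⟨q, hpq, hq⟩ := p.exists_ge_mem_pairs hc (hX i) (hY i)
      exact ⟨q, hq, hpq⟩)
    ⟨∅, ∅, 1, Set.finite_empty, Set.finite_empty, .of_isEmpty _, .of_isEmpty _, nofun, nofun⟩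
  obtain ⟨haut, hconj⟩ := ConjApprox.apply_smul_of_ideal
    (fun v => by
      obtain ⟨p, hp, x, hx, hxv⟩ := (hσ v _).1 rfl
      obtain ⟨rfl, -⟩ := Prod.mk.inj hxv
      exact ⟨p, hp, hx⟩)
    fun p hp v hv => (hσ v _).2 ⟨p, hp, v, hv, rfl⟩
  refine ⟨⟨σ, haut⟩, fun i => ?_⟩
  obtain ⟨p, hp, j, hj, hjX, hjY⟩ := hI i
  refine ⟨j.1, hjX, ?_⟩
  rwa [mul_inv_eq_of_eq_mul (aut_ext (hconj p hp j hj) : ⟨σ, haut⟩ * j.1 = j.2 * ⟨σ, haut⟩)]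

theorem dense_compl_inter_of_mem_residual {K : Subgroup (aut c)}
    (hK : ∀ F : Set V, F.Finite → ¬fixingSubgroup (aut c) F ≤ K) {D : Set (aut c)}
    (hD : D ∈ residual (aut c)) : Dense ((K : Set (aut c))ᶜ ∩ D) := by
  refine dense_iff_exists_eqOn.2 fun g F hF => ?_
  by_contra! hcon
  refine hK F hF fun u hu => ?_
  obtain ⟨y, ⟨hy, hyu⟩, hyF⟩ := dense_iff_exists_eqOn.1 (dense_of_mem_residual
    (Filter.inter_mem hD (eventually_residual_mul_right u hD))) g F hF
  have hmem {z : aut c} (hz : z ∈ D) (hzF : ∀ x ∈ F, z • x = g • x) : z ∈ K := by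
    by_contra hzK
    obtain ⟨x, hx, hne⟩ := hcon z ⟨hzK, hz⟩
    exact hne (hzF x hx)
  have hyuK : y * u ∈ K := hmem hyu fun x hx => by
    rw [mul_smul, (mem_fixingSubgroup_iff _).1 hu x hx, hyF x hx]
  exact (mul_mem_cancel_left (hmem hy hyF)).1 hyuK

variable {H : Subgroup (aut c)} [Countable (aut c ⧸ H)]

theorem inter_nonempty_of_mem_residual {D : Set (aut c)} (hD : D ∈ residual (aut c)) :
    ((H : Set (aut c)) ∩ D).Nonempty := by
  have h : ∀ᶠ y in residual (aut c), ∀ i : aut c ⧸ H, i.out⁻¹ * y ∈ D :=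
    eventually_countable_forall.2 fun i => eventually_residual_mul_left _ hD
  obtain ⟨y, hy⟩ := (dense_of_mem_residual h).nonempty
  exact ⟨_, QuotientGroup.eq.1 (QuotientGroup.out_eq' (y : aut c ⧸ H)), hy _⟩

/-- The small index property. If it failed, some `g` would, for every coset `i` of `H`, conjugate an
element of `H` to one outside `i.out * H * i.out⁻¹`; the coset of `g` itself rules this out. -/
theorem IsRandom.exists_fixingSubgroup_le [NeZero k] (hc : IsRandom c) :
    ∃ F : Set V, F.Finite ∧ fixingSubgroup (aut c) F ≤ H := by
  by_contra! hH
  let K (i : aut c ⧸ H) : Subgroup (aut c) := H.comap (MulAut.conj i.out⁻¹).toMonoidHom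
  have hK (i) (F : Set V) (hF : F.Finite) : ¬fixingSubgroup (aut c) F ≤ K i := by
    rw [← Subgroup.map_le_iff_le_comap,
      ← SubMulAction.fixingSubgroup_smul_eq_fixingSubgroup_map_conj]
    exact hH _ hF.smul_set
  obtain ⟨g, hg⟩ := hc.exists_conj_mem (κ := aut c ⧸ H) (X := fun _ => H) (Y := fun i => (K i)ᶜ)
    (fun _ _ => inter_nonempty_of_mem_residual) fun i _ => dense_compl_inter_of_mem_residual (hK i)
  obtain ⟨x, hx, hgx⟩ := hg g
  have hgH : (g : aut c ⧸ H).out⁻¹ * g ∈ H := QuotientGroup.eq.1 (QuotientGroup.out_eq' _)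
  refine hgx ?_
  have := H.mul_mem (H.mul_mem hgH hx) (H.inv_mem hgH)
  simpa [K, mul_assoc] using this

end SmallIndex

section Support

variable {V : Type*} {k : ℕ} {c : V → V → Fin k} [Countable V] {H : Subgroup (aut c)} {A B : Set V}

/-- Move `B` by some `p` fixing `A` so that all edges from `A` to the rest of `p • B` have the
colors needed for some `q` to act as `g` on `A` and trivially on `p • B`. -/
theorem IsRandom.mem_of_fixingSubgroup_le_of_smul_notMem (hc : IsRandom c) (hAfin : A.Finite)
    (hBfin : B.Finite) (hA : fixingSubgroup (aut c) A ≤ H) (hB : fixingSubgroup (aut c) B ≤ H)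
    {g : aut c} (hg : g ∈ fixingSubgroup (aut c) (A ∩ B)) (hgA : ∀ x ∈ A \ B, g • x ∉ A) :
    g ∈ H := by
  classical
  have hfix {x : V} (hxA : x ∈ A) (hxB : x ∈ B) : g • x = x :=
    (mem_fixingSubgroup_iff _).1 hg x ⟨hxA, hxB⟩
  obtain ⟨p, hp, hpB⟩ := hc.exists_mem_fixingSubgroup_color (hAfin.union (hAfin.smul_set (a := g)))
    Set.subset_union_left hBfin (fun x b => if x ∈ A then c x b else c (g⁻¹ • x) b)
    fun a ha b _ => if_pos ha
  have hpA : ∀ x ∈ A, p • x = x := (mem_fixingSubgroup_iff _).1 hp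
  obtain ⟨q, hqA, hqB⟩ := hc.exists_smul_eq_union (u := g) (v := 1) hAfin hBfin.smul_set
    (T := p • B)
    (by
      rintro _ ⟨hbA, b, hb, rfl⟩
      by_cases h : b ∈ A
      · rw [one_smul]
        dsimp only
        rw [hpA b h, hfix h hb]
      · exact absurd (Or.inl hbA) (hpB b ⟨hb, h⟩).1)
    (by
      rintro a ⟨ha, haB⟩ _ ⟨⟨b, hb, rfl⟩, hbA⟩
      have hbA' : b ∉ A := fun h => hbA (by simpa only [hpA b h] using h)
      have haB' : a ∉ B := fun h => haB ⟨a, h, hpA a ha⟩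
      obtain ⟨hpX, hpc⟩ := hpB b ⟨hb, hbA'⟩
      have hga : g • a ∈ A ∪ g • A := Or.inr (Set.smul_mem_smul_set ha)
      rw [one_smul]
      dsimp only
      refine ⟨fun h => hpX (h ▸ hga), ?_⟩
      rw [hpc _ hga, hpc _ (Or.inl ha), if_neg (hgA a ⟨ha, haB'⟩), if_pos ha, inv_smul_smul])
  have hqH : q ∈ H := by
    have hpq : p⁻¹ * q * p ∈ H := hB <| (mem_fixingSubgroup_iff _).2 fun b hb => by
      rw [mul_smul, mul_smul, hqB _ (Set.smul_mem_smul_set hb), one_smul, inv_smul_smul]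
    have := H.mul_mem (H.mul_mem (hA hp) hpq) (H.inv_mem (hA hp))
    rwa [show p * (p⁻¹ * q * p) * p⁻¹ = q by group] at this
  have hqg : q⁻¹ * g ∈ H := hA <| (mem_fixingSubgroup_iff _).2 fun a ha => by
    rw [mul_smul, ← hqA a ha, inv_smul_smul]
  exact (mul_mem_cancel_left (H.inv_mem hqH)).1 hqg

theorem IsRandom.fixingSubgroup_inter_le (hc : IsRandom c) (hAfin : A.Finite)
    (hBfin : B.Finite) (hA : fixingSubgroup (aut c) A ≤ H) (hB : fixingSubgroup (aut c) B ≤ H) :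
    fixingSubgroup (aut c) (A ∩ B) ≤ H := by
  intro g hg
  obtain ⟨σ, hσ, hσA⟩ := hc.exists_mem_fixingSubgroup_color (A := A ∩ B)
    (hAfin.union (hAfin.smul_set (a := g)))
    (Set.inter_subset_left.trans Set.subset_union_left) hAfin c fun _ _ _ _ => rfl
  have hσA' : ∀ x ∈ A \ B, σ • x ∉ A ∪ g • A := fun x hx =>
    (hσA x ⟨hx.1, fun h => hx.2 h.2⟩).1
  have hσH : σ ∈ H := hc.mem_of_fixingSubgroup_le_of_smul_notMem hAfin hBfin hA hB hσ
    fun x hx h => hσA' x hx (Or.inl h)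
  have hσgH : σ⁻¹ * g ∈ H := by
    refine hc.mem_of_fixingSubgroup_le_of_smul_notMem hAfin hBfin hA hB
      (mul_mem (inv_mem hσ) hg) fun x hx h => ?_
    by_cases hB' : (σ⁻¹ * g) • x ∈ B
    · have hfix := (mem_fixingSubgroup_iff _).1 (mul_mem (inv_mem hσ) hg) _ ⟨h, hB'⟩
      exact hx.2 (smul_left_cancel _ hfix ▸ hB')
    · refine hσA' _ ⟨h, hB'⟩ (Or.inr ?_)
      rw [mul_smul, smul_inv_smul]
      exact Set.smul_mem_smul_set hx.1
  exact (mul_mem_cancel_left (H.inv_mem hσH)).1 hσgH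

theorem IsRandom.exists_invariant_fixingSubgroup_le (hc : IsRandom c) (hAfin : A.Finite)
    (hA : fixingSubgroup (aut c) A ≤ H) :
    ∃ F : Set V, F.Finite ∧ fixingSubgroup (aut c) F ≤ H ∧ ∀ h ∈ H, h • F = F := by
  classical
  obtain ⟨F, hF, hmin⟩ := exists_minimal_of_wellFoundedLT
    (fun F : Finset V => fixingSubgroup (aut c) (F : Set V) ≤ H) ⟨hAfin.toFinset, by simpa⟩
  have hsub {h : aut c} (hh : h ∈ H) : F ⊆ h • F := by
    have hconj : fixingSubgroup (aut c) (h • (F : Set V)) ≤ H := by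
      rw [SubMulAction.fixingSubgroup_smul_eq_fixingSubgroup_map_conj, Subgroup.map_le_iff_le_comap]
      exact fun g hg => H.mul_mem (H.mul_mem hh (hF hg)) (H.inv_mem hh)
    have hinter : fixingSubgroup (aut c) (↑(F ∩ h • F) : Set V) ≤ H := by
      rw [Finset.coe_inter, Finset.coe_smul_finset]
      exact hc.fixingSubgroup_inter_le F.finite_toSet F.finite_toSet.smul_set hF hconj
    exact (hmin hinter Finset.inter_subset_left).trans Finset.inter_subset_right
  refine ⟨F, F.finite_toSet, hF, fun h hh => ?_⟩
  rw [← Finset.coe_smul_finset, Finset.coe_inj]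
  exact (Finset.eq_of_subset_of_card_le (hsub hh) (Finset.card_smul_finset h F).le).symm

end Support

section Stabilizer

theorem relIndex_stabilizer {G α : Type*} [Group G] [MulAction G α] (L : Subgroup G) (x : α) :
    (MulAction.stabilizer G x).relIndex L = (MulAction.orbit L x).ncard := by
  rw [← MulAction.index_stabilizer]
  rfl

theorem countable_quotient_comap_stabilizer {G G' α : Type*} [Group G] [Group G'] [MulAction G' α]
    [Countable α] (f : G →* G') (x : α) : Countable (G ⧸ (MulAction.stabilizer G' x).comap f) :=
  letI := MulAction.compHom α f
  (MulAction.orbitEquivQuotientStabilizer G x).symm.injective.countable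

variable {V : Type*} {k : ℕ} {c : V → V → Fin k} [Countable V] {v w : V}

namespace IsRandom

theorem infinite_orbit_stabilizer (hc : IsRandom c) (hvw : v ≠ w) :
    (MulAction.orbit (MulAction.stabilizer (aut c) v) w).Infinite := by
  intro hfin
  obtain ⟨σ, hσ, hσw⟩ := hc.exists_mem_fixingSubgroup_color (A := {v}) (B := {w})
    (hfin.insert v) (by simp) (Set.finite_singleton w) c (fun _ _ _ _ => rfl)
  have hσv : σ • v = v := (mem_fixingSubgroup_iff _).1 hσ v rfl
  exact (hσw w ⟨rfl, hvw.symm⟩).1 (Or.inr ⟨⟨σ, hσv⟩, rfl⟩)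

theorem eq_of_relIndex_stabilizer_ne_zero (hc : IsRandom c)
    (h : (MulAction.stabilizer (aut c) w).relIndex (MulAction.stabilizer (aut c) v) ≠ 0) :
    v = w := by
  by_contra hvw
  rw [relIndex_stabilizer, (hc.infinite_orbit_stabilizer hvw).ncard] at h
  exact h rfl

theorem eq_of_stabilizer_le (hc : IsRandom c)
    (h : MulAction.stabilizer (aut c) v ≤ MulAction.stabilizer (aut c) w) : v = w :=
  hc.eq_of_relIndex_stabilizer_ne_zero (by simp [Subgroup.relIndex_eq_one.2 h])

theorem exists_fixingSubgroup_le_comap_stabilizer [NeZero k] (hc : IsRandom c)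
    (φ : MulAut (aut c)) (v : V) :
    ∃ F : Set V, fixingSubgroup (aut c) F ≤ (MulAction.stabilizer (aut c) v).comap φ.toMonoidHom ∧
      ∀ x ∈ F, (MulAction.stabilizer (aut c) x).relIndex
        ((MulAction.stabilizer (aut c) v).comap φ.toMonoidHom) ≠ 0 := by
  have := countable_quotient_comap_stabilizer φ.toMonoidHom v
  obtain ⟨F₀, hF₀, hle⟩ := hc.exists_fixingSubgroup_le
    (H := (MulAction.stabilizer (aut c) v).comap φ.toMonoidHom)
  obtain ⟨F, hF, hFle, hinv⟩ := hc.exists_invariant_fixingSubgroup_le hF₀ hle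
  refine ⟨F, hFle, fun x hx => ?_⟩
  rw [relIndex_stabilizer]
  refine Set.ncard_ne_zero_of_mem (MulAction.mem_orbit_self x) (hF.subset ?_)
  rintro _ ⟨⟨g, hg⟩, rfl⟩
  exact hinv g hg ▸ Set.smul_mem_smul_set hx

/-- The support of the image of `stabilizer v` contains a point `w`, and `v` is the only point
which the support of the preimage of `stabilizer w` can contain. -/
theorem exists_stabilizer_le_comap [NeZero k] (hc : IsRandom c) (φ : MulAut (aut c)) (v : V) :
    ∃ w : V,
      MulAction.stabilizer (aut c) v ≤ (MulAction.stabilizer (aut c) w).comap φ.toMonoidHom := by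
  obtain ⟨F, hF, hFrel⟩ := hc.exists_fixingSubgroup_le_comap_stabilizer φ.symm v
  obtain ⟨w, hw⟩ : F.Nonempty := by
    by_contra! hempty
    obtain ⟨u, hu, -⟩ := hc.ext {v} (Set.finite_singleton v) (c v)
    refine hu (hc.eq_of_stabilizer_le fun g _ => ?_)
    have hg : φ g ∈ fixingSubgroup (aut c) F := by simp [hempty]
    simpa using hF hg
  obtain ⟨F', hF', hFrel'⟩ := hc.exists_fixingSubgroup_le_comap_stabilizer φ w
  have hsub : F' ⊆ {v} := fun x hx => by
    have hrel := hFrel w hw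
    rw [MulEquiv.toMonoidHom_eq_coe, ← Subgroup.map_equiv_eq_comap_symm, ← Subgroup.relIndex_comap]
      at hrel
    exact (hc.eq_of_relIndex_stabilizer_ne_zero
      (Subgroup.relIndex_ne_zero_trans (hFrel' x hx) hrel)).symm
  refine ⟨w, fun g hg => hF' ?_⟩
  rw [mem_fixingSubgroup_iff]
  intro x hx
  rwa [hsub hx]

theorem exists_smul_eq_iff [NeZero k] (hc : IsRandom c) (φ : MulAut (aut c)) (v : V) :
    ∃ w : V, ∀ g : aut c, g • v = v ↔ φ g • w = w := by
  obtain ⟨w, hw⟩ := hc.exists_stabilizer_le_comap φ v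
  obtain ⟨u, hu⟩ := hc.exists_stabilizer_le_comap φ.symm w
  have h (g : aut c) (hg : φ g • w = w) : g • u = u := by simpa using hu hg
  obtain rfl := hc.eq_of_stabilizer_le fun g hg => h g (hw hg)
  exact ⟨w, fun g => ⟨fun hg => hw hg, h g⟩⟩

end IsRandom

end Stabilizer

section Outer

variable {V : Type*} {k : ℕ} {c : V → V → Fin k}

theorem IsRandom.exists_color_eq (hc : IsRandom c) (i : Fin k) (v : V) :
    ∃ u, u ≠ v ∧ c u v = i := by
  obtain ⟨z, hz, h⟩ := hc.ext {v} (Set.finite_singleton v) fun _ => i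
  exact ⟨z, hz, h v rfl⟩

theorem IsRandom.exists_smul_eq_pair [Countable V] (hc : IsRandom c) {u v u' v' : V} (huv : u ≠ v)
    (huv' : u' ≠ v') (h : c u v = c u' v') : ∃ g : aut c, g • u = u' ∧ g • v = v' := by
  have hp : IsPartialIso c c {(u, u'), (v, v')} := by
    refine IsPartialIso.insert hc.symm hc.symm (by simp [IsPartialIso]) ?_
    rintro _ rfl
    exact ⟨huv, huv', h⟩
  obtain ⟨g, hg⟩ := hc.exists_smul_eq (Set.toFinite _) hp
  exact ⟨g, hg _ (Or.inl rfl), hg _ (Or.inr rfl)⟩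

/-- The automorphism `φ` of `aut c` is conjugation by the permutation `σ` of the vertices, which
permutes the colors by `π`. -/
structure Induces (φ : MulAut (aut c)) (σ : Equiv.Perm V) (π : Equiv.Perm (Fin k)) : Prop where
  smul : ∀ (g : aut c) (v : V), φ g • σ v = σ (g • v)
  color : ∀ u v : V, u ≠ v → c (σ u) (σ v) = π (c u v)

section Induces

variable {φ ψ : MulAut (aut c)} {σ τ : Equiv.Perm V} {π ρ : Equiv.Perm (Fin k)}

theorem Induces.coe_apply (h : Induces φ σ π) (g : aut c) :
    (φ g : Equiv.Perm V) = σ * g * σ⁻¹ :=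
  eq_mul_inv_of_mul_eq (Equiv.ext (h.smul g))

theorem Induces.mul (h : Induces φ σ π) (h' : Induces ψ τ ρ) :
    Induces (φ * ψ) (σ * τ) (π * ρ) where
  smul g v := by
    rw [MulAut.mul_apply, Equiv.Perm.mul_apply, Equiv.Perm.mul_apply, h.smul, h'.smul]
  color u v huv := by
    simp only [Equiv.Perm.mul_apply]
    rw [h.color _ _ (τ.injective.ne huv), h'.color _ _ huv]

theorem induces_conj (g : aut c) : Induces (MulAut.conj g) (g : Equiv.Perm V) 1 where
  smul h v := by
    change (g * h * g⁻¹) • g • v = g • h • v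
    rw [mul_smul, mul_smul, inv_smul_smul]
  color _ _ huv := color_smul_smul g huv

theorem exists_induces_of_color (hσ : ∀ u v, u ≠ v → c (σ u) (σ v) = π (c u v)) :
    ∃ φ : MulAut (aut c), Induces φ σ π := by
  have hmem : σ ∈ Subgroup.normalizer (aut c : Set (Equiv.Perm V)) := by
    refine Subgroup.mem_normalizer_iff.2 fun g => σ.forall_congr fun {u} => σ.forall_congr
      fun {v} => imp_congr_ctx σ.injective.ne_iff.symm fun huv => ?_
    have huv : u ≠ v := ne_of_apply_ne σ huv
    simp only [Equiv.Perm.mul_apply, Equiv.Perm.inv_def, Equiv.symm_apply_apply]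
    rw [hσ _ _ (g.injective.ne huv), hσ _ _ huv, π.injective.eq_iff]
  refine ⟨Subgroup.normalizerMonoidHom (aut c) ⟨σ, hmem⟩, fun g v => ?_, hσ⟩
  exact congrArg (fun u => σ (g • u)) (σ.symm_apply_apply v)

variable [Countable V]

theorem Induces.color_perm_eq [Nonempty V] (hc : IsRandom c) (h : Induces φ σ π)
    (h' : Induces φ τ ρ) : π = ρ := by
  have hστ (v : V) : σ v = τ v := hc.eq_of_stabilizer_le fun g hg => by
    obtain ⟨g, rfl⟩ := φ.surjective g
    rw [MulAction.mem_stabilizer_iff, h.smul] at hg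
    rw [MulAction.mem_stabilizer_iff, h'.smul, σ.injective hg]
  ext i
  obtain ⟨b⟩ := ‹Nonempty V›
  obtain ⟨a, hab, rfl⟩ := hc.exists_color_eq i b
  rw [← h.color a b hab, ← h'.color a b hab, hστ, hστ]

end Induces

namespace IsRandom

variable [Countable V]

theorem exists_perm_smul_eq [NeZero k] (hc : IsRandom c) (φ : MulAut (aut c)) :
    ∃ σ : Equiv.Perm V, ∀ (g : aut c) (v : V), φ g • σ v = σ (g • v) := by
  choose s hs using hc.exists_smul_eq_iff φ
  have hinj : Function.Injective s := fun v w h => hc.eq_of_stabilizer_le fun g (hg : g • v = v) =>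
    (hs w g).2 (h ▸ (hs v g).1 hg)
  have hsurj : Function.Surjective s := fun w => by
    obtain ⟨v, hv⟩ := hc.exists_smul_eq_iff φ.symm w
    refine ⟨v, (hc.eq_of_stabilizer_le fun g (hg : g • w = w) => ?_).symm⟩
    simpa using (hs v _).1 ((hv g).1 hg)
  refine ⟨Equiv.ofBijective s ⟨hinj, hsurj⟩, fun g v => hc.eq_of_stabilizer_le fun h hh => ?_⟩
  obtain ⟨h, rfl⟩ := φ.surjective h
  change φ h • φ g • s v = φ g • s v at hh
  change φ h • s (g • v) = s (g • v)
  rw [← hs, ← inv_smul_eq_iff, ← mul_smul, ← mul_smul, hs, map_mul, map_mul, map_inv,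
    mul_smul, mul_smul, hh, inv_smul_smul]

theorem exists_color_perm [Nonempty V] (hc : IsRandom c) {φ : MulAut (aut c)} {σ : Equiv.Perm V}
    (hσ : ∀ (g : aut c) (v : V), φ g • σ v = σ (g • v)) :
    ∃ π : Equiv.Perm (Fin k), ∀ u v, u ≠ v → c (σ u) (σ v) = π (c u v) := by
  obtain ⟨b⟩ := ‹Nonempty V›
  choose a hab ha using fun i => hc.exists_color_eq i b
  let p : Fin k → Fin k := fun i => c (σ (a i)) (σ b)
  have hp (u v : V) (huv : u ≠ v) : c (σ u) (σ v) = p (c u v) := by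
    obtain ⟨g, hga, hgb⟩ := hc.exists_smul_eq_pair (hab (c u v)) huv (ha _)
    rw [← hga, ← hgb, ← hσ, ← hσ, color_smul_smul (φ g) (σ.injective.ne (hab _)),
      color_smul_smul g (hab _), ha]
  have hinj : Function.Injective p := by
    intro i j hij
    obtain ⟨g, hga, hgb⟩ := hc.exists_smul_eq_pair (σ.injective.ne (hab i))
      (σ.injective.ne (hab j)) hij
    obtain ⟨g, rfl⟩ := φ.surjective g
    rw [hσ] at hga hgb
    rw [← ha i, ← ha j, ← color_smul_smul g (hab i), σ.injective hga, σ.injective hgb]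
  exact ⟨Equiv.ofBijective p (Finite.injective_iff_bijective.1 hinj), hp⟩

theorem exists_induces [NeZero k] [Nonempty V] (hc : IsRandom c) (φ : MulAut (aut c)) :
    ∃ σ π, Induces φ σ π := by
  obtain ⟨σ, hσ⟩ := hc.exists_perm_smul_eq φ
  obtain ⟨π, hπ⟩ := hc.exists_color_perm hσ
  exact ⟨σ, π, hσ, hπ⟩

theorem exists_perm_color_eq (hc : IsRandom c) (π : Equiv.Perm (Fin k)) :
    ∃ σ : Equiv.Perm V, ∀ u v, u ≠ v → c (σ u) (σ v) = π (c u v) := by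
  have hd : IsRandom fun u v => π (c u v) :=
    ⟨fun u v => congrArg π (hc.symm u v), fun s hs τ => by
      obtain ⟨z, hz, h⟩ := hc.ext s hs fun x => π.symm (τ x)
      exact ⟨z, hz, fun x hx => by rw [h x hx, Equiv.apply_symm_apply]⟩⟩
  obtain ⟨σ, hσ, -⟩ := exists_equiv hd hc Set.finite_empty (p := ∅) nofun
  exact ⟨σ, hσ⟩

theorem exists_hom_ker_eq_range_conj [NeZero k] [Nonempty V] (hc : IsRandom c) :
    ∃ e : MulAut (aut c) →* Equiv.Perm (Fin k), Function.Surjective e ∧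
      e.ker = (MulAut.conj : aut c →* MulAut (aut c)).range := by
  choose σ π hπ using hc.exists_induces
  refine ⟨MonoidHom.mk' π fun φ ψ => (hπ _).color_perm_eq hc ((hπ φ).mul (hπ ψ)),
    fun ρ => ?_, Subgroup.ext fun φ => ⟨fun h => ?_, ?_⟩⟩
  · obtain ⟨τ, hτ⟩ := hc.exists_perm_color_eq ρ
    obtain ⟨φ, hφ⟩ := exists_induces_of_color hτ
    exact ⟨φ, (hπ φ).color_perm_eq hc hφ⟩
  · have hπ1 : π φ = 1 := h
    have hσ : σ φ ∈ aut c := fun u v huv => by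
      rw [(hπ φ).color u v huv, hπ1, Equiv.Perm.one_apply]
    exact ⟨⟨σ φ, hσ⟩, MulEquiv.ext fun g => Subtype.ext ((hπ φ).coe_apply g).symm⟩
  · rintro ⟨g, rfl⟩
    exact (hπ _).color_perm_eq hc (induces_conj g)

end IsRandom

end Outer

end ColoredGraph

/-- For `k ≥ 2`, the `k`-colored random graph `R_k` (the countable
homogeneous structure universal for finite complete graphs with edges colored in `k`
colors) satisfies `Out(Aut(R_k)) ≅ Sym(k)`: there is a surjective homomorphism from
`Aut(Aut(R_k))` onto `Sym(k)` whose kernel is exactly the group of inner automorphisms. -/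
theorem stmt_7 (k : ℕ) (hk : 2 ≤ k) (V : Type*) [Countable V] [Infinite V]
    (c : V → V → Fin k) (hsymm : ∀ u v : V, c u v = c v u)
    (hhom : ∀ S T : Set V, S.Finite → T.Finite → ∀ e : S ≃ T,
      (∀ u v : S, u ≠ v → c (e u : V) (e v : V) = c (u : V) (v : V)) →
        ∃ σ ∈ ColoredGraph.aut c, ∀ a : S, σ (a : V) = (e a : V))
    (huniv : ∀ (W : Type) (_ : Fintype W) (d : W → W → Fin k),
      (∀ u v : W, d u v = d v u) →
        ∃ f : W ↪ V, ∀ u v : W, u ≠ v → c (f u) (f v) = d u v) :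
    ∃ e : MulAut ↥(ColoredGraph.aut c) →* Equiv.Perm (Fin k),
      Function.Surjective e ∧
      e.ker = (MulAut.conj :
        ↥(ColoredGraph.aut c) →* MulAut ↥(ColoredGraph.aut c)).range := by
  have : NeZero k := ⟨by omega⟩
  have hc := ColoredGraph.isRandom_of_homogeneous_of_universal hsymm hhom huniv
  exact hc.exists_hom_ker_eq_range_conj
end
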